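/- arXiv:2305.16892 — 10 statements merged into one kernel-verified Lean document; each statement's English description precedes it below -/
import Mathlib

section
/- Let n, t ∈ ℕ with n ≥ 1, t ≥ 1, let α ∈ (0,1], and let Σ be an n×n positive semidefinite real matrix. Then (α²/3)·𝒫_{t,α²/2}(Σ) ≤ 𝒩_{t,α}(Σ) and 𝒩_{t,α}(Σ) ≤ 𝒫_{t,α}(Σ). -/
open Matrix MeasureTheory ProbabilityTheory
open scoped BigOperators ENNReal

noncomputable section

/-- `v` has at most `t` nonzero coordinates. -/
def SparseVec {k : ℕ} (t : ℕ) (v : Fin k → ℝ) : Prop := {i | v i ≠ 0}.ncard ≤ t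

/-- ⟨x,y⟩_Σ := xᵀ Σ y. -/
def innerSigma {k : ℕ} (A : Matrix (Fin k) (Fin k) ℝ) (x y : Fin k → ℝ) : ℝ := x ⬝ᵥ (A *ᵥ y)

/-- ‖x‖_Σ := √(xᵀ Σ x). -/
def normSigma {k : ℕ} (A : Matrix (Fin k) (Fin k) ℝ) (x : Fin k → ℝ) : ℝ :=
  Real.sqrt (innerSigma A x x)

/-- Euclidean norm on ℝ^k. -/
def l2norm {k : ℕ} (v : Fin k → ℝ) : ℝ := Real.sqrt (∑ i, v i ^ 2)

/-- ℓ1 norm on ℝ^k. -/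
def l1norm {k : ℕ} (v : Fin k → ℝ) : ℝ := ∑ i, |v i|

/-- `D` is a `(t,α)`-dictionary for `A`: every `t`-sparse `v` with ‖v‖_Σ > 0 correlates
with some element of `D` at level `α` under the Σ-inner product. -/
def IsDictionary {k : ℕ} (t : ℕ) (α : ℝ) (A : Matrix (Fin k) (Fin k) ℝ) {N : ℕ}
    (D : Fin N → Fin k → ℝ) : Prop :=
  ∀ v : Fin k → ℝ, SparseVec t v → 0 < normSigma A v →
    ∃ i, 0 < normSigma A (D i) ∧ α * (normSigma A v * normSigma A (D i)) ≤ |innerSigma A v (D i)|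

/-- 𝒩_{t,α}(Σ): the minimum size of a `(t,α)`-dictionary (as an element of ℕ ∪ {∞}). -/
def coveringNumber {k : ℕ} (t : ℕ) (α : ℝ) (A : Matrix (Fin k) (Fin k) ℝ) : ℝ≥0∞ :=
  sInf {c : ℝ≥0∞ | ∃ (N : ℕ) (D : Fin N → Fin k → ℝ), IsDictionary t α A D ∧ c = (N : ℝ≥0∞)}

/-- `V` lists the elements of a `(t,α)`-packing for `A` (distinct `t`-sparse vectors of
positive Σ-norm with pairwise Σ-correlations strictly below `α`). -/
def IsPacking {k : ℕ} (t : ℕ) (α : ℝ) (A : Matrix (Fin k) (Fin k) ℝ) {N : ℕ}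
    (V : Fin N → Fin k → ℝ) : Prop :=
  Function.Injective V ∧ (∀ i, SparseVec t (V i) ∧ 0 < normSigma A (V i)) ∧
    ∀ i j, i ≠ j → |innerSigma A (V i) (V j)| < α * (normSigma A (V i) * normSigma A (V j))

/-- 𝒫_{t,α}(Σ): the supremum of sizes of `(t,α)`-packings (as an element of ℕ ∪ {∞}). -/
def packingNumber {k : ℕ} (t : ℕ) (α : ℝ) (A : Matrix (Fin k) (Fin k) ℝ) : ℝ≥0∞ :=
  sSup {c : ℝ≥0∞ | ∃ (N : ℕ) (V : Fin N → Fin k → ℝ), IsPacking t α A V ∧ c = (N : ℝ≥0∞)}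

open scoped MatrixOrder Matrix.Norms.L2Operator in
theorem exists_emb_aux {n : ℕ} (A : Matrix (Fin n) (Fin n) ℝ) (hA : A.PosSemidef) :
    ∃ u : (Fin n → ℝ) → EuclideanSpace ℝ (Fin n),
      (∀ x y, innerSigma A x y = inner ℝ (u x) (u y)) ∧ ∀ x, normSigma A x = ‖u x‖ := by
  obtain ⟨B, hB⟩ : ∃ B : Matrix (Fin n) (Fin n) ℝ, A = Bᴴ * B :=
    CStarAlgebra.nonneg_iff_eq_star_mul_self.mp hA.nonneg
  have h : ∀ x y, innerSigma A x y =
      inner ℝ (WithLp.toLp 2 (B *ᵥ x) : EuclideanSpace ℝ (Fin n)) (WithLp.toLp 2 (B *ᵥ y)) := by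
    intro x y
    rw [EuclideanSpace.inner_toLp_toLp, innerSigma, hB, ← Matrix.mulVec_mulVec,
      Matrix.dotProduct_mulVec, Matrix.vecMul_conjTranspose]
    simp [dotProduct_comm]
  refine ⟨fun x => WithLp.toLp 2 (B *ᵥ x), h, fun x => ?_⟩
  rw [normSigma, h, real_inner_self_eq_norm_sq, Real.sqrt_sq (norm_nonneg _)]

theorem unit_bound_aux {E ι : Type*} [NormedAddCommGroup E] [InnerProductSpace ℝ E]
    (S : Finset ι) (f : ι → E) (d : E) (α : ℝ) (hα0 : 0 < α) (hα1 : α ≤ 1)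
    (hf : ∀ i ∈ S, ‖f i‖ = 1) (hd : ‖d‖ = 1) (hfd : ∀ i ∈ S, α ≤ inner ℝ (f i) d)
    (hff : ∀ i ∈ S, ∀ j ∈ S, i ≠ j → inner ℝ (f i) (f j) ≤ α ^ 2 / 2) :
    α ^ 2 * (S.card : ℝ) ≤ 3 := by
  classical
  have h1 : α * S.card ≤ inner ℝ (∑ i ∈ S, f i) d := by
    rw [sum_inner]
    have := Finset.card_nsmul_le_sum S (fun i => inner ℝ (f i) d) α hfd
    simpa [mul_comm] using this
  have h2 : inner ℝ (∑ i ∈ S, f i) d ≤ ‖∑ i ∈ S, f i‖ := by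
    simpa [hd] using real_inner_le_norm (∑ i ∈ S, f i) d
  have h3 : ‖∑ i ∈ S, f i‖ ^ 2 ≤ (S.card : ℝ) * (1 + S.card * (α ^ 2 / 2)) := by
    rw [← real_inner_self_eq_norm_sq, sum_inner]
    have : ∀ i ∈ S, inner ℝ (f i) (∑ j ∈ S, f j) ≤ 1 + S.card * (α ^ 2 / 2) := by
      intro i hi
      rw [inner_sum]
      calc ∑ j ∈ S, inner ℝ (f i) (f j) ≤ ∑ j ∈ S, ((if i = j then 1 else 0) + α ^ 2 / 2) := by
            apply Finset.sum_le_sum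
            intro j hj
            by_cases hij : i = j
            · subst hij
              rw [real_inner_self_eq_norm_sq, hf i hi]
              simp; positivity
            · simpa [hij] using hff i hi j hj hij
        _ = _ := by simp [Finset.sum_add_distrib, hi]
    simpa only [nsmul_eq_mul] using Finset.sum_le_card_nsmul S _ _ this
  rcases Nat.eq_zero_or_pos S.card with h0 | h0
  · simp [h0]
  have hm : (0 : ℝ) < S.card := by exact_mod_cast h0
  have h4 : (α * S.card) ^ 2 ≤ (S.card : ℝ) * (1 + S.card * (α ^ 2 / 2)) :=
    le_trans (pow_le_pow_left₀ (by positivity) (h1.trans h2) 2) h3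
  have h5 : (S.card : ℝ) * (α ^ 2 * S.card) ≤ (S.card : ℝ) * (1 + S.card * (α ^ 2 / 2)) := by
    linarith
  have h6 := le_of_mul_le_mul_left h5 hm
  linarith

theorem fiber_bound_aux {E ι : Type*} [NormedAddCommGroup E] [InnerProductSpace ℝ E]
    (S : Finset ι) (f : ι → E) (d : E) (α : ℝ) (hα0 : 0 < α) (hα1 : α ≤ 1)
    (hf : ∀ i ∈ S, 0 < ‖f i‖) (hd : 0 < ‖d‖)
    (hfd : ∀ i ∈ S, α * (‖f i‖ * ‖d‖) ≤ |inner ℝ (f i) d|)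
    (hff : ∀ i ∈ S, ∀ j ∈ S, i ≠ j →
      |inner ℝ (f i) (f j)| < α ^ 2 / 2 * (‖f i‖ * ‖f j‖)) :
    α ^ 2 * (S.card : ℝ) ≤ 3 := by
  let s : ι → ℝ := fun i => if 0 ≤ inner ℝ (f i) d then 1 else -1
  have hs : ∀ i, |s i| = 1 := by intro i; simp only [s]; split_ifs <;> simp
  have hsd : ∀ i, s i * inner ℝ (f i) d = |inner ℝ (f i) d| := by
    intro i
    simp only [s]
    split_ifs with h
    · rw [abs_of_nonneg h, one_mul]
    · rw [abs_of_neg (not_le.1 h)]; ring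
  refine unit_bound_aux S (fun i => (s i * ‖f i‖⁻¹) • f i) (‖d‖⁻¹ • d) α hα0 hα1 ?_ ?_ ?_ ?_
  · intro i hi
    have := hf i hi
    rw [norm_smul, Real.norm_eq_abs, abs_mul, hs, abs_of_pos (inv_pos.2 this)]
    field_simp
  · rw [norm_smul, norm_inv, norm_norm, inv_mul_cancel₀ hd.ne']
  · intro i hi
    have h1 := hf i hi
    rw [real_inner_smul_left, real_inner_smul_right]
    have : s i * ‖f i‖⁻¹ * (‖d‖⁻¹ * inner ℝ (f i) d) = |inner ℝ (f i) d| / (‖f i‖ * ‖d‖) := by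
      rw [← hsd]; field_simp
    rw [this, le_div_iff₀ (by positivity)]
    exact hfd i hi
  · intro i hi j hj hij
    have h1 := hf i hi
    have h2 := hf j hj
    rw [real_inner_smul_left, real_inner_smul_right]
    refine (le_abs_self _).trans ?_
    have : |s i * ‖f i‖⁻¹ * (s j * ‖f j‖⁻¹ * inner ℝ (f i) (f j))|
        = |inner ℝ (f i) (f j)| / (‖f i‖ * ‖f j‖) := by
      simp only [abs_mul, hs, abs_inv, abs_norm]; field_simp
    rw [this, div_le_iff₀ (by positivity)]
    exact (hff i hi j hj hij).le

theorem packing_le_dict_aux {n t M N : ℕ} (α : ℝ) (hα0 : 0 < α) (hα1 : α ≤ 1)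
    (A : Matrix (Fin n) (Fin n) ℝ) (hA : A.PosSemidef)
    (V : Fin M → Fin n → ℝ) (D : Fin N → Fin n → ℝ)
    (hV : IsPacking t (α ^ 2 / 2) A V) (hD : IsDictionary t α A D) :
    α ^ 2 / 3 * (M : ℝ) ≤ N := by
  classical
  obtain ⟨u, hu, hn⟩ := exists_emb_aux A hA
  obtain ⟨-, hV1, hV2⟩ := hV
  have hc : ∀ i, ∃ k, 0 < normSigma A (D k) ∧
      α * (normSigma A (V i) * normSigma A (D k)) ≤ |innerSigma A (V i) (D k)| :=
    fun i => hD (V i) (hV1 i).1 (hV1 i).2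
  choose g hg1 hg2 using hc
  have hfib : ∀ k, α ^ 2 * ((Finset.univ.filter (fun i => g i = k)).card : ℝ) ≤ 3 := by
    intro k
    by_cases hk : 0 < normSigma A (D k)
    · refine fiber_bound_aux _ (fun i => u (V i)) (u (D k)) α hα0 hα1 ?_ ?_ ?_ ?_
      · intro i _
        rw [← hn]; exact (hV1 i).2
      · rwa [← hn]
      · intro i hi
        have := hg2 i
        rw [(Finset.mem_filter.1 hi).2, hn, hn, hu] at this
        exact this
      · intro i _ j _ hij
        have := hV2 i j hij
        rwa [hn, hn, hu] at this
    · have : Finset.univ.filter (fun i => g i = k) = ∅ := by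
        ext i
        simp only [Finset.mem_filter, Finset.mem_univ, true_and, Finset.notMem_empty, iff_false]
        rintro rfl
        exact hk (hg1 i)
      rw [this]; simp
  have hsum : (M : ℝ) = ∑ k : Fin N, ((Finset.univ.filter (fun i => g i = k)).card : ℝ) := by
    have := Finset.card_eq_sum_card_fiberwise (s := Finset.univ) (t := Finset.univ) (f := g)
      (by intro i _; simp)
    rw [Finset.card_univ, Fintype.card_fin] at this
    exact_mod_cast this
  have : α ^ 2 * (M : ℝ) ≤ N * 3 := by
    rw [hsum, Finset.mul_sum]
    simpa using Finset.sum_le_card_nsmul Finset.univ _ _ (fun k _ => hfib k)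
  linarith

theorem dict_of_max_aux {n t M : ℕ} (α : ℝ) (hα1 : α ≤ 1)
    (A : Matrix (Fin n) (Fin n) ℝ) (hA : A.PosSemidef)
    (V : Fin M → Fin n → ℝ) (hV : IsPacking t α A V)
    (hmax : ∀ W : Fin (M + 1) → Fin n → ℝ, ¬ IsPacking t α A W) : IsDictionary t α A V := by
  obtain ⟨u, hu, hn⟩ := exists_emb_aux A hA
  obtain ⟨hV0, hV1, hV2⟩ := hV
  have hsymm : ∀ x y, innerSigma A x y = innerSigma A y x := by
    intro x y; rw [hu, hu, real_inner_comm]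
  intro v hv hv0
  by_contra! hcon
  have hlt : ∀ i, |innerSigma A v (V i)| < α * (normSigma A v * normSigma A (V i)) :=
    fun i => hcon i (hV1 i).2
  refine hmax (Fin.cons v V) ⟨?_, ?_, ?_⟩
  · rw [Fin.cons_injective_iff]
    refine ⟨?_, hV0⟩
    rintro ⟨i, rfl⟩
    have := hlt i
    rw [hu, hn, real_inner_self_eq_norm_sq, abs_of_nonneg (sq_nonneg _)] at this
    nlinarith [sq_nonneg ‖u (V i)‖]
  · intro i
    refine Fin.cases ?_ (fun i => ?_) i
    · exact ⟨hv, hv0⟩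
    · simpa using hV1 i
  · intro i j
    refine Fin.cases ?_ (fun i => ?_) i <;> refine Fin.cases ?_ (fun j => ?_) j
    · simp
    · intro _
      simpa using hlt j
    · intro _
      rw [hsymm, mul_comm (normSigma _ _)]
      simpa using hlt i
    · intro h
      simpa using hV2 i j (fun h' => h (by rw [h']))

/-- (α²/3)·𝒫_{t,α²/2}(Σ) ≤ 𝒩_{t,α}(Σ) and 𝒩_{t,α}(Σ) ≤ 𝒫_{t,α}(Σ). -/
theorem stmt0 (n t : ℕ) (hn : 1 ≤ n) (ht : 1 ≤ t) (α : ℝ) (hα0 : 0 < α) (hα1 : α ≤ 1)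
    (A : Matrix (Fin n) (Fin n) ℝ) (hA : A.PosSemidef) :
    ENNReal.ofReal (α ^ 2 / 3) * packingNumber t (α ^ 2 / 2) A ≤ coveringNumber t α A ∧
      coveringNumber t α A ≤ packingNumber t α A := by
  constructor
  · refine le_sInf ?_
    rintro _ ⟨N, D, hD, rfl⟩
    rw [packingNumber, ENNReal.mul_sSup]
    refine iSup₂_le ?_
    rintro _ ⟨M, V, hV, rfl⟩
    have h := packing_le_dict_aux α hα0 hα1 A hA V D hV hD
    rw [← ENNReal.ofReal_natCast, ← ENNReal.ofReal_natCast, ← ENNReal.ofReal_mul (by positivity)]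
    exact ENNReal.ofReal_le_ofReal h
  · by_cases hb : ∃ M, (∃ V : Fin M → Fin n → ℝ, IsPacking t α A V) ∧
        ∀ W : Fin (M + 1) → Fin n → ℝ, ¬ IsPacking t α A W
    · obtain ⟨M, ⟨V, hV⟩, hmax⟩ := hb
      have h1 : coveringNumber t α A ≤ M :=
        sInf_le ⟨M, V, dict_of_max_aux α hα1 A hA V hV hmax, rfl⟩
      exact h1.trans (le_sSup ⟨M, V, hV, rfl⟩)
    · have hall : ∀ M, ∃ V : Fin M → Fin n → ℝ, IsPacking t α A V := by
        intro M
        induction M with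
        | zero => exact ⟨Fin.elim0, fun i => i.elim0, fun i => i.elim0, fun i => i.elim0⟩
        | succ M ih =>
          by_contra! h
          exact hb ⟨M, ih, h⟩
      have htop : packingNumber t α A = ⊤ := by
        refine ENNReal.eq_top_of_forall_nnreal_le fun r => ?_
        obtain ⟨M, hM⟩ := exists_nat_ge r
        obtain ⟨V, hV⟩ := hall M
        refine le_trans ?_ (le_sSup ⟨M, V, hV, rfl⟩)
        exact_mod_cast hM
      rw [htop]; exact le_top
end
end

section
/- Let n, t, N ∈ ℕ, let B > 0, and let Σ be an n×n positive semidefinite real matrix. If {D₁,…,D_N} ⊆ ℝⁿ is a (t,B)-ℓ1-representation for Σ, then {D₁,…,D_N} is also a (t,1/B)-dictionary for Σ. -/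
open Matrix MeasureTheory ProbabilityTheory
open scoped BigOperators ENNReal

noncomputable section

/-- `D` is a `(t,B)`-ℓ1-representation for `A`: every `t`-sparse `v` can be written as a
linear combination of the `D i` with ℓ1 cost (weighted by Σ-norms) at most `B·‖v‖_Σ`. -/
def IsL1Rep {k : ℕ} (t : ℕ) (B : ℝ) (A : Matrix (Fin k) (Fin k) ℝ) {N : ℕ}
    (D : Fin N → Fin k → ℝ) : Prop :=
  ∀ v : Fin k → ℝ, SparseVec t v → ∃ a : Fin N → ℝ,
    v = ∑ i, a i • D i ∧ ∑ i, |a i| * normSigma A (D i) ≤ B * normSigma A v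

/-- a (t,B)-ℓ1-representation is a (t,1/B)-dictionary. -/
theorem stmt1 (n t N : ℕ) (B : ℝ) (hB : 0 < B)
    (A : Matrix (Fin n) (Fin n) ℝ) (hA : A.PosSemidef)
    (D : Fin N → Fin n → ℝ) (hD : IsL1Rep t B A D) :
    IsDictionary t (1 / B) A D := by
  intro v hv hpos
  obtain ⟨a, hva, hsum⟩ := hD v hv
  by_contra hcon
  push Not at hcon
  have hnn : ∀ x, 0 ≤ innerSigma A x x := fun x => by
    have h := hA.dotProduct_mulVec_nonneg x
    simpa [innerSigma] using h
  have hzero : ∀ i, ¬ 0 < normSigma A (D i) → innerSigma A v (D i) = 0 := by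
    intro i hi
    have h0 : innerSigma A (D i) (D i) = 0 := by
      apply le_antisymm _ (hnn _)
      unfold normSigma at hi
      rw [Real.sqrt_pos] at hi
      exact not_lt.mp hi
    have h1 : A *ᵥ D i = 0 := by
      rw [← hA.dotProduct_mulVec_zero_iff]
      simpa [innerSigma] using h0
    simp [innerSigma, h1]
  have hsq : normSigma A v * normSigma A v = innerSigma A v v := Real.mul_self_sqrt (hnn v)
  have hexp : innerSigma A v v = ∑ i, a i * innerSigma A v (D i) := by
    have h : A *ᵥ v = ∑ i, a i • (A *ᵥ D i) := by
      conv_lhs => rw [hva]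
      simp [Matrix.mulVec_sum, Matrix.mulVec_smul]
    unfold innerSigma
    rw [h, dotProduct_sum]
    simp [dotProduct_smul]
  have hp : 0 < innerSigma A v v := by rw [← hsq]; positivity
  have hle : ∀ i, a i * innerSigma A v (D i) ≤
      (normSigma A v / B) * (|a i| * normSigma A (D i)) := by
    intro i
    by_cases hi : 0 < normSigma A (D i)
    · calc a i * innerSigma A v (D i) ≤ |a i| * |innerSigma A v (D i)| := by
            rw [← abs_mul]; exact le_abs_self _
        _ ≤ |a i| * (1 / B * (normSigma A v * normSigma A (D i))) :=
            mul_le_mul_of_nonneg_left (hcon i hi).le (abs_nonneg _)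
        _ = _ := by ring
    · rw [hzero i hi, mul_zero]
      have : 0 ≤ normSigma A (D i) := Real.sqrt_nonneg _
      positivity
  obtain ⟨j, -, hj⟩ := Finset.exists_ne_zero_of_sum_ne_zero (hexp ▸ hp.ne')
  have hj1 : 0 < normSigma A (D j) := by
    by_contra h
    exact hj (by rw [hzero j h, mul_zero])
  have hj2 : 0 < |a j| := abs_pos.mpr (left_ne_zero_of_mul hj)
  have hlt : a j * innerSigma A v (D j) <
      (normSigma A v / B) * (|a j| * normSigma A (D j)) := by
    calc a j * innerSigma A v (D j) ≤ |a j| * |innerSigma A v (D j)| := by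
            rw [← abs_mul]; exact le_abs_self _
        _ < |a j| * (1 / B * (normSigma A v * normSigma A (D j))) :=
            mul_lt_mul_of_pos_left (hcon j hj1) hj2
        _ = _ := by ring
  have hfin := Finset.sum_lt_sum (s := Finset.univ) (fun i _ => hle i) ⟨j, Finset.mem_univ j, hlt⟩
  rw [← hexp, ← Finset.mul_sum, ← hsq] at hfin
  have h2 := mul_le_mul_of_nonneg_left hsum (by positivity : 0 ≤ normSigma A v / B)
  have h3 : normSigma A v / B * (B * normSigma A v) = normSigma A v * normSigma A v := by
    field_simp
  linarith
end
end

section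
/- Let n, t ∈ ℕ with t ≥ 1, let κ > 0, and let Σ be an n×n positive definite real matrix whose condition number satisfies λ_max(Σ)/λ_min(Σ) ≤ κ. Then for every t-sparse v ∈ ℝⁿ with ‖v‖_Σ > 0 there exists i ∈ [n] with |⟨v, eᵢ⟩_Σ| ≥ (1/√(κt))·‖v‖_Σ·‖eᵢ‖_Σ; in other words, the standard basis {e₁,…,eₙ} is a (t, 1/√(κt))-dictionary for Σ. -/
open Matrix MeasureTheory ProbabilityTheory
open scoped BigOperators ENNReal

noncomputable section

theorem quad_eig {n : ℕ} {A : Matrix (Fin n) (Fin n) ℝ} (hA : A.IsHermitian) (x : Fin n → ℝ) :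
    ∃ y : Fin n → ℝ, innerSigma A x x = ∑ i, hA.eigenvalues i * y i ^ 2 ∧
      ∑ i, x i ^ 2 = ∑ i, y i ^ 2 := by
  set U : Matrix (Fin n) (Fin n) ℝ := hA.eigenvectorUnitary.1 with hU
  have hUU : U * Uᵀ = 1 := by
    have := Matrix.mem_unitaryGroup_iff.mp hA.eigenvectorUnitary.2
    simpa [Matrix.star_eq_conjTranspose, hU] using this
  have hspec : A = U * diagonal hA.eigenvalues * Uᵀ := by
    have := hA.spectral_theorem
    rw [Unitary.conjStarAlgAut_apply] at this
    simpa [Matrix.star_eq_conjTranspose, hU, Function.comp_def] using this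
  refine ⟨Uᵀ *ᵥ x, ?_, ?_⟩
  · have h1 : innerSigma A x x
        = (Uᵀ *ᵥ x) ⬝ᵥ (diagonal hA.eigenvalues *ᵥ (Uᵀ *ᵥ x)) := by
      unfold innerSigma
      conv_lhs => rw [hspec]
      rw [← Matrix.mulVec_mulVec, ← Matrix.mulVec_mulVec, Matrix.dotProduct_mulVec,
        ← Matrix.mulVec_transpose]
    rw [h1]
    simp only [dotProduct, Matrix.mulVec_diagonal]
    refine Finset.sum_congr rfl fun i _ => ?_
    ring
  · have h1 : (Uᵀ *ᵥ x) ⬝ᵥ (Uᵀ *ᵥ x) = x ⬝ᵥ x := by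
      conv_lhs => lhs; rw [Matrix.mulVec_transpose]
      rw [← Matrix.dotProduct_mulVec, Matrix.mulVec_mulVec, hUU, Matrix.one_mulVec]
    simp only [pow_two]
    exact h1.symm

theorem quad_cmp {n : ℕ} {A : Matrix (Fin n) (Fin n) ℝ} (hA : A.IsHermitian) (κ : ℝ)
    (hcond : ∀ i j, hA.eigenvalues i ≤ κ * hA.eigenvalues j) (x y : Fin n → ℝ) :
    innerSigma A x x * ∑ i, y i ^ 2 ≤ κ * innerSigma A y y * ∑ i, x i ^ 2 := by
  obtain ⟨a, ha, ha'⟩ := quad_eig hA x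
  obtain ⟨b, hb, hb'⟩ := quad_eig hA y
  rw [ha, ha', hb, hb', mul_assoc, mul_comm (∑ i, hA.eigenvalues i * b i ^ 2),
    Finset.sum_mul_sum, Finset.sum_mul_sum, Finset.mul_sum]
  refine Finset.sum_le_sum fun i _ => ?_
  rw [Finset.mul_sum]
  refine Finset.sum_le_sum fun j _ => ?_
  nlinarith [mul_le_mul_of_nonneg_right (hcond i j)
    (mul_nonneg (sq_nonneg (a i)) (sq_nonneg (b j)))]

theorem l1_sq_le {n t : ℕ} (v : Fin n → ℝ) (hv : SparseVec t v) :
    (∑ i, |v i|) ^ 2 ≤ t * ∑ i, v i ^ 2 := by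
  classical
  let s : Finset (Fin n) := Finset.univ.filter fun i => v i ≠ 0
  have hs : s.card ≤ t := by
    have h : ((s : Set (Fin n))).ncard ≤ t := by
      simpa [s, SparseVec] using hv
    rwa [Set.ncard_coe_finset] at h
  have h1 : ∑ i, |v i| = ∑ i ∈ s, |v i| := by
    symm
    apply Finset.sum_subset (Finset.subset_univ _)
    intro i _ hi
    simpa [s] using hi
  have h2 : ∑ i ∈ s, |v i| ^ 2 ≤ ∑ i, v i ^ 2 := by
    simp only [sq_abs]
    exact Finset.sum_le_sum_of_subset_of_nonneg (Finset.subset_univ _) fun i _ _ => sq_nonneg _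
  rw [h1]
  refine sq_sum_le_card_mul_sum_sq.trans ?_
  have h3 : (s.card : ℝ) ≤ t := by exact_mod_cast hs
  exact mul_le_mul h3 h2 (Finset.sum_nonneg fun i _ => sq_nonneg _) (Nat.cast_nonneg _)

/-- if λ_max(Σ)/λ_min(Σ) ≤ κ then the standard basis is a
(t, 1/√(κt))-dictionary for Σ. -/
theorem stmt2 (n t : ℕ) (ht : 1 ≤ t) (κ : ℝ) (hκ : 0 < κ)
    (A : Matrix (Fin n) (Fin n) ℝ) (hA : A.PosDef)
    (hcond : ∀ i j, hA.1.eigenvalues i ≤ κ * hA.1.eigenvalues j) :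
    IsDictionary t (1 / Real.sqrt (κ * t)) A (fun i : Fin n => (Pi.single i 1 : Fin n → ℝ)) := by
  intro v hv hpos
  have hQ : 0 < innerSigma A v v := Real.sqrt_pos.mp hpos
  have hne : Nonempty (Fin n) := by
    by_contra h
    rw [not_nonempty_iff] at h
    simp [innerSigma, dotProduct] at hQ
  have hin : ∀ i, innerSigma A v (Pi.single i 1) = (A *ᵥ v) i := by
    intro i
    have hT : Aᵀ = A := by simpa [Matrix.IsHermitian] using hA.1
    unfold innerSigma
    rw [Matrix.dotProduct_mulVec, ← Matrix.mulVec_transpose, hT]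
    simp
  obtain ⟨i, hi⟩ := Finite.exists_max fun i => |(A *ᵥ v) i|
  set M := |(A *ᵥ v) i| with hM
  have hM0 : 0 ≤ M := abs_nonneg _
  have he : 0 < innerSigma A (Pi.single i 1) (Pi.single i 1) := by
    have h0 : (Pi.single i 1 : Fin n → ℝ) ≠ 0 := by
      intro h
      have := congrFun h i
      simp at this
    simpa [innerSigma] using hA.dotProduct_mulVec_pos h0
  refine ⟨i, Real.sqrt_pos.mpr he, ?_⟩
  simp only [hin]
  rw [← hM]
  have h1 : innerSigma A v v ≤ (∑ j, |v j|) * M := by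
    rw [Finset.sum_mul]
    unfold innerSigma dotProduct
    refine Finset.sum_le_sum fun j _ => ?_
    calc v j * (A *ᵥ v) j ≤ |v j * (A *ᵥ v) j| := le_abs_self _
      _ = |v j| * |(A *ᵥ v) j| := abs_mul _ _
      _ ≤ _ := mul_le_mul_of_nonneg_left (hi j) (abs_nonneg _)
  have h2 := l1_sq_le v hv
  have h3 := quad_cmp hA.1 κ hcond (Pi.single i 1) v
  have h4 : ∑ j, (Pi.single i 1 : Fin n → ℝ) j ^ 2 = 1 := by
    simp [Pi.single_apply]
  rw [h4, mul_one] at h3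
  unfold normSigma
  set Q := innerSigma A v v
  set a := innerSigma A (Pi.single i 1) (Pi.single i 1)
  set S := ∑ j, v j ^ 2
  set L := ∑ j, |v j|
  have ht' : (0:ℝ) < t := by exact_mod_cast ht
  have key : Q * a ≤ κ * t * M ^ 2 := by
    have h5 : Q ^ 2 ≤ (L * M) ^ 2 := pow_le_pow_left₀ hQ.le h1 2
    have h6 : a * L ^ 2 ≤ t * (κ * Q) := by
      calc a * L ^ 2 ≤ a * (t * S) := mul_le_mul_of_nonneg_left h2 he.le
        _ = t * (a * S) := by ring
        _ ≤ _ := mul_le_mul_of_nonneg_left h3 ht'.le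
    refine le_of_mul_le_mul_left ?_ hQ
    calc Q * (Q * a) = a * Q ^ 2 := by ring
      _ ≤ a * (L * M) ^ 2 := mul_le_mul_of_nonneg_left h5 he.le
      _ = (a * L ^ 2) * M ^ 2 := by ring
      _ ≤ (t * (κ * Q)) * M ^ 2 := mul_le_mul_of_nonneg_right h6 (sq_nonneg _)
      _ = _ := by ring
  have hkt : 0 < κ * t := mul_pos hκ ht'
  rw [one_div, inv_mul_le_iff₀ (Real.sqrt_pos.mpr hkt), ← Real.sqrt_mul hQ.le]
  calc Real.sqrt (Q * a) ≤ Real.sqrt (κ * t * M ^ 2) := Real.sqrt_le_sqrt key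
    _ = _ := by rw [Real.sqrt_mul hkt.le, Real.sqrt_sq hM0]
end
end

section
/- Let n ∈ ℕ, let V ⊆ ℝⁿ be a linear subspace with d := dim V, let α > 0, and define S := {i ∈ [n] : sup_{x ∈ V, x ≠ 0} xᵢ/‖x‖₂ ≥ α}. Then |S| ≤ d/α². -/
open Matrix MeasureTheory ProbabilityTheory
open scoped BigOperators ENNReal

noncomputable section

/-- the set of coordinates on which some unit vector of a `d`-dimensional
subspace `V` has value at least `α` has size at most `d/α²`. -/
theorem stmt3 (n : ℕ) (V : Submodule ℝ (EuclideanSpace ℝ (Fin n))) (α : ℝ) (hα : 0 < α) :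
    (({i : Fin n |
        α ≤ sSup ((fun x : EuclideanSpace ℝ (Fin n) => x i / ‖x‖) '' {x | x ∈ V ∧ x ≠ 0})}).ncard : ℝ)
      ≤ (Module.finrank ℝ V : ℝ) / α ^ 2 := by
  let b := stdOrthonormalBasis ℝ V
  have key : ∀ i : Fin n, sSup ((fun x : EuclideanSpace ℝ (Fin n) => x i / ‖x‖) ''
      {x | x ∈ V ∧ x ≠ 0}) ≤ Real.sqrt (∑ k, ((b k : EuclideanSpace ℝ (Fin n)) i) ^ 2) := by
    intro i
    apply Real.sSup_le _ (Real.sqrt_nonneg _)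
    rintro _ ⟨x, ⟨hxV, hx0⟩, rfl⟩
    have hpos : 0 < ‖x‖ := norm_pos_iff.mpr hx0
    show x i / ‖x‖ ≤ _
    rw [div_le_iff₀ hpos]
    have hx : x i = ∑ k, b.repr ⟨x, hxV⟩ k * (b k : EuclideanSpace ℝ (Fin n)) i := by
      have h := congrArg (fun v : V => (v : EuclideanSpace ℝ (Fin n)) i) (b.sum_repr ⟨x, hxV⟩)
      simp at h
      simpa using h.symm
    have hn : ‖x‖ ^ 2 = ∑ k, (b.repr ⟨x, hxV⟩ k) ^ 2 := by
      have h1 : ‖b.repr ⟨x, hxV⟩‖ = ‖x‖ := by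
        rw [b.repr.norm_map]; rfl
      rw [← h1, EuclideanSpace.real_norm_sq_eq]
    have hcs := Finset.sum_mul_sq_le_sq_mul_sq Finset.univ
      (fun k => b.repr ⟨x, hxV⟩ k) (fun k => (b k : EuclideanSpace ℝ (Fin n)) i)
    refine abs_le_of_sq_le_sq' ?_ (by positivity) |>.2
    rw [mul_pow, Real.sq_sqrt (Finset.sum_nonneg fun _ _ => sq_nonneg _), hn, hx, mul_comm]
    exact hcs
  have tot : ∑ i : Fin n, ∑ k, ((b k : EuclideanSpace ℝ (Fin n)) i) ^ 2
      = (Module.finrank ℝ V : ℝ) := by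
    rw [Finset.sum_comm]
    have : ∀ k, ∑ i : Fin n, ((b k : EuclideanSpace ℝ (Fin n)) i) ^ 2 = 1 := by
      intro k
      rw [← EuclideanSpace.real_norm_sq_eq]
      have h : ‖(b k : EuclideanSpace ℝ (Fin n))‖ = 1 := b.orthonormal.1 k
      rw [h, one_pow]
    simp [this]
  classical
  rw [le_div_iff₀ (by positivity), Set.ncard_eq_toFinset_card', ← tot, ← nsmul_eq_mul]
  refine (Finset.card_nsmul_le_sum _ (fun i => ∑ k, ((b k : EuclideanSpace ℝ (Fin n)) i) ^ 2)
    _ ?_).trans (Finset.sum_le_sum_of_subset_of_nonneg (Finset.subset_univ _)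
      fun i _ _ => Finset.sum_nonneg fun _ _ => sq_nonneg _)
  intro i hi
  have hi' := (Set.mem_toFinset.mp hi)
  have h := le_trans hi' (key i)
  exact (Real.le_sqrt' hα).mp h
end
end

section
/- Let n, t ∈ ℕ with t ≥ 1, let P be an n×n real orthogonal projection matrix (P = Pᵀ and P² = P), let τ ≥ 1 be a real number, and let K ⊆ [n]. Suppose that (a) Pᵢᵢ ≥ 1 − 1/(9t²) for all i ∈ [n] \ K, and (b) |supp(v) \ K| ≤ τ for every v ∈ B₀(t) ∩ 𝒲_{P,K}. Then there exists a set I ⊆ [n] with |I| ≤ 36t²·|K| such that |supp(v) \ (I ∪ K)| ≤ τ − 1 for every v ∈ B₀(t) ∩ 𝒲_{P,K}. -/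
open Matrix MeasureTheory ProbabilityTheory
open scoped BigOperators ENNReal

noncomputable section

/-- restriction of `v` to coordinates outside `K` (zero on `K`). -/
def restrictOut {k : ℕ} (K : Finset (Fin k)) (v : Fin k → ℝ) : Fin k → ℝ :=
  fun i => if i ∈ K then 0 else v i

/-- 𝒲_{P,K} := {v : ‖v_{Kᶜ}‖₂ > 3√(vᵀPv)}. -/
def Wset {k : ℕ} (P : Matrix (Fin k) (Fin k) ℝ) (K : Finset (Fin k)) : Set (Fin k → ℝ) :=
  {v | 3 * Real.sqrt (v ⬝ᵥ (P *ᵥ v)) < l2norm (restrictOut K v)}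

theorem peel_count {E ι : Type*} [NormedAddCommGroup E] [InnerProductSpace ℝ E]
    [FiniteDimensional ℝ E] [Fintype ι] (V : Submodule ℝ E) (w : ι → E)
    (hne : ∀ i, w i ≠ 0) (horth : ∀ i j, i ≠ j → inner ℝ (w i) (w j) = 0)
    (hclose : ∀ i, ∃ y ∈ V, ‖w i - y‖ ≤ 2 / 3 * ‖w i‖) :
    5 * (Fintype.card ι : ℝ) ≤ 9 * (Module.finrank ℝ V : ℝ) := by
  have horn : Orthonormal ℝ (fun i => (‖w i‖⁻¹ : ℝ) • w i) := by
    refine ⟨fun i => ?_, fun i j hij => ?_⟩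
    · have := norm_ne_zero_iff.mpr (hne i)
      simp [norm_smul, this]
    · simp [inner_smul_left, inner_smul_right, horth i j hij]
  have hlow : ∀ i, (5 / 9 : ℝ) ≤ ‖V.orthogonalProjectionOnto ((‖w i‖⁻¹ : ℝ) • w i)‖ ^ 2 := by
    intro i
    obtain ⟨y, hy, hwy⟩ := hclose i
    have hpos : 0 < ‖w i‖ := norm_pos_iff.mpr (hne i)
    have h1 := Submodule.norm_sq_eq_add_norm_sq_projection (w i) V
    have h2 := Submodule.norm_sq_eq_add_norm_sq_projection (w i - y) V
    have h3 : Vᗮ.orthogonalProjectionOnto y = 0 := by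
      apply Submodule.orthogonalProjectionOnto_eq_zero_iff.mpr
      exact Submodule.le_orthogonal_orthogonal V hy
    have h4 : Vᗮ.orthogonalProjectionOnto (w i - y) = Vᗮ.orthogonalProjectionOnto (w i) := by
      rw [map_sub, h3, sub_zero]
    rw [h4] at h2
    have h5 : ‖w i - y‖ ^ 2 ≤ (2 / 3 * ‖w i‖) ^ 2 := by gcongr
    have h6 : 5 / 9 * ‖w i‖ ^ 2 ≤ ‖V.orthogonalProjectionOnto (w i)‖ ^ 2 := by
      nlinarith [sq_nonneg ‖V.orthogonalProjectionOnto (w i - y)‖]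
    rw [map_smul, norm_smul, norm_inv, norm_norm, mul_pow, inv_pow, ← div_eq_inv_mul,
      le_div_iff₀ (by positivity)]
    exact h6
  let b := stdOrthonormalBasis ℝ V
  have hsum : ∑ i, ‖V.orthogonalProjectionOnto ((‖w i‖⁻¹ : ℝ) • w i)‖ ^ 2
      ≤ (Module.finrank ℝ V : ℝ) := by
    calc ∑ i, ‖V.orthogonalProjectionOnto ((‖w i‖⁻¹ : ℝ) • w i)‖ ^ 2
        = ∑ i, ∑ j, ‖inner ℝ ((‖w i‖⁻¹ : ℝ) • w i) (b j : E)‖ ^ 2 := by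
          refine Finset.sum_congr rfl fun i _ => ?_
          rw [← b.sum_sq_norm_inner_right]
          refine Finset.sum_congr rfl fun j _ => ?_
          rw [Submodule.inner_orthogonalProjectionOnto_eq_of_mem_left, real_inner_comm]
      _ = ∑ j, ∑ i, ‖inner ℝ ((‖w i‖⁻¹ : ℝ) • w i) (b j : E)‖ ^ 2 := Finset.sum_comm
      _ ≤ ∑ j : Fin (Module.finrank ℝ V), (1 : ℝ) := by
          refine Finset.sum_le_sum fun j _ => ?_
          refine (horn.sum_inner_products_le (b j : E)).trans ?_
          have : ‖(b j : E)‖ = 1 := by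
            have := b.norm_eq_one j
            rwa [Submodule.coe_norm] at this
          simp [this]
      _ = _ := by simp
  have h7 : ∑ i : ι, (5 / 9 : ℝ) ≤ _ := Finset.sum_le_sum fun i _ => hlow i
  have h8 := h7.trans hsum
  simp at h8
  linarith

theorem peel_close (n t : ℕ) (ht : 1 ≤ t) (P : Matrix (Fin n) (Fin n) ℝ)
    (hsym : Pᵀ = P) (hproj : P * P = P) (K : Finset (Fin n))
    (ha : ∀ i, i ∉ K → 1 - 1 / (9 * (t : ℝ) ^ 2) ≤ P i i)
    (v : Fin n → ℝ) (hv : SparseVec t v) (hW : v ∈ Wset P K) :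
    ∃ y ∈ Submodule.span ℝ (K.image (fun j => Matrix.toEuclideanLin P
        (EuclideanSpace.single j (1 : ℝ))) : Set (EuclideanSpace ℝ (Fin n))),
      ‖WithLp.toLp 2 (restrictOut K v) - y‖ ≤ 2 / 3 * ‖WithLp.toLp 2 (restrictOut K v)‖ := by
  set T := Matrix.toEuclideanLin P with hT
  have hTapp : ∀ x : EuclideanSpace ℝ (Fin n), T x = WithLp.toLp 2 (P *ᵥ x.ofLp) := fun x => by
    rw [hT, Matrix.toEuclideanLin, Matrix.toLpLin_apply]
  have hTT : ∀ x, T (T x) = T x := fun x => by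
    simp only [hTapp, Matrix.mulVec_mulVec, hproj]
  have hinner : ∀ x y : EuclideanSpace ℝ (Fin n), inner ℝ x y = x.ofLp ⬝ᵥ y.ofLp := fun x y => by
    rw [EuclideanSpace.inner_eq_star_dotProduct, dotProduct_comm]; simp
  have hTsym : ∀ x y, inner ℝ (T x) y = inner ℝ x (T y) := fun x y => by
    rw [hinner, hinner, hTapp, hTapp]
    simp only
    rw [Matrix.dotProduct_mulVec, ← Matrix.mulVec_transpose, hsym]
  have hnorm : ∀ x, ‖T x‖ ^ 2 = x.ofLp ⬝ᵥ (P *ᵥ x.ofLp) := fun x => by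
    rw [← real_inner_self_eq_norm_sq, hTsym, hTT, hinner, hTapp]
  set w : EuclideanSpace ℝ (Fin n) := WithLp.toLp 2 (restrictOut K v) with hw
  let x : EuclideanSpace ℝ (Fin n) := WithLp.toLp 2 v
  have hl2 : l2norm (restrictOut K v) = ‖w‖ := by
    rw [EuclideanSpace.norm_eq]; simp [l2norm, hw]
  have hTx : 3 * ‖T x‖ ≤ ‖w‖ := by
    have h : 3 * Real.sqrt (v ⬝ᵥ (P *ᵥ v)) < l2norm (restrictOut K v) := hW
    rw [hl2, ← hnorm x, Real.sqrt_sq (norm_nonneg _)] at h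
    exact h.le
  have htpos : (0 : ℝ) < t := by exact_mod_cast ht
  have hQe : ∀ i, i ∉ K → ‖EuclideanSpace.single i (1 : ℝ) - T (EuclideanSpace.single i 1)‖
      ≤ 1 / (3 * t) := by
    intro i hi
    have h1 : ‖EuclideanSpace.single i (1 : ℝ) - T (EuclideanSpace.single i 1)‖ ^ 2
        = 1 - P i i := by
      rw [@norm_sub_sq_real, ← hTT, ← hTsym, real_inner_self_eq_norm_sq, hTT, hnorm]
      simp
      ring
    apply le_of_sq_le_sq _ (by positivity)
    rw [h1]
    have := ha i hi
    have h2 : (1 / (3 * (t : ℝ))) ^ 2 = 1 / (9 * (t : ℝ) ^ 2) := by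
      field_simp; norm_num
    rw [h2]; linarith
  -- decomposition of a vector along coordinates
  have hdec : ∀ z : EuclideanSpace ℝ (Fin n),
      z = ∑ i, z.ofLp i • EuclideanSpace.single i (1 : ℝ) := fun z => by
    ext j
    simp [Finset.sum_apply, Pi.single_apply]
  have hQw : ‖w - T w‖ ≤ 1 / 3 * ‖w‖ := by
    classical
    let S : Finset (Fin n) := Finset.univ.filter fun i => v i ≠ 0
    have hS : S.card ≤ t := by
      have := hv
      unfold SparseVec at this
      rw [Set.ncard_eq_toFinset_card'] at this
      convert this using 2
      ext; simp [S]
    have h1 : w - T w = ∑ i, w.ofLp i •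
        (EuclideanSpace.single i (1 : ℝ) - T (EuclideanSpace.single i 1)) := by
      conv_lhs => rw [hdec w]
      simp only [map_sum, map_smul, smul_sub, Finset.sum_sub_distrib]
    have h2 : ‖w - T w‖ ≤ ∑ i ∈ S, |w.ofLp i| * (1 / (3 * t)) := by
      rw [h1]
      have : ∑ i, w.ofLp i •
        (EuclideanSpace.single i (1 : ℝ) - T (EuclideanSpace.single i 1)) = ∑ i ∈ S, w.ofLp i •
        (EuclideanSpace.single i (1 : ℝ) - T (EuclideanSpace.single i 1)) := by
        symm
        apply Finset.sum_subset (Finset.subset_univ _)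
        intro i _ hi
        have : v i = 0 := by simpa [S] using hi
        simp [hw, restrictOut, this]
      rw [this]
      refine (norm_sum_le _ _).trans (Finset.sum_le_sum fun i _ => ?_)
      rw [norm_smul, Real.norm_eq_abs]
      by_cases hi : i ∈ K
      · simp [hw, restrictOut, hi]
      · exact mul_le_mul_of_nonneg_left (hQe i hi) (abs_nonneg _)
    rw [← Finset.sum_mul] at h2
    have h3 : (∑ i ∈ S, |w.ofLp i|) ^ 2 ≤ t * ‖w‖ ^ 2 := by
      refine sq_sum_le_card_mul_sum_sq.trans ?_
      have h4 : ∑ i ∈ S, |w.ofLp i| ^ 2 ≤ ‖w‖ ^ 2 := by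
        rw [EuclideanSpace.norm_sq_eq]
        simp only [Real.norm_eq_abs]
        exact Finset.sum_le_sum_of_subset_of_nonneg (Finset.subset_univ _)
          fun _ _ _ => sq_nonneg _
      have h5 : (S.card : ℝ) ≤ t := by exact_mod_cast hS
      exact mul_le_mul h5 h4 (Finset.sum_nonneg fun _ _ => sq_nonneg _) htpos.le
    have h1t : (1 : ℝ) ≤ t := by exact_mod_cast ht
    have h6 : ∑ i ∈ S, |w.ofLp i| ≤ t * ‖w‖ := by
      apply le_of_sq_le_sq _ (by positivity)
      refine h3.trans ?_
      rw [mul_pow]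
      gcongr
      nlinarith
    calc _ ≤ _ := h2
      _ ≤ t * ‖w‖ * (1 / (3 * t)) := by gcongr
      _ = _ := by field_simp
  refine ⟨- T (x - w), ?_, ?_⟩
  · apply Submodule.neg_mem
    rw [hdec (x - w), map_sum]
    refine Submodule.sum_mem _ fun i _ => ?_
    rw [map_smul]
    by_cases hi : i ∈ K
    · apply Submodule.smul_mem
      apply Submodule.subset_span
      simp only [Finset.coe_image]
      exact ⟨i, hi, rfl⟩
    · have : (x - w).ofLp i = 0 := by simp [x, hw, restrictOut, hi]
      rw [this, zero_smul]; exact Submodule.zero_mem _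
  · have h1 : w - -T (x - w) = (w - T w) + T x := by rw [map_sub]; abel
    rw [h1]
    refine (norm_add_le _ _).trans ?_
    linarith

/-- one step of iterative peeling. -/
theorem stmt4 (n t : ℕ) (ht : 1 ≤ t) (P : Matrix (Fin n) (Fin n) ℝ)
    (hsym : Pᵀ = P) (hproj : P * P = P) (τ : ℝ) (hτ : 1 ≤ τ) (K : Finset (Fin n))
    (ha : ∀ i, i ∉ K → 1 - 1 / (9 * (t : ℝ) ^ 2) ≤ P i i)
    (hb : ∀ v : Fin n → ℝ, SparseVec t v → v ∈ Wset P K →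
      (({i | v i ≠ 0} \ (K : Set (Fin n))).ncard : ℝ) ≤ τ) :
    ∃ I : Finset (Fin n), (I.card : ℝ) ≤ 36 * (t : ℝ) ^ 2 * K.card ∧
      ∀ v : Fin n → ℝ, SparseVec t v → v ∈ Wset P K →
        (({i | v i ≠ 0} \ ((I : Set (Fin n)) ∪ (K : Set (Fin n)))).ncard : ℝ) ≤ τ - 1 := by

  classical
  let V : Submodule ℝ (EuclideanSpace ℝ (Fin n)) :=
    Submodule.span ℝ (K.image (fun j => Matrix.toEuclideanLin P
        (EuclideanSpace.single j (1 : ℝ))) : Set (EuclideanSpace ℝ (Fin n)))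
  have hV : Module.finrank ℝ V ≤ K.card :=
    (finrank_span_finset_le_card _).trans Finset.card_image_le
  let good : Finset (Fin n) → Prop := fun S => ∃ v : Fin n → ℝ, SparseVec t v ∧ v ∈ Wset P K ∧
    (S : Set (Fin n)) = {i | v i ≠ 0} \ (K : Set (Fin n)) ∧ τ - 1 < (S.card : ℝ)
  let fams : Set (Finset (Finset (Fin n))) := {F | (∀ S ∈ F, good S) ∧
    ∀ S ∈ F, ∀ S' ∈ F, S ≠ S' → Disjoint S S'}
  obtain ⟨F, hF⟩ := (Set.toFinite fams).exists_maximal ⟨∅, by simp [fams]⟩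
  obtain ⟨hFgood, hFdisj⟩ := hF.prop
  have hgoodne : ∀ S, good S → S.Nonempty := by
    rintro S ⟨v, -, -, -, h⟩
    rw [← Finset.card_pos]
    have : (0 : ℝ) < S.card := by linarith
    exact_mod_cast this
  have hcardt : ∀ S, good S → S.card ≤ t := by
    rintro S ⟨v, hv, -, h, -⟩
    rw [← Set.ncard_coe_finset, h]
    exact (Set.ncard_le_ncard Set.sdiff_subset (Set.toFinite _)).trans hv
  choose! f hf1 hf2 hf3 hf4 using hFgood
  have hmem : ∀ S ∈ F, ∀ i, i ∈ S ↔ f S i ≠ 0 ∧ i ∉ K := by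
    intro S hS i
    rw [← Finset.mem_coe, hf3 S hS]; simp
  have hcount := peel_count V (fun S : F => WithLp.toLp 2 (restrictOut K (f S))) (by
      rintro ⟨S, hS⟩ h0
      obtain ⟨i, hi⟩ := hgoodne S (hF.prop.1 S hS)
      have h1 := (hmem S hS i).1 hi
      have h2 : restrictOut K (f S) i = 0 := by
        have := congrArg (fun z => z.ofLp i) h0
        simpa using this
      simp [restrictOut, h1.2] at h2
      exact h1.1 h2) (by
      rintro ⟨S, hS⟩ ⟨S', hS'⟩ hne
      have hne' : S ≠ S' := fun h => hne (Subtype.ext h)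
      have hd := hFdisj S hS S' hS' hne'
      simp only [PiLp.inner_apply]
      refine Finset.sum_eq_zero fun i _ => ?_
      by_cases hi : i ∈ K
      · simp [restrictOut, hi]
      · by_cases h1 : f S i = 0
        · simp [restrictOut, h1]
        · by_cases h2 : f S' i = 0
          · simp [restrictOut, h2]
          · exact absurd ((hmem S' hS' i).2 ⟨h2, hi⟩)
              (Finset.disjoint_left.1 hd ((hmem S hS i).2 ⟨h1, hi⟩))) (by
      rintro ⟨S, hS⟩
      exact peel_close n t ht P hsym hproj K ha (f S) (hf1 S hS) (hf2 S hS))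
  rw [Fintype.card_coe] at hcount
  refine ⟨F.biUnion id, ?_, ?_⟩
  · have h1 : (F.biUnion id).card ≤ F.card * t :=
      Finset.card_biUnion_le_card_mul _ _ _ fun S hS => hcardt S (hF.prop.1 S hS)
    have h1' : ((F.biUnion id).card : ℝ) ≤ F.card * t := by exact_mod_cast h1
    have h2 : (Module.finrank ℝ V : ℝ) ≤ K.card := by exact_mod_cast hV
    have h3 : (1 : ℝ) ≤ t := by exact_mod_cast ht
    have h4 : (F.card : ℝ) ≤ 36 * K.card := by
      have : (0 : ℝ) ≤ K.card := by positivity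
      linarith
    calc ((F.biUnion id).card : ℝ) ≤ F.card * t := h1'
      _ ≤ (36 * K.card) * (t ^ 2) := by
        gcongr
        nlinarith
      _ = _ := by ring
  · intro v hv hW
    by_contra! hlt
    let S : Finset (Fin n) := Finset.univ.filter fun i => v i ≠ 0 ∧ i ∉ K
    have hS : (S : Set (Fin n)) = {i | v i ≠ 0} \ (K : Set (Fin n)) := by
      ext i; simp [S]
    have hSτ : (S.card : ℝ) ≤ τ := by
      have := hb v hv hW
      rwa [← hS, Set.ncard_coe_finset] at this
    have heq : {i | v i ≠ 0} \ (((F.biUnion id : Finset (Fin n)) : Set (Fin n)) ∪ (K : Set (Fin n)))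
        = ((S \ F.biUnion id : Finset (Fin n)) : Set (Fin n)) := by
      rw [Finset.coe_sdiff, hS, Set.sdiff_sdiff, Set.union_comm]
    rw [heq, Set.ncard_coe_finset] at hlt
    have hle : (S \ F.biUnion id).card ≤ S.card := Finset.card_le_card Finset.sdiff_subset
    have hSlt : τ - 1 < (S.card : ℝ) := by
      have : ((S \ F.biUnion id).card : ℝ) ≤ S.card := by exact_mod_cast hle
      linarith
    have hge : S.card ≤ (S \ F.biUnion id).card := by
      have : (S.card : ℝ) < (S \ F.biUnion id).card + 1 := by linarith
      have : S.card < (S \ F.biUnion id).card + 1 := by exact_mod_cast this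
      omega
    have hSeq : S \ F.biUnion id = S := Finset.eq_of_subset_of_card_le Finset.sdiff_subset hge
    have hdisj : Disjoint S (F.biUnion id) := Finset.sdiff_eq_self_iff_disjoint.1 hSeq
    have hSgood : good S := ⟨v, hv, hW, hS, hSlt⟩
    have hd : ∀ S' ∈ F, Disjoint S S' := fun S' hS' =>
      Finset.disjoint_of_subset_right (Finset.subset_biUnion_of_mem id hS') hdisj
    have hins : insert S F ∈ fams := by
      refine ⟨?_, ?_⟩
      · intro S' hS'
        rcases Finset.mem_insert.1 hS' with rfl | h
        · exact hSgood
        · exact hF.prop.1 S' h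
      · intro A hA B hB hAB
        rcases Finset.mem_insert.1 hA with rfl | hA
        · rcases Finset.mem_insert.1 hB with rfl | hB
          · exact absurd rfl hAB
          · exact hd B hB
        · rcases Finset.mem_insert.1 hB with rfl | hB
          · exact (hd A hA).symm
          · exact hFdisj A hA B hB hAB
    have hSF : S ∈ F := hF.le_of_ge hins (Finset.subset_insert S F) (Finset.mem_insert_self S F)
    obtain ⟨i, hi⟩ := hgoodne S hSgood
    exact Finset.disjoint_left.1 (hd S hSF) hi hi
end
end

section
/- Let n, t, d ∈ ℕ with t ≥ 1 and d ≤ n − 1, and let Σ be an n×n positive semidefinite real matrix with eigenvalues λ₁ ≤ … ≤ λₙ and λₙ > 0. Set α := (1/(7√t))·√(λ_{d+1}/λₙ). Then 𝒩_{t,α}(Σ) ≤ t·(7t)^{2t²+t}·dᵗ + n. -/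
open Matrix MeasureTheory ProbabilityTheory
open scoped BigOperators ENNReal

noncomputable section

lemma le_of_sq_le_sq_aux {a b : ℝ} (h : a ^ 2 ≤ b ^ 2) (hb : 0 ≤ b) : a ≤ b :=
  (abs_le_of_sq_le_sq' h hb).2

lemma heavy_coords {n : ℕ} (m : ℕ) (V : Submodule ℝ (EuclideanSpace ℝ (Fin n))) :
    ∃ S : Finset (Fin n), S.card ≤ m * Module.finrank ℝ V ∧
      ∀ i ∉ S, ∀ x ∈ V, (m : ℝ) * x i ^ 2 ≤ ∑ j, x j ^ 2 := by
  classical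
  set b := stdOrthonormalBasis ℝ V with hb
  set p : Fin n → ℝ := fun i => ∑ j, ((b j : EuclideanSpace ℝ (Fin n)) i) ^ 2 with hp
  have hp0 : ∀ i, 0 ≤ p i := fun i => Finset.sum_nonneg fun j _ => sq_nonneg _
  have hsum : ∑ i, p i = Module.finrank ℝ V := by
    rw [hp, Finset.sum_comm]
    have : ∀ j, ∑ i, ((b j : EuclideanSpace ℝ (Fin n)) i) ^ 2 = 1 := by
      intro j
      have h1 : ‖(b j : EuclideanSpace ℝ (Fin n))‖ = 1 := by
        have := b.orthonormal.1 j
        rwa [Submodule.norm_coe]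
      have h2 := EuclideanSpace.real_norm_sq_eq (b j : EuclideanSpace ℝ (Fin n))
      rw [← h2, h1]; norm_num
    simp [this]
  refine ⟨Finset.univ.filter (fun i => 1 < (m : ℝ) * p i), ?_, ?_⟩
  · have h1 : ((Finset.univ.filter (fun i => 1 < (m : ℝ) * p i)).card : ℝ)
        ≤ ∑ i ∈ Finset.univ.filter (fun i => 1 < (m : ℝ) * p i), (m : ℝ) * p i := by
      rw [Finset.card_eq_sum_ones]; push_cast
      apply Finset.sum_le_sum
      intro i hi
      exact (Finset.mem_filter.1 hi).2.le
    have h2 : ∑ i ∈ Finset.univ.filter (fun i => 1 < (m : ℝ) * p i), (m : ℝ) * p i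
        ≤ ∑ i, (m : ℝ) * p i := by
      apply Finset.sum_le_sum_of_subset_of_nonneg (Finset.subset_univ _)
      intro i _ _
      exact mul_nonneg (Nat.cast_nonneg _) (hp0 i)
    rw [← Finset.mul_sum (s := Finset.univ), hsum] at h2
    exact_mod_cast h1.trans h2
  · intro i hi x hx
    have hi' : (m : ℝ) * p i ≤ 1 := by simpa using hi
    set y : V := ⟨x, hx⟩ with hy
    have h3 : x i = ∑ j, b.repr y j * (b j : EuclideanSpace ℝ (Fin n)) i := by
      have h := congrArg (fun z : V => (z : EuclideanSpace ℝ (Fin n)) i) (b.sum_repr y)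
      simp only [hy] at h
      rw [← h]
      simp [hy]
    have h4 : ∑ j, (b.repr y j) ^ 2 = ∑ j, x j ^ 2 := by
      rw [← EuclideanSpace.real_norm_sq_eq, ← EuclideanSpace.real_norm_sq_eq, b.repr.norm_map]
      rfl
    have h5 : x i ^ 2 ≤ (∑ j, x j ^ 2) * p i := by
      rw [h3, ← h4]
      exact Finset.sum_mul_sq_le_sq_mul_sq _ _ _
    have h6 : 0 ≤ ∑ j, x j ^ 2 := Finset.sum_nonneg fun j _ => sq_nonneg _
    calc (m : ℝ) * x i ^ 2 ≤ m * ((∑ j, x j ^ 2) * p i) := by gcongr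
      _ = (∑ j, x j ^ 2) * (m * p i) := by ring
      _ ≤ (∑ j, x j ^ 2) * 1 := by gcongr
      _ = _ := mul_one _

lemma heavy_restrict {n : ℕ} (m d : ℕ) (V : Submodule ℝ (Fin n → ℝ))
    (hV : Module.finrank ℝ V ≤ d) (T : Finset (Fin n)) :
    ∃ S : Finset (Fin n), S.card ≤ m * d ∧
      ∀ i ∉ S, i ∉ T → ∀ x ∈ V, (m : ℝ) * x i ^ 2 ≤ ∑ j ∈ Tᶜ, x j ^ 2 := by
  classical
  let r : (Fin n → ℝ) →ₗ[ℝ] EuclideanSpace ℝ (Fin n) :=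
    { toFun := fun x => WithLp.toLp 2 (fun i => if i ∈ T then 0 else x i)
      map_add' := by intro x y; ext i; by_cases h : i ∈ T <;> simp [h]
      map_smul' := by intro c x; ext i; by_cases h : i ∈ T <;> simp [h] }
  obtain ⟨S, hS, hS2⟩ := heavy_coords m (V.map r)
  refine ⟨S, hS.trans (Nat.mul_le_mul_left _ ((Submodule.finrank_map_le r V).trans hV)), ?_⟩
  intro i hi hiT x hx
  have h := hS2 i hi (r x) (Submodule.mem_map_of_mem hx)
  have h1 : ∀ j, (r x) j = if j ∈ T then 0 else x j := fun j => rfl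
  simp only [h1, hiT, if_false] at h
  refine h.trans (le_of_eq ?_)
  rw [← Finset.sum_subset (Finset.subset_univ Tᶜ)]
  · apply Finset.sum_congr rfl
    intro j hj
    simp [Finset.mem_compl.1 hj]
  · intro j _ hj
    have : j ∈ T := by simpa using hj
    simp [this]

lemma peeling {n : ℕ} (t d : ℕ) (V : Submodule ℝ (Fin n → ℝ))
    (hV : Module.finrank ℝ V ≤ d) :
    ∃ S : Finset (Fin n), S.card ≤ (t + 1) * (2 * t * d) ∧
      ∀ U : Finset (Fin n), U.card ≤ t → ∀ w : Fin n → ℝ, (∀ i ∉ U, w i = 0) → ∀ x ∈ V,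
        ∑ i ∈ Sᶜ, w i ^ 2 ≤ 4 * ∑ i, (w i - x i) ^ 2 := by
  classical
  choose H hH1 hH2 using heavy_restrict (2 * t) d V hV
  let T : ℕ → Finset (Fin n) := fun k => Nat.rec ∅ (fun _ s => s ∪ H s) k
  have hT0 : T 0 = ∅ := rfl
  have hTs : ∀ k, T (k + 1) = T k ∪ H (T k) := fun k => rfl
  have hcard : ∀ k, (T k).card ≤ k * (2 * t * d) := by
    intro k
    induction k with
    | zero => simp [hT0]
    | succ k ih =>
      rw [hTs]
      have := hH1 (T k)
      have := Finset.card_union_le (T k) (H (T k))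
      rw [add_mul]; linarith
  have hTmono : Monotone T := monotone_nat_of_le_succ (fun k => by
    rw [hTs]; exact Finset.subset_union_left)
  refine ⟨T (t + 1), hcard (t + 1), ?_⟩
  intro U hU w hw x hx
  have hk : ∃ k ≤ t, U ∩ T (k + 1) ⊆ T k := by
    by_contra! hcon
    have : ∀ k ≤ t + 1, k ≤ (U ∩ T k).card := by
      intro k
      induction k with
      | zero => simp
      | succ k ih =>
        intro hk
        have h1 := ih (by omega)
        have h2 : U ∩ T k ⊂ U ∩ T (k + 1) := by
          refine ⟨Finset.inter_subset_inter_left (hTmono (Nat.le_succ k)), fun hsub => ?_⟩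
          exact hcon k (by omega) (hsub.trans Finset.inter_subset_right)
        have := Finset.card_lt_card h2
        omega
    have h1 := this (t + 1) le_rfl
    have h2 := Finset.card_le_card (Finset.inter_subset_left (s₁ := U) (s₂ := T (t + 1)))
    omega
  obtain ⟨k, hkt, hk⟩ := hk
  set R := (T k)ᶜ with hR
  have hx2 : ∀ i ∈ R ∩ U, ((2 * t : ℕ) : ℝ) * x i ^ 2 ≤ ∑ j ∈ R, x j ^ 2 := by
    intro i hi
    rw [Finset.mem_inter, hR, Finset.mem_compl] at hi
    refine hH2 (T k) i ?_ hi.1 x hx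
    intro hc
    exact hi.1 (hk (Finset.mem_inter.2 ⟨hi.2, by rw [hTs]; exact Finset.mem_union_right _ hc⟩))
  have hsplit : ∀ f : Fin n → ℝ, ∑ j ∈ R, f j = ∑ j ∈ R ∩ U, f j + ∑ j ∈ R \ U, f j := by
    intro f
    exact (Finset.sum_inter_add_sum_sdiff R U f).symm
  have hX0 : 0 ≤ ∑ j ∈ R, x j ^ 2 := Finset.sum_nonneg fun j _ => sq_nonneg _
  have hp : 2 * ∑ i ∈ R ∩ U, x i ^ 2 ≤ ∑ j ∈ R, x j ^ 2 := by
    have hc : (R ∩ U).card ≤ t := (Finset.card_le_card Finset.inter_subset_right).trans hU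
    rcases Nat.eq_zero_or_pos t with h0 | h0
    · have : R ∩ U = ∅ := Finset.card_eq_zero.1 (by omega)
      rw [this]; simpa using hX0
    have ht : (0 : ℝ) < t := by exact_mod_cast h0
    have h1 : ∑ i ∈ R ∩ U, ((2 * t : ℕ) : ℝ) * x i ^ 2 ≤ (R ∩ U).card • ∑ j ∈ R, x j ^ 2 :=
      Finset.sum_le_card_nsmul _ _ _ hx2
    rw [← Finset.mul_sum, nsmul_eq_mul] at h1
    have h2 : ((R ∩ U).card : ℝ) * ∑ j ∈ R, x j ^ 2 ≤ t * ∑ j ∈ R, x j ^ 2 := by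
      gcongr
    push_cast at h1
    have h3 : (t : ℝ) * (2 * ∑ i ∈ R ∩ U, x i ^ 2) ≤ t * ∑ j ∈ R, x j ^ 2 := by linarith
    exact le_of_mul_le_mul_left h3 ht
  have hs : ∑ j ∈ R \ U, x j ^ 2 = ∑ j ∈ R \ U, (w j - x j) ^ 2 := by
    apply Finset.sum_congr rfl
    intro j hj
    rw [hw j (Finset.mem_sdiff.1 hj).2]; ring
  have hws : ∑ j ∈ R \ U, w j ^ 2 = 0 := by
    apply Finset.sum_eq_zero
    intro j hj
    rw [hw j (Finset.mem_sdiff.1 hj).2]; ring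
  have hwp : ∑ j ∈ R ∩ U, w j ^ 2 ≤ 2 * ∑ j ∈ R ∩ U, x j ^ 2 + 2 * ∑ j ∈ R ∩ U, (w j - x j) ^ 2 := by
    rw [Finset.mul_sum, Finset.mul_sum, ← Finset.sum_add_distrib]
    apply Finset.sum_le_sum
    intro j _
    nlinarith [sq_nonneg (w j - 2 * x j)]
  have hle1 : ∑ i ∈ (T (t + 1))ᶜ, w i ^ 2 ≤ ∑ i ∈ R, w i ^ 2 := by
    apply Finset.sum_le_sum_of_subset_of_nonneg
    · exact Finset.compl_subset_compl.2 (hTmono (show k ≤ t + 1 by omega))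
    · intro j _ _; positivity
  have hle2 : ∑ i ∈ R, (w i - x i) ^ 2 ≤ ∑ i, (w i - x i) ^ 2 := by
    apply Finset.sum_le_sum_of_subset_of_nonneg (Finset.subset_univ _)
    intro j _ _; positivity
  have e1 := hsplit (fun j => x j ^ 2)
  have e2 := hsplit (fun j => w j ^ 2)
  have e3 := hsplit (fun j => (w j - x j) ^ 2)
  have n1 : 0 ≤ ∑ j ∈ R \ U, (w j - x j) ^ 2 := Finset.sum_nonneg fun j _ => sq_nonneg _
  have n2 : 0 ≤ ∑ j ∈ R ∩ U, (w j - x j) ^ 2 := Finset.sum_nonneg fun j _ => sq_nonneg _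
  linarith

lemma span_dict {n : ℕ} (t : ℕ) {E : Type*} [NormedAddCommGroup E] [InnerProductSpace ℝ E]
    (φ : (Fin n → ℝ) →ₗ[ℝ] E) (f : Fin t → Fin n) :
    ∃ b : Fin t → (Fin n → ℝ), ∀ v : Fin n → ℝ, ∃ u : Fin n → ℝ,
      (∀ i ∉ Set.range f, u i = 0) ∧
      (∀ z : Fin n → ℝ, (∀ i ∉ Set.range f, z i = 0) → inner ℝ (φ (v - u)) (φ z) = 0) ∧
      (‖φ u‖ ≠ 0 → ∃ j, ‖φ (b j)‖ = 1 ∧ ‖φ u‖ ≤ √t * |inner ℝ (φ v) (φ (b j))|) := by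
  classical
  let X : Submodule ℝ (Fin n → ℝ) :=
    Submodule.span ℝ (Set.range (fun k => (Pi.single (f k) 1 : Fin n → ℝ)))
  have hX : ∀ z : Fin n → ℝ, z ∈ X ↔ ∀ i ∉ Set.range f, z i = 0 := by
    intro z
    constructor
    · intro hz i hi
      induction hz using Submodule.span_induction with
      | mem x h =>
        obtain ⟨k, rfl⟩ := h
        apply Pi.single_eq_of_ne
        rintro rfl
        exact hi ⟨k, rfl⟩
      | zero => rfl
      | add x y _ _ h1 h2 => simp [h1, h2]
      | smul a x _ h => simp [h]
    · intro hz
      have : z = ∑ i, z i • (Pi.single i 1 : Fin n → ℝ) := pi_eq_sum_univ' z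
      rw [this]
      apply Submodule.sum_mem
      intro i _
      by_cases hi : i ∈ Set.range f
      · obtain ⟨k, rfl⟩ := hi
        exact Submodule.smul_mem _ _ (Submodule.subset_span ⟨k, rfl⟩)
      · rw [hz i hi, zero_smul]; exact Submodule.zero_mem _
  let W := X.map φ
  have hfin : Module.finrank ℝ W ≤ t := by
    refine (Submodule.finrank_map_le φ X).trans ?_
    have := finrank_range_le_card (R := ℝ) (fun k => (Pi.single (f k) 1 : Fin n → ℝ))
    rw [Fintype.card_fin] at this
    exact this
  let q := stdOrthonormalBasis ℝ W
  have hpre : ∀ y : W, ∃ x ∈ X, φ x = y := fun y => Submodule.mem_map.1 y.2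
  choose pre hpre1 hpre2 using hpre
  refine ⟨fun j => if h : j.1 < Module.finrank ℝ W then pre (q ⟨j.1, h⟩) else 0, ?_⟩
  intro v
  set y : W := W.orthogonalProjectionOnto (φ v) with hy
  refine ⟨pre y, (hX _).1 (hpre1 y), ?_, ?_⟩
  · intro z hz
    rw [map_sub, hpre2]
    exact Submodule.starProjection_inner_eq_zero (K := W) (φ v) (φ z)
      (Submodule.mem_map_of_mem ((hX z).2 hz))
  · intro hne
    rw [hpre2] at hne ⊢
    by_contra! hcon
    have hi : ∀ j, inner ℝ (q j) y = inner ℝ (φ v) (q j : E) := by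
      intro j
      rw [hy, Submodule.inner_orthogonalProjectionOnto_eq_of_mem_left, real_inner_comm]
    have hlt : ∀ j : Fin (Module.finrank ℝ W), t * (inner ℝ (q j) y) ^ 2 < ‖y‖ ^ 2 := by
      intro j
      have h1 := hcon ⟨j.1, by omega⟩
      simp only [j.2, dif_pos, hpre2, Fin.eta] at h1
      have h2 := h1 (by rw [Submodule.norm_coe]; exact q.orthonormal.1 j)
      rw [← hi] at h2
      have h3 : (√t * |inner ℝ (q j) y|) ^ 2 < ‖(y : E)‖ ^ 2 := by
        gcongr
      rw [mul_pow, Real.sq_sqrt (Nat.cast_nonneg _), sq_abs] at h3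
      simpa using h3
    have hsum := q.sum_sq_norm_inner_right y
    have hne' : (Finset.univ : Finset (Fin (Module.finrank ℝ W))).Nonempty := by
      by_contra hemp
      rw [Finset.not_nonempty_iff_eq_empty] at hemp
      rw [hemp] at hsum
      apply hne
      have : ‖y‖ = 0 := by simpa using hsum.symm
      simpa using this
    have h5 := Finset.sum_lt_sum_of_nonempty hne' (fun j _ => hlt j)
    rw [← Finset.mul_sum] at h5
    simp only [Real.norm_eq_abs, sq_abs] at hsum
    rw [hsum] at h5
    simp only [Finset.sum_const, Finset.card_univ, Fintype.card_fin, nsmul_eq_mul] at h5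
    have : (Module.finrank ℝ W : ℝ) ≤ t := by exact_mod_cast hfin
    nlinarith [sq_nonneg ‖y‖]

lemma core_dict {n : ℕ} (t d : ℕ) (ht : 1 ≤ t) {E : Type*} [NormedAddCommGroup E]
    [InnerProductSpace ℝ E]
    (φ : (Fin n → ℝ) →ₗ[ℝ] E) (l L : ℝ) (hl : 0 < l) (hlL : l ≤ L)
    (hup : ∀ z, ‖φ z‖ ^ 2 ≤ L * ∑ i, z i ^ 2)
    (V : Submodule ℝ (Fin n → ℝ)) (hV : Module.finrank ℝ V ≤ d)
    (hlow : ∀ w, ∃ x ∈ V, l * ∑ i, (w i - x i) ^ 2 ≤ ‖φ w‖ ^ 2) :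
    ∃ (N : ℕ) (D : Fin N → Fin n → ℝ), N ≤ ((t + 1) * (2 * t * d)) ^ t * t + n ∧
      ∀ v : Fin n → ℝ, SparseVec t v → 0 < ‖φ v‖ →
        ∃ i, 0 < ‖φ (D i)‖ ∧ (1 / (7 * √t)) * √(l / L) * (‖φ v‖ * ‖φ (D i)‖)
          ≤ |inner ℝ (φ v) (φ (D i))| := by
  classical
  obtain ⟨S, hScard, hS⟩ := peeling t d V hV
  choose b hb using span_dict t φ
  let ι := ((Fin t → S) × Fin t) ⊕ Fin n
  let D : ι → Fin n → ℝ := Sum.elim (fun p => b (fun k => (p.1 k : Fin n)) p.2)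
    (fun i => Pi.single i 1)
  suffices hD : ∀ v : Fin n → ℝ, SparseVec t v → 0 < ‖φ v‖ →
        ∃ i, 0 < ‖φ (D i)‖ ∧ (1 / (7 * √t)) * √(l / L) * (‖φ v‖ * ‖φ (D i)‖)
          ≤ |inner ℝ (φ v) (φ (D i))| by
    refine ⟨Fintype.card ι, D ∘ (Fintype.equivFin ι).symm, ?_, ?_⟩
    · simp only [ι, Fintype.card_sum, Fintype.card_prod, Fintype.card_fun, Fintype.card_fin,
        Fintype.card_coe]
      gcongr
    · intro v hv hv0
      obtain ⟨i, hi⟩ := hD v hv hv0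
      exact ⟨Fintype.equivFin ι i, by simpa using hi⟩
  intro v hv hv0
  have hL : 0 < L := hl.trans_le hlL
  have htR : (0 : ℝ) < t := by exact_mod_cast ht
  have hst : 0 < √(t : ℝ) := Real.sqrt_pos.2 htR
  have hsl : 0 < √l := Real.sqrt_pos.2 hl
  have hsL : 0 < √L := Real.sqrt_pos.2 hL
  have hslL : √l ≤ √L := Real.sqrt_le_sqrt hlL
  rw [Real.sqrt_div hl.le]
  by_contra! hcon
  set U : Finset (Fin n) := Finset.univ.filter (fun i => v i ≠ 0) with hU
  have hUc : U.card ≤ t := by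
    have : {i | v i ≠ 0} = (U : Set (Fin n)) := by ext i; simp [hU]
    rw [SparseVec, this, Set.ncard_coe_finset] at hv
    exact hv
  -- the projection step
  have hproj : ∃ u : Fin n → ℝ, (∀ i ∉ U ∩ S, u i = 0) ∧
      (∀ z : Fin n → ℝ, (∀ i ∉ U ∩ S, z i = 0) → inner ℝ (φ (v - u)) (φ z) = 0) ∧
      ‖φ u‖ ≤ √l / (7 * √L) * ‖φ v‖ := by
    rcases (U ∩ S).eq_empty_or_nonempty with he | hne
    · refine ⟨0, by simp, ?_, ?_⟩
      · intro z hz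
        have : z = 0 := by ext i; exact hz i (by simp [he])
        simp [this]
      · simp only [map_zero, norm_zero]; positivity
    · have hf : ∃ f : Fin t → Fin n, Set.range f = ((U ∩ S : Finset (Fin n)) : Set (Fin n)) := by
        have hc : (U ∩ S).card ≤ t := (Finset.card_le_card Finset.inter_subset_left).trans hUc
        obtain ⟨a, ha⟩ := hne
        let e := (U ∩ S).equivFin.symm
        refine ⟨fun k => if h : k.1 < (U ∩ S).card then (e ⟨k.1, h⟩ : Fin n) else a, ?_⟩
        ext i
        constructor
        · rintro ⟨k, rfl⟩
          by_cases h : k.1 < (U ∩ S).card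
          · simp only [h, dif_pos]; exact (e ⟨k.1, h⟩).2
          · simp only [h, dif_neg, not_false_eq_true]; exact ha
        · intro hi
          refine ⟨⟨(e.symm ⟨i, hi⟩).1, (e.symm ⟨i, hi⟩).2.trans_le hc⟩, ?_⟩
          simp
      obtain ⟨f, hf⟩ := hf
      have hfS : ∀ k, f k ∈ S := by
        intro k
        have : f k ∈ ((U ∩ S : Finset (Fin n)) : Set (Fin n)) := hf ▸ ⟨k, rfl⟩
        exact (Finset.mem_inter.1 (Finset.mem_coe.1 this)).2
      obtain ⟨u, hu1, hu2, hu3⟩ := hb f v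
      rw [hf] at hu1 hu2
      refine ⟨u, fun i hi => hu1 i (by simpa using hi), fun z hz => hu2 z (fun i hi => hz i (by simpa using hi)), ?_⟩
      by_contra! hgt
      have hpos : 0 < ‖φ u‖ := lt_of_le_of_lt (by positivity) hgt
      obtain ⟨j, hj1, hj2⟩ := hu3 hpos.ne'
      have h := hcon (Sum.inl (fun k => ⟨f k, hfS k⟩, j))
      simp only [D, Sum.elim_inl] at h
      have h2 := h (by rw [hj1]; norm_num)
      rw [hj1, mul_one] at h2
      have h3 : √t * |inner ℝ (φ v) (φ (b f j))| < √t * (1 / (7 * √↑t) * (√l / √L) * ‖φ v‖) := by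
        gcongr
      have h4 : √t * (1 / (7 * √↑t) * (√l / √L) * ‖φ v‖) = √l / (7 * √L) * ‖φ v‖ := by
        field_simp
      linarith
  obtain ⟨u, hu1, hu2, hu3⟩ := hproj
  -- coordinates correlate weakly
  have hM : ∀ i, |inner ℝ (φ v) (φ (Pi.single i 1))| ≤ √l / (7 * √t) * ‖φ v‖ := by
    intro i
    have he : ‖φ (Pi.single i 1)‖ ≤ √L := by
      apply Real.le_sqrt_of_sq_le
      have := hup (Pi.single i 1)
      have h1 : ∑ j, (Pi.single i (1 : ℝ) : Fin n → ℝ) j ^ 2 = 1 := by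
        rw [Finset.sum_eq_single i]
        · simp
        · intro j _ hj; simp [hj]
        · simp
      rwa [h1, mul_one] at this
    rcases (norm_nonneg (φ (Pi.single i 1))).eq_or_lt with h0 | h0
    · have : φ (Pi.single i 1) = 0 := norm_eq_zero.1 h0.symm
      rw [this, inner_zero_right, abs_zero]; positivity
    · have h := (hcon (Sum.inr i) h0).le
      simp only [D, Sum.elim_inr] at h
      refine h.trans ?_
      calc 1 / (7 * √↑t) * (√l / √L) * (‖φ v‖ * ‖φ (Pi.single i 1)‖)
          ≤ 1 / (7 * √↑t) * (√l / √L) * (‖φ v‖ * √L) := by gcongr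
        _ = √l / (7 * √t) * ‖φ v‖ := by field_simp
  set w := v - u with hw
  set z : Fin n → ℝ := fun i => if i ∈ S then 0 else v i with hz
  have hzz : ∑ i, z i ^ 2 = ∑ i ∈ Sᶜ, w i ^ 2 := by
    rw [← Finset.sum_subset (Finset.subset_univ Sᶜ)]
    · apply Finset.sum_congr rfl
      intro i hi
      have hi' := Finset.mem_compl.1 hi
      have : u i = 0 := hu1 i (fun h => hi' (Finset.mem_inter.1 h).2)
      simp [hz, hw, hi', this]
    · intro i _ hi
      have : i ∈ S := by simpa using hi
      simp [hz, this]
  set Z := √(∑ i, z i ^ 2) with hZ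
  have hZ0 : 0 ≤ Z := Real.sqrt_nonneg _
  have hZ2 : Z ^ 2 = ∑ i, z i ^ 2 := Real.sq_sqrt (Finset.sum_nonneg fun i _ => sq_nonneg _)
  have hZw : √l * Z ≤ 2 * ‖φ w‖ := by
    obtain ⟨x, hx, hxl⟩ := hlow w
    have h := hS U hUc w (by
      intro i hi
      have h1 : v i = 0 := by simpa [hU] using hi
      have h2 : u i = 0 := hu1 i (fun h => hi (Finset.mem_inter.1 h).1)
      simp [hw, h1, h2]) x hx
    apply le_of_sq_le_sq_aux ?_ (by positivity)
    rw [mul_pow, mul_pow, Real.sq_sqrt hl.le, hZ2, hzz]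
    nlinarith
  have hinner : ‖φ w‖ ^ 2 = inner ℝ (φ v) (φ z) - inner ℝ (φ u) (φ z) := by
    have h1 : inner ℝ (φ w) (φ (w - z)) = 0 := by
      apply hu2
      intro i hi
      rw [Finset.mem_inter, not_and] at hi
      have h2 : u i = 0 := hu1 i (fun h => hi (Finset.mem_inter.1 h).1 (Finset.mem_inter.1 h).2)
      by_cases hiS : i ∈ S
      · have h1 : v i = 0 := by
          by_contra h; exact hi (by simpa [hU] using h) hiS
        simp [hw, hz, hiS, h1, h2]
      · simp [hw, hz, hiS, h2]
    rw [map_sub φ w z, inner_sub_right, real_inner_self_eq_norm_sq] at h1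
    rw [← inner_sub_left, ← map_sub]
    linarith
  have hvz : inner ℝ (φ v) (φ z) ≤ √l / 7 * ‖φ v‖ * Z := by
    have hz' : z = ∑ i, z i • (Pi.single i 1 : Fin n → ℝ) := pi_eq_sum_univ' z
    have hl1 : ∑ i, |z i| ≤ √t * Z := by
      apply le_of_sq_le_sq_aux ?_ (by positivity)
      rw [mul_pow, Real.sq_sqrt htR.le, hZ2]
      have e1 : ∑ i, |z i| = ∑ i ∈ U, |z i| := by
        symm
        apply Finset.sum_subset (Finset.subset_univ _)
        intro i _ hi
        have h1 : v i = 0 := by simpa [hU] using hi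
        simp [hz, h1]
      have e2 : ∑ i ∈ U, |z i| ^ 2 ≤ ∑ i, z i ^ 2 := by
        simp only [sq_abs]
        apply Finset.sum_le_sum_of_subset_of_nonneg (Finset.subset_univ _)
        intro i _ _; positivity
      rw [e1]
      calc (∑ i ∈ U, |z i|) ^ 2 ≤ U.card * ∑ i ∈ U, |z i| ^ 2 := sq_sum_le_card_mul_sum_sq
        _ ≤ t * ∑ i, z i ^ 2 := by
          gcongr
    calc inner ℝ (φ v) (φ z) = ∑ i, z i * inner ℝ (φ v) (φ (Pi.single i 1)) := by
          conv_lhs => rw [hz']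
          rw [map_sum, inner_sum]
          simp [inner_smul_right]
      _ ≤ ∑ i, |z i| * (√l / (7 * √t) * ‖φ v‖) := by
          apply Finset.sum_le_sum
          intro i _
          refine (le_abs_self _).trans ?_
          rw [abs_mul]
          exact mul_le_mul_of_nonneg_left (hM i) (abs_nonneg _)
      _ = (∑ i, |z i|) * (√l / (7 * √t) * ‖φ v‖) := by rw [Finset.sum_mul]
      _ ≤ (√t * Z) * (√l / (7 * √t) * ‖φ v‖) := by gcongr
      _ = _ := by field_simp
  have huz : - inner ℝ (φ u) (φ z) ≤ √l / 7 * ‖φ v‖ * Z := by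
    have h1 : ‖φ z‖ ≤ √L * Z := by
      apply le_of_sq_le_sq_aux ?_ (by positivity)
      rw [mul_pow, Real.sq_sqrt hL.le, hZ2]
      exact hup z
    calc - inner ℝ (φ u) (φ z) ≤ |inner ℝ (φ u) (φ z)| := neg_le_abs _
      _ ≤ ‖φ u‖ * ‖φ z‖ := abs_real_inner_le_norm _ _
      _ ≤ (√l / (7 * √L) * ‖φ v‖) * (√L * Z) := by gcongr
      _ = _ := by field_simp
  have hu7 : ‖φ u‖ ≤ ‖φ v‖ / 7 := by
    refine hu3.trans ?_
    have : √l / (7 * √L) ≤ 1 / 7 := by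
      rw [div_le_div_iff₀ (by positivity) (by norm_num)]; linarith
    calc _ ≤ 1 / 7 * ‖φ v‖ := by gcongr
      _ = _ := by ring
  have htri : ‖φ v‖ ≤ ‖φ w‖ + ‖φ u‖ := by
    have : φ v = φ w + φ u := by rw [← map_add]; simp [hw]
    rw [this]; exact norm_add_le _ _
  have hfin : ‖φ w‖ ^ 2 ≤ 4 / 7 * ‖φ v‖ * ‖φ w‖ := by
    have : ‖φ v‖ * (√l * Z) ≤ ‖φ v‖ * (2 * ‖φ w‖) := by gcongr
    nlinarith
  nlinarith

lemma spectral_map {n : ℕ} (A : Matrix (Fin n) (Fin n) ℝ) (hA : A.PosSemidef) :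
    ∃ φ : (Fin n → ℝ) →ₗ[ℝ] EuclideanSpace ℝ (Fin n),
      (∀ x y, innerSigma A x y = inner ℝ (φ x) (φ y)) ∧
      ∀ x, ‖φ x‖ ^ 2 = ∑ i, hA.1.eigenvalues i *
        (hA.1.eigenvectorBasis.repr (WithLp.toLp 2 x) i) ^ 2 := by
  set q := hA.1.eigenvectorBasis with hq
  set μ := hA.1.eigenvalues with hμ
  have hμ0 : ∀ i, 0 ≤ μ i := hA.eigenvalues_nonneg
  let φ : (Fin n → ℝ) →ₗ[ℝ] EuclideanSpace ℝ (Fin n) :=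
    { toFun := fun x => WithLp.toLp 2 (fun i => √(μ i) * q.repr (WithLp.toLp 2 x) i)
      map_add' := by intro x y; ext i; simp [mul_add]
      map_smul' := by intro c x; ext i; simp; ring }
  have hφ : ∀ x i, φ x i = √(μ i) * q.repr (WithLp.toLp 2 x) i := fun x i => rfl
  refine ⟨φ, ?_, ?_⟩
  · intro x y
    have hy : y = ∑ i, q.repr (WithLp.toLp 2 y) i • (q i).ofLp := by
      have h := congrArg WithLp.ofLp (q.sum_repr (WithLp.toLp 2 y))
      rw [WithLp.ofLp_sum] at h
      simpa using h.symm
    have hx : ∀ i, x ⬝ᵥ (q i).ofLp = q.repr (WithLp.toLp 2 x) i := by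
      intro i
      rw [q.repr_apply_apply, EuclideanSpace.inner_eq_star_dotProduct]
      simp
    rw [innerSigma]
    conv_lhs => rw [hy]
    rw [Matrix.mulVec_sum, dotProduct_sum, PiLp.inner_apply]
    apply Finset.sum_congr rfl
    intro i _
    rw [Matrix.mulVec_smul, hA.1.mulVec_eigenvectorBasis, dotProduct_smul, dotProduct_smul,
      ← hq, hx, hφ, hφ]
    simp only [smul_eq_mul, RCLike.inner_apply, conj_trivial]
    have := Real.mul_self_sqrt (hμ0 i)
    rw [← hμ]
    linear_combination (-(q.repr (WithLp.toLp 2 x) i * q.repr (WithLp.toLp 2 y) i)) * this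
  · intro x
    rw [EuclideanSpace.real_norm_sq_eq]
    apply Finset.sum_congr rfl
    intro i _
    rw [hφ, mul_pow, Real.sq_sqrt (hμ0 i)]

lemma repr_sq {n : ℕ} (q : OrthonormalBasis (Fin n) ℝ (EuclideanSpace ℝ (Fin n)))
    (x : Fin n → ℝ) : ∑ i, (q.repr (WithLp.toLp 2 x) i) ^ 2 = ∑ i, x i ^ 2 := by
  rw [← EuclideanSpace.real_norm_sq_eq, q.repr.norm_map, EuclideanSpace.real_norm_sq_eq]

lemma low_space {n : ℕ} (d : ℕ) (q : OrthonormalBasis (Fin n) ℝ (EuclideanSpace ℝ (Fin n)))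
    (μ lam : Fin n → ℝ) (hμ : ∀ i, 0 ≤ μ i) (hd : d < n) (hmono : Monotone lam)
    (g : Fin n ≃ Fin n) (hg : lam = μ ∘ g) :
    ∃ V : Submodule ℝ (Fin n → ℝ), Module.finrank ℝ V ≤ d ∧
      ∀ w, ∃ x ∈ V, lam ⟨d, hd⟩ * ∑ i, (w i - x i) ^ 2 ≤
        ∑ i, μ i * (q.repr (WithLp.toLp 2 w) i) ^ 2 := by
  classical
  let f : Fin d → Fin n := fun k => g ⟨k.1, k.2.trans hd⟩
  refine ⟨Submodule.span ℝ (Set.range (fun k => (q (f k)).ofLp)), ?_, ?_⟩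
  · have := finrank_range_le_card (R := ℝ) (fun k => (q (f k)).ofLp)
    rw [Fintype.card_fin] at this
    exact this
  intro w
  set c := q.repr (WithLp.toLp 2 w) with hc
  let x : EuclideanSpace ℝ (Fin n) :=
    q.repr.symm (WithLp.toLp 2 (fun i => if (g.symm i).1 < d then c i else 0))
  have hxr : ∀ i, q.repr x i = if (g.symm i).1 < d then c i else 0 := by
    intro i; simp [x]
  refine ⟨x.ofLp, ?_, ?_⟩
  · have h := congrArg WithLp.ofLp (q.sum_repr x)
    rw [← h, WithLp.ofLp_sum]
    apply Submodule.sum_mem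
    intro i _
    rw [hxr]
    split_ifs with hi
    · rw [WithLp.ofLp_smul]
      refine Submodule.smul_mem _ _ (Submodule.subset_span ⟨⟨_, hi⟩, ?_⟩)
      simp [f]
    · simp
  · have h1 := repr_sq q (fun i => w i - x i)
    have h2 : WithLp.toLp 2 (fun i => w i - x i) = WithLp.toLp 2 w - x := by ext i; simp
    rw [h2] at h1
    rw [← h1, Finset.mul_sum]
    apply Finset.sum_le_sum
    intro i _
    have h3 : q.repr (WithLp.toLp 2 w - x) i = c i - q.repr x i := by
      rw [map_sub]; simp [hc]
    rw [h3, hxr]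
    split_ifs with hi
    · have := hμ i
      have h6 : 0 ≤ μ i * c i ^ 2 := by positivity
      simpa using h6
    · have h4 : lam ⟨d, hd⟩ ≤ lam (g.symm i) := hmono (by
        rw [Fin.le_def]; simpa using hi)
      have h5 : lam (g.symm i) = μ i := by rw [hg]; simp
      rw [sub_zero]
      rw [h5] at h4
      gcongr

/-- covering number bound for Σ with few small eigenvalues. `lam` enumerates
the eigenvalues of Σ in nondecreasing order. -/
theorem stmt6 (n t d : ℕ) (ht : 1 ≤ t) (hd : d + 1 ≤ n)
    (A : Matrix (Fin n) (Fin n) ℝ) (hA : A.PosSemidef)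
    (lam : Fin n → ℝ) (hmono : Monotone lam)
    (g : Fin n ≃ Fin n) (hg : lam = hA.1.eigenvalues ∘ g)
    (hpos : 0 < lam ⟨n - 1, by omega⟩) :
    coveringNumber t
        ((1 / (7 * Real.sqrt t)) * Real.sqrt (lam ⟨d, by omega⟩ / lam ⟨n - 1, by omega⟩)) A
      ≤ ((t * (7 * t) ^ (2 * t ^ 2 + t) * d ^ t + n : ℕ) : ℝ≥0∞) := by
  have hd' : d < n := hd
  obtain ⟨φ, hφ, hφ2⟩ := spectral_map A hA
  set μ := hA.1.eigenvalues with hμ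
  have hμ0 : ∀ i, 0 ≤ μ i := hA.eigenvalues_nonneg
  set l := lam ⟨d, by omega⟩ with hl
  set L := lam ⟨n - 1, by omega⟩ with hL
  have hl0 : 0 ≤ l := by rw [hl, hg]; exact hμ0 _
  have hlL : l ≤ L := hmono (by rw [Fin.le_def]; simp; omega)
  have hμL : ∀ i, μ i ≤ L := by
    intro i
    have h : lam (g.symm i) ≤ L := hmono (by rw [Fin.le_def]; have := (g.symm i).2; simp; omega)
    have h5 : lam (g.symm i) = μ i := by rw [hg]; simp
    linarith
  have hnorm : ∀ x, normSigma A x = ‖φ x‖ := by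
    intro x
    rw [normSigma, hφ, real_inner_self_eq_norm_sq, Real.sqrt_sq (norm_nonneg _)]
  have hup : ∀ z, ‖φ z‖ ^ 2 ≤ L * ∑ i, z i ^ 2 := by
    intro z
    rw [hφ2, ← repr_sq hA.1.eigenvectorBasis, Finset.mul_sum]
    apply Finset.sum_le_sum
    intro i _
    have := hμL i
    gcongr
  have key : ∃ (N : ℕ) (D : Fin N → Fin n → ℝ), N ≤ ((t + 1) * (2 * t * d)) ^ t * t + n ∧
      ∀ v : Fin n → ℝ, SparseVec t v → 0 < ‖φ v‖ →
        ∃ i, 0 < ‖φ (D i)‖ ∧ (1 / (7 * √t)) * √(l / L) * (‖φ v‖ * ‖φ (D i)‖)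
          ≤ |inner ℝ (φ v) (φ (D i))| := by
    rcases hl0.eq_or_lt with h0 | h0
    · refine ⟨n, fun i => Pi.single i 1, Nat.le_add_left _ _, ?_⟩
      intro v _ hv
      rw [← h0]
      simp only [zero_div, Real.sqrt_zero, mul_zero, zero_mul, abs_nonneg, and_true]
      by_contra! hcon
      have hv' : v = ∑ i, v i • (Pi.single i 1 : Fin n → ℝ) := pi_eq_sum_univ' v
      have : φ v = 0 := by
        rw [hv', map_sum]
        apply Finset.sum_eq_zero
        intro i _
        rw [map_smul, norm_le_zero_iff.1 (hcon i), smul_zero]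
      rw [this, norm_zero] at hv
      exact lt_irrefl _ hv
    · obtain ⟨V, hV, hlow⟩ := low_space d hA.1.eigenvectorBasis μ lam hμ0 hd' hmono g hg
      refine core_dict t d ht φ l L h0 hlL hup V hV ?_
      intro w
      obtain ⟨x, hx, h⟩ := hlow w
      exact ⟨x, hx, by rw [hφ2]; exact h⟩
  obtain ⟨N, D, hN, hD⟩ := key
  have hN2 : N ≤ t * (7 * t) ^ (2 * t ^ 2 + t) * d ^ t + n := by
    refine hN.trans (Nat.add_le_add_right ?_ n)
    have h1 : (t + 1) * (2 * t) ≤ (7 * t) ^ (2 * t + 1) := by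
      calc (t + 1) * (2 * t) ≤ (7 * t) ^ 2 := by nlinarith
        _ ≤ (7 * t) ^ (2 * t + 1) := Nat.pow_le_pow_right (by omega) (by omega)
    calc ((t + 1) * (2 * t * d)) ^ t * t = ((t + 1) * (2 * t)) ^ t * d ^ t * t := by
          rw [← mul_pow]; ring
      _ ≤ ((7 * t) ^ (2 * t + 1)) ^ t * d ^ t * t := by gcongr
      _ = t * (7 * t) ^ (2 * t ^ 2 + t) * d ^ t := by
          rw [← pow_mul]
          have : (2 * t + 1) * t = 2 * t ^ 2 + t := by ring
          rw [this]; ring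
  refine le_trans (sInf_le ⟨N, D, ?_, rfl⟩) (by exact_mod_cast hN2)
  intro v hv hv0
  rw [hnorm] at hv0
  obtain ⟨i, hi1, hi2⟩ := hD v hv hv0
  refine ⟨i, ?_, ?_⟩
  · rw [hnorm]; exact hi1
  · rw [hnorm, hnorm, hφ]; exact hi2
end
end

section
/- Let n, t, d ∈ ℕ with t ≥ 1 and d ≤ n − 1, and let Σ be an n×n positive semidefinite real matrix with eigenvalues λ₁ ≤ … ≤ λₙ and λ_{d+1} > 0. Then Σ has a (t, 7·√t·√(λₙ/λ_{d+1}))-ℓ1-representation of size at most n + t·(7t)^{2t²+t}·dᵗ. -/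
open Matrix MeasureTheory ProbabilityTheory
open scoped BigOperators ENNReal

noncomputable section

namespace Peel

/-- zero out the coordinates in `S` -/
def R {n : ℕ} (S : Finset (Fin n)) : EuclideanSpace ℝ (Fin n) →ₗ[ℝ] EuclideanSpace ℝ (Fin n) where
  toFun x := WithLp.toLp 2 (fun i => if i ∈ S then 0 else x i)
  map_add' x y := by ext i; by_cases h : i ∈ S <;> simp [h]
  map_smul' c x := by ext i; by_cases h : i ∈ S <;> simp [h]

lemma R_apply {n : ℕ} (S : Finset (Fin n)) (x : EuclideanSpace ℝ (Fin n)) (i : Fin n) :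
    R S x i = if i ∈ S then 0 else x i := rfl

lemma norm_R_le_of_subset {n : ℕ} {S T : Finset (Fin n)} (h : S ⊆ T)
    (x : EuclideanSpace ℝ (Fin n)) : ‖R T x‖ ≤ ‖R S x‖ := by
  rw [EuclideanSpace.norm_eq, EuclideanSpace.norm_eq]
  apply Real.sqrt_le_sqrt
  apply Finset.sum_le_sum
  intro i _
  rw [R_apply, R_apply]
  by_cases h1 : i ∈ S
  · simp [h1, h h1]
  · by_cases h2 : i ∈ T
    · simp [h1, h2]
      positivity
    · simp [h1, h2]

lemma norm_R_le {n : ℕ} (S : Finset (Fin n))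
    (x : EuclideanSpace ℝ (Fin n)) : ‖R S x‖ ≤ ‖x‖ := by
  have h := norm_R_le_of_subset (Finset.empty_subset S) x
  have : R ∅ x = x := by ext i; simp [R_apply]
  rwa [this] at h

/-- total projection mass is the dimension -/
lemma sum_proj {n : ℕ} (W : Submodule ℝ (EuclideanSpace ℝ (Fin n))) :
    ∑ i, ‖W.starProjection (EuclideanSpace.single i (1:ℝ))‖ ^ 2 = Module.finrank ℝ W := by
  let b := stdOrthonormalBasis ℝ W
  have h1 : ∀ i, ‖W.starProjection (EuclideanSpace.single i (1:ℝ))‖ ^ 2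
      = ∑ j, ((b j : EuclideanSpace ℝ (Fin n)) i) ^ 2 := by
    intro i
    have : ‖W.starProjection (EuclideanSpace.single i (1:ℝ))‖
        = ‖W.orthogonalProjectionOnto (EuclideanSpace.single i (1:ℝ))‖ := rfl
    rw [this, ← b.sum_sq_norm_inner_right]
    apply Finset.sum_congr rfl
    intro j _
    rw [Submodule.inner_orthogonalProjectionOnto_eq_of_mem_left, EuclideanSpace.inner_single_right]
    simp
  simp_rw [h1]
  rw [Finset.sum_comm]
  have h2 : ∀ j, ∑ i, ((b j : EuclideanSpace ℝ (Fin n)) i) ^ 2 = 1 := by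
    intro j
    rw [← EuclideanSpace.real_norm_sq_eq]
    have : ‖(b j : EuclideanSpace ℝ (Fin n))‖ = 1 := b.norm_eq_one j
    rw [this]; norm_num
  simp [h2]

lemma one_step {n : ℕ} (t d : ℕ) (ht : 1 ≤ t) (W : Submodule ℝ (EuclideanSpace ℝ (Fin n)))
    (hW : Module.finrank ℝ W ≤ d) :
    ∃ B : Finset (Fin n), 4 * B.card ≤ 9 * t * d ∧
      ∀ y : EuclideanSpace ℝ (Fin n), (Finset.univ.filter (fun i => y i ≠ 0)).card ≤ t →
        (∀ i ∈ B, y i = 0) → ∀ u ∈ W, ‖y‖ ≤ 3 * ‖y - u‖ := by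
  have ht0 : (0:ℝ) < t := by exact_mod_cast ht
  let p : Fin n → ℝ := fun i => ‖W.starProjection (EuclideanSpace.single i (1:ℝ))‖
  refine ⟨Finset.univ.filter (fun i => 4 ≤ 9 * t * (p i)^2), ?_, ?_⟩
  · set B := Finset.univ.filter (fun i => 4 ≤ 9 * (t:ℝ) * (p i)^2)
    have h1 : (4:ℝ) * B.card ≤ 9 * t * ∑ i, (p i)^2 := by
      calc (4:ℝ) * B.card = ∑ i ∈ B, 4 := by simp [mul_comm]
        _ ≤ ∑ i ∈ B, 9 * (t:ℝ) * (p i)^2 := Finset.sum_le_sum (fun i hi => by simpa [B] using hi)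
        _ ≤ ∑ i, 9 * (t:ℝ) * (p i)^2 :=
          Finset.sum_le_sum_of_subset_of_nonneg (Finset.subset_univ _) (fun i _ _ => by positivity)
        _ = _ := by rw [Finset.mul_sum]
    have h2 : ∑ i, (p i)^2 = Module.finrank ℝ W := sum_proj W
    rw [h2] at h1
    have h3 : (Module.finrank ℝ W : ℝ) ≤ d := by exact_mod_cast hW
    have h4 : (4:ℝ) * B.card ≤ 9 * t * d := h1.trans (by gcongr)
    exact_mod_cast h4
  · intro y hy hB u hu
    set F := Finset.univ.filter (fun i => y i ≠ 0) with hF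
    have hyF : y = ∑ i ∈ F, y i • EuclideanSpace.single i (1:ℝ) := by
      ext j
      simp [F, Finset.sum_apply, Pi.single_apply]
      
    have hP : ‖W.starProjection y‖ ≤ ∑ i ∈ F, |y i| * p i := by
      conv_lhs => rw [hyF]
      rw [map_sum]
      refine (norm_sum_le _ _).trans (Finset.sum_le_sum fun i _ => ?_)
      rw [map_smul, norm_smul, Real.norm_eq_abs]
    have hp : ∀ i ∈ F, 9 * t * (p i)^2 ≤ 4 := by
      intro i hi
      by_contra hc
      have := hB i (by simp; linarith)
      simp [F] at hi
      exact hi this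
    have hns : ∑ i ∈ F, |y i|^2 ≤ ‖y‖^2 := by
      rw [EuclideanSpace.real_norm_sq_eq]
      simp only [sq_abs]
      exact Finset.sum_le_sum_of_subset_of_nonneg (Finset.subset_univ _) (fun i _ _ => by positivity)
    have hps : 9 * t * ∑ i ∈ F, (p i)^2 ≤ 4 * t := by
      rw [Finset.mul_sum]
      calc _ ≤ ∑ i ∈ F, (4:ℝ) := Finset.sum_le_sum hp
        _ = 4 * F.card := by simp [mul_comm]
        _ ≤ 4 * t := by gcongr
    have hps' : ∑ i ∈ F, (p i)^2 ≤ 4/9 := by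
      have : (t:ℝ) * (9 * ∑ i ∈ F, (p i)^2) ≤ t * 4 := by linarith
      have := le_of_mul_le_mul_left this ht0
      linarith
    have hcs := Finset.sum_mul_sq_le_sq_mul_sq F (fun i => |y i|) p
    have hP2 : ‖W.starProjection y‖ ≤ 2/3 * ‖y‖ := by
      apply hP.trans
      apply abs_le_of_sq_le_sq' _ (by positivity) |>.2
      calc _ ≤ _ := hcs
        _ ≤ ‖y‖^2 * (4/9) := by
            apply mul_le_mul hns hps' (Finset.sum_nonneg fun i _ => by positivity) (by positivity)
        _ = _ := by ring
    have hmin : ‖y - W.starProjection y‖ ≤ ‖y - u‖ := by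
      rw [Submodule.starProjection_minimal]
      exact ciInf_le ⟨0, by rintro _ ⟨x, rfl⟩; positivity⟩ (⟨u, hu⟩ : W)
    have := norm_le_norm_sub_add y (W.starProjection y)
    linarith

lemma peel {n : ℕ} (t d : ℕ) (ht : 1 ≤ t) (V : Submodule ℝ (EuclideanSpace ℝ (Fin n)))
    (hV : Module.finrank ℝ V ≤ d) (k : ℕ) :
    ∃ S : Finset (Fin n), 4 * S.card ≤ k * (9 * t * d) ∧
      ∀ v : EuclideanSpace ℝ (Fin n), (Finset.univ.filter (fun i => v i ≠ 0)).card ≤ t →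
        (∀ u ∈ V, ‖R S v‖ ≤ 3 * ‖v - u‖) ∨ k ≤ (S.filter (fun i => v i ≠ 0)).card := by
  induction k with
  | zero => exact ⟨∅, by simp, fun v _ => Or.inr (by simp)⟩
  | succ k ih =>
    obtain ⟨S, hS, h⟩ := ih
    obtain ⟨B, hB, hb⟩ := one_step t d ht (V.map (R S)) ((Submodule.finrank_map_le _ _).trans hV)
    refine ⟨S ∪ (B \ S), ?_, ?_⟩
    · have := Finset.card_union_le S (B \ S)
      have h2 : (B \ S).card ≤ B.card := Finset.card_le_card Finset.sdiff_subset
      have : (k+1) * (9*t*d) = k * (9*t*d) + 9*t*d := by ring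
      omega
    · intro v hv
      have hmono := norm_R_le_of_subset (Finset.subset_union_left (s₁ := S) (s₂ := B \ S)) v
      rcases h v hv with h | h
      · exact Or.inl fun u hu => hmono.trans (h u hu)
      by_cases hz : ∀ i ∈ B \ S, v i = 0
      · left
        intro u hu
        refine hmono.trans ?_
        have := hb (R S v) ?_ ?_ (R S u) (Submodule.mem_map_of_mem hu)
        · refine this.trans ?_
          rw [← map_sub]
          have := norm_R_le S (v - u)
          linarith
        · refine le_trans (Finset.card_le_card ?_) hv
          intro i
          simp only [Finset.mem_filter, R_apply]
          grind
        · intro i hi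
          rw [R_apply]
          split_ifs with hs
          · rfl
          · exact hz i (by simp [hi, hs])
      · right
        push Not at hz
        obtain ⟨i, hi, hvi⟩ := hz
        rw [Finset.filter_union, Finset.card_union_of_disjoint]
        · have : 0 < ((B \ S).filter (fun i => v i ≠ 0)).card :=
            Finset.card_pos.2 ⟨i, by simp only [Finset.mem_filter]; exact ⟨hi, hvi⟩⟩
          omega
        · exact Finset.disjoint_filter_filter Finset.disjoint_sdiff

lemma peel_final {n : ℕ} (t d : ℕ) (ht : 1 ≤ t) (V : Submodule ℝ (EuclideanSpace ℝ (Fin n)))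
    (hV : Module.finrank ℝ V ≤ d) :
    ∃ S : Finset (Fin n), S.card ≤ (7 * t) ^ (2 * t + 1) * d ∧
      ∀ v : EuclideanSpace ℝ (Fin n), (Finset.univ.filter (fun i => v i ≠ 0)).card ≤ t →
        ∀ u ∈ V, ‖R S v‖ ≤ 3 * ‖v - u‖ := by
  obtain ⟨S, hS, h⟩ := peel t d ht V hV (t+1)
  refine ⟨S, ?_, fun v hv => ?_⟩
  · have h1 : (7*t)^2 ≤ (7*t)^(2*t+1) := Nat.pow_le_pow_right (by omega) (by omega)
    have h2 : (7*t)^2 * d ≤ (7*t)^(2*t+1) * d := Nat.mul_le_mul_right _ h1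
    have h3 : (t+1) * (9*t*d) ≤ 4 * ((7*t)^2*d) := by
      have : (t+1) * (9*t*d) = (9 * t * (t+1)) * d := by ring
      rw [this, ← mul_assoc]
      apply Nat.mul_le_mul_right
      nlinarith
    omega
  · rcases h v hv with h | h
    · exact h
    · have : (S.filter (fun i => v i ≠ 0)).card ≤ (Finset.univ.filter (fun i => v i ≠ 0)).card :=
        Finset.card_le_card (Finset.filter_subset_filter _ (Finset.subset_univ _))
      omega

/-! Spectral part -/

lemma spectral {n : ℕ} (A : Matrix (Fin n) (Fin n) ℝ) (hA : A.PosSemidef) (v : EuclideanSpace ℝ (Fin n)) :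
    innerSigma A v v = ∑ i, hA.1.eigenvalues i * (inner ℝ (hA.1.eigenvectorBasis i) v) ^ 2 := by
  set b := hA.1.eigenvectorBasis with hb
  have h1 : innerSigma A v v = inner ℝ v (WithLp.toLp 2 (A *ᵥ v)) := by
    rw [innerSigma, EuclideanSpace.inner_eq_star_dotProduct]
    simp [dotProduct_comm]
  rw [h1, ← b.sum_inner_mul_inner]
  apply Finset.sum_congr rfl
  intro i _
  have h2 : inner ℝ (b i) (WithLp.toLp 2 (A *ᵥ v)) = hA.1.eigenvalues i * inner ℝ (b i) v := by
    rw [EuclideanSpace.inner_eq_star_dotProduct, EuclideanSpace.inner_eq_star_dotProduct]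
    have h3 := hA.1.mulVec_eigenvectorBasis i
    have hs : Aᵀ = A := by simpa using hA.1.eq
    simp only [star_trivial]
    rw [dotProduct_comm, dotProduct_mulVec, ← mulVec_transpose, hs, hb, h3, smul_dotProduct,
      dotProduct_comm, smul_eq_mul]
  rw [h2, real_inner_comm]
  ring

lemma spectral_upper {n : ℕ} (A : Matrix (Fin n) (Fin n) ℝ) (hA : A.PosSemidef) (L : ℝ)
    (hL : ∀ i, hA.1.eigenvalues i ≤ L) (v : EuclideanSpace ℝ (Fin n)) :
    innerSigma A v v ≤ L * ‖v‖^2 := by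
  rw [spectral A hA, ← hA.1.eigenvectorBasis.sum_sq_norm_inner_right v, Finset.mul_sum]
  apply Finset.sum_le_sum
  intro i _
  rw [Real.norm_eq_abs, sq_abs]
  exact mul_le_mul_of_nonneg_right (hL i) (sq_nonneg _)

lemma spectral_lower {n : ℕ} (A : Matrix (Fin n) (Fin n) ℝ) (hA : A.PosSemidef) (l : ℝ)
    (G : Finset (Fin n)) (hl : ∀ i ∉ G, l ≤ hA.1.eigenvalues i) :
    ∃ V : Submodule ℝ (EuclideanSpace ℝ (Fin n)), Module.finrank ℝ V ≤ G.card ∧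
      ∀ v : EuclideanSpace ℝ (Fin n), ∃ u ∈ V, l * ‖v - u‖^2 ≤ innerSigma A v v := by
  set b := hA.1.eigenvectorBasis with hb
  classical
  refine ⟨Submodule.span ℝ ((G.image b : Finset _) : Set (EuclideanSpace ℝ (Fin n))), ?_, ?_⟩
  · exact (finrank_span_finset_le_card _).trans Finset.card_image_le
  · intro v
    refine ⟨∑ i ∈ G, inner ℝ (b i) v • b i, ?_, ?_⟩
    · refine Submodule.sum_mem _ fun i hi => Submodule.smul_mem _ _ (Submodule.subset_span ?_)
      simp only [Finset.coe_image]
      exact ⟨i, hi, rfl⟩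
    · rw [spectral A hA, ← b.sum_sq_norm_inner_right, Finset.mul_sum]
      apply Finset.sum_le_sum
      intro j _
      have hin : inner ℝ (b j) (∑ i ∈ G, inner ℝ (b i) v • b i) = if j ∈ G then inner ℝ (b j) v else 0 := by
        rw [inner_sum]
        simp [inner_smul_right, b.inner_eq_ite]
      rw [inner_sub_right, hin, Real.norm_eq_abs, sq_abs]
      split_ifs with hj
      · have := hA.eigenvalues_nonneg j
        simp
        positivity
      · rw [sub_zero]
        exact mul_le_mul_of_nonneg_right (hl j hj) (sq_nonneg _)

/-! Sigma seminorm -/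

lemma innerSigma_nonneg {n : ℕ} {A : Matrix (Fin n) (Fin n) ℝ} (hA : A.PosSemidef) (x : Fin n → ℝ) :
    0 ≤ innerSigma A x x := by
  have := hA.dotProduct_mulVec_nonneg x
  simpa [innerSigma] using this

lemma normSigma_sq {n : ℕ} {A : Matrix (Fin n) (Fin n) ℝ} (hA : A.PosSemidef) (x : Fin n → ℝ) :
    normSigma A x ^ 2 = innerSigma A x x := Real.sq_sqrt (innerSigma_nonneg hA x)

/-- Sigma-orthogonal basis -/
lemma orth {n : ℕ} {A : Matrix (Fin n) (Fin n) ℝ} (hA : A.PosSemidef) (t : ℕ)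
    (W : Submodule ℝ (Fin n → ℝ)) (hW : Module.finrank ℝ W ≤ t) :
    ∃ D : Fin t → Fin n → ℝ, ∀ v ∈ W, ∃ a : Fin t → ℝ, v = ∑ i, a i • D i ∧
      ∑ i, |a i| * normSigma A (D i) ≤ Real.sqrt t * normSigma A v := by
  let B : LinearMap.BilinForm ℝ W := (Matrix.toBilin' A).restrict W
  have hBapp : ∀ x y : W, B x y = innerSigma A x y := by
    intro x y
    simp [B, innerSigma, Matrix.toBilin'_apply']
  have hs : Aᵀ = A := by simpa using hA.1.eq
  have hsym : B.IsSymm := ⟨fun x y => by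
    simp only [hBapp, innerSigma]
    rw [dotProduct_mulVec, ← mulVec_transpose, hs, dotProduct_comm]⟩
  obtain ⟨b, hb⟩ := LinearMap.BilinForm.exists_orthogonal_basis (LinearMap.BilinForm.isSymm_iff.1 hsym)
  have hb' : ∀ i j, i ≠ j → innerSigma A (b i) (b j) = 0 := by
    intro i j hij
    rw [← hBapp]
    exact LinearMap.isOrthoᵢ_def.1 hb i j hij
  clear hb hsym hBapp
  clear B
  let D : Fin t → Fin n → ℝ := fun i => if h : i.1 < (Module.finrank ℝ W) then (b ⟨i.1, h⟩ : Fin n → ℝ) else 0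
  refine ⟨D, fun v hv => ?_⟩
  let a : Fin t → ℝ := fun i => if h : i.1 < (Module.finrank ℝ W) then b.repr ⟨v, hv⟩ ⟨i.1, h⟩ else 0
  have hsum : v = ∑ i, a i • D i := by
    have h1 := congrArg (Subtype.val) (b.sum_repr ⟨v, hv⟩)
    refine h1.symm.trans ?_
    simp only [Submodule.coe_sum, Submodule.coe_smul]
    apply Finset.sum_of_injOn (Fin.castLE hW) (fun x _ y _ h => by simpa using h) (by simp)
    · intro i _ hi
      have : ¬ i.1 < (Module.finrank ℝ W) := fun h => hi ⟨⟨i.1, h⟩, by simp, rfl⟩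
      simp [a, this]
    · intro i _
      simp [a, D]
  have horth : ∀ i j, i ≠ j → innerSigma A (D i) (D j) = 0 := by
    intro i j hij
    by_cases hi : i.1 < (Module.finrank ℝ W)
    · by_cases hj : j.1 < (Module.finrank ℝ W)
      · have hne : (⟨i.1, hi⟩ : Fin (Module.finrank ℝ W)) ≠ ⟨j.1, hj⟩ := by
          intro h; apply hij; exact Fin.ext (Fin.mk.inj h)
        have := hb' _ _ hne
        simpa only [D, hi, hj, dif_pos] using this
      · simp [D, hj, innerSigma]
    · simp [D, hi, innerSigma]
  have hpyth : normSigma A v ^ 2 = ∑ i, (|a i| * normSigma A (D i)) ^ 2 := by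
    rw [normSigma_sq hA]
    simp_rw [mul_pow, sq_abs, normSigma_sq hA]
    conv_lhs => rw [hsum]
    have : innerSigma A (∑ i, a i • D i) (∑ i, a i • D i)
        = ∑ i, ∑ j, a i * a j * innerSigma A (D i) (D j) := by
      simp only [innerSigma, mulVec_sum, sum_dotProduct, dotProduct_sum, mulVec_smul,
        smul_dotProduct, dotProduct_smul, smul_eq_mul]
      rw [Finset.sum_comm]
      simp only [Finset.mul_sum]
      exact Finset.sum_congr rfl fun i _ => Finset.sum_congr rfl fun j _ => by ring
    rw [this]
    apply Finset.sum_congr rfl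
    intro i _
    rw [Finset.sum_eq_single i]
    · ring
    · intro j _ hj
      rw [horth i j hj.symm, mul_zero]
    · simp
  refine ⟨a, hsum, ?_⟩
  have hcs := sq_sum_le_card_mul_sum_sq (s := Finset.univ) (f := fun i => |a i| * normSigma A (D i))
  rw [← hpyth] at hcs
  apply abs_le_of_sq_le_sq' _ (mul_nonneg (Real.sqrt_nonneg _) (Real.sqrt_nonneg _)) |>.2
  rw [mul_pow, Real.sq_sqrt (Nat.cast_nonneg t)]
  change _ ≤ (t : ℝ) * normSigma A v ^ 2
  simpa using hcs

end Peel
namespace Peel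
lemma normSigma_eq {n : ℕ} {A : Matrix (Fin n) (Fin n) ℝ} (hA : A.PosSemidef) :
    ∃ B : Matrix (Fin n) (Fin n) ℝ, ∀ x, normSigma A x = ‖WithLp.toLp 2 (B *ᵥ x)‖ := by
  obtain ⟨B, rfl⟩ : ∃ B : Matrix (Fin n) (Fin n) ℝ, A = Bᴴ * B := by
    open scoped MatrixOrder in
    exact CStarAlgebra.nonneg_iff_eq_star_mul_self.1 hA.nonneg
  refine ⟨B, fun x => ?_⟩
  rw [normSigma, EuclideanSpace.norm_eq, innerSigma]
  congr 1
  rw [← mulVec_mulVec, dotProduct_mulVec, conjTranspose_eq_transpose_of_trivial, vecMul_transpose]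
  simp [dotProduct, sq]

lemma normSigma_sub {n : ℕ} {A : Matrix (Fin n) (Fin n) ℝ} (hA : A.PosSemidef) (x y : Fin n → ℝ) :
    normSigma A (x - y) ≤ normSigma A x + normSigma A y := by
  obtain ⟨B, hB⟩ := normSigma_eq hA
  rw [hB, hB, hB, mulVec_sub, WithLp.toLp_sub]
  exact norm_sub_le _ _

/-- from peeling to representation -/
lemma rep {n : ℕ} (t : ℕ) (ht : 1 ≤ t) {A : Matrix (Fin n) (Fin n) ℝ} (hA : A.PosSemidef)
    (S : Finset (Fin n)) (k L : ℝ) (hk : 1 ≤ k) (hL : 0 ≤ L)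
    (hup : ∀ v : EuclideanSpace ℝ (Fin n), normSigma A v ≤ L * ‖v‖)
    (hS : ∀ v : EuclideanSpace ℝ (Fin n), (Finset.univ.filter (fun i => v i ≠ 0)).card ≤ t →
        L * ‖R S v‖ ≤ 3 * k * normSigma A v) :
    ∃ D : Fin n ⊕ ((Fin t → S) × Fin t) → Fin n → ℝ, ∀ v : Fin n → ℝ, SparseVec t v →
      ∃ a : Fin n ⊕ ((Fin t → S) × Fin t) → ℝ, v = ∑ i, a i • D i ∧
        ∑ i, |a i| * normSigma A (D i) ≤ 7 * Real.sqrt t * k * normSigma A v := by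
  have hex : ∀ f : Fin t → S, ∃ D : Fin t → Fin n → ℝ,
      ∀ v ∈ Submodule.span ℝ (Set.range fun j => (Pi.single (f j : Fin n) (1:ℝ) : Fin n → ℝ)),
      ∃ a : Fin t → ℝ, v = ∑ i, a i • D i ∧
      ∑ i, |a i| * normSigma A (D i) ≤ Real.sqrt t * normSigma A v := fun f =>
    orth hA t _ (by
      have := finrank_range_le_card (R := ℝ) (fun j => (Pi.single (f j : Fin n) (1:ℝ) : Fin n → ℝ))
      simpa [Set.finrank] using this)
  choose D hD using hex
  refine ⟨Sum.elim (fun i => Pi.single i 1) (fun p => D p.1 p.2), fun v hv => ?_⟩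
  set F := Finset.univ.filter (fun i => v i ≠ 0) with hF
  have hFc : F.card ≤ t := by
    have : {i | v i ≠ 0} = (F : Set (Fin n)) := by ext; simp [F]
    rw [SparseVec, this, Set.ncard_coe_finset] at hv
    exact hv
  set w : EuclideanSpace ℝ (Fin n) := R S (WithLp.toLp 2 v) with hw
  have hwS := hS (WithLp.toLp 2 v) hFc
  rw [← hw] at hwS
  have hnv : 0 ≤ normSigma A v := Real.sqrt_nonneg _
  have hst : 1 ≤ Real.sqrt t := by
    rw [Real.one_le_sqrt]; exact_mod_cast ht
  -- the part outside S
  have hcost1 : ∑ i, |w i| * normSigma A (Pi.single i 1) ≤ Real.sqrt t * (3 * k * normSigma A v) := by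
    have h1 : ∑ i, |w i| * normSigma A (Pi.single i 1) ≤ ∑ i, |w i| * L := by
      apply Finset.sum_le_sum
      intro i _
      apply mul_le_mul_of_nonneg_left _ (abs_nonneg _)
      have := hup (EuclideanSpace.single i 1)
      simpa using this
    have h2 : ∑ i, |w i| = ∑ i ∈ F, |w i| := by
      symm
      apply Finset.sum_subset (Finset.subset_univ _)
      intro i _ hi
      have : v i = 0 := by simpa [F] using hi
      rw [hw, R_apply]
      simp [this]
    have h3 : ∑ i ∈ F, |w i| ≤ Real.sqrt t * ‖w‖ := by
      apply abs_le_of_sq_le_sq' _ (by positivity) |>.2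
      rw [mul_pow, Real.sq_sqrt (by positivity), EuclideanSpace.real_norm_sq_eq]
      refine (sq_sum_le_card_mul_sum_sq).trans ?_
      simp only [sq_abs]
      gcongr
      exact Finset.subset_univ _
    calc _ ≤ _ := h1
      _ = (∑ i ∈ F, |w i|) * L := by rw [← h2, Finset.sum_mul]
      _ ≤ (Real.sqrt t * ‖w‖) * L := by gcongr
      _ = Real.sqrt t * (L * ‖w‖) := by ring
      _ ≤ _ := by gcongr
  have hwsum : (w : Fin n → ℝ) = ∑ i, w i • (Pi.single i 1 : Fin n → ℝ) := by
    ext j; simp [Finset.sum_apply, Pi.single_apply]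
  set z : Fin n → ℝ := v - w with hz
  have hzn : normSigma A z ≤ (1 + 3 * k) * normSigma A v := by
    have h1 := normSigma_sub hA v w
    have h2 := hup w
    have : normSigma A (WithLp.toLp 2 v).ofLp = normSigma A v := rfl
    rw [this] at hwS
    linarith
  have hz0 : ∀ i, i ∉ F ∩ S → z i = 0 := by
    intro i hi
    simp only [hz, Pi.sub_apply, hw, R_apply]
    by_cases hs : i ∈ S
    · have : v i = 0 := by
        by_contra hc
        exact hi (by simp [F, hs, hc])
      simp [hs, this]
    · simp [hs]
  have hzrep : ∃ c : (Fin t → S) × Fin t → ℝ, z = ∑ p, c p • D p.1 p.2 ∧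
      ∑ p, |c p| * normSigma A (D p.1 p.2) ≤ Real.sqrt t * normSigma A z := by
    by_cases hne : (F ∩ S).Nonempty
    · have hcard : (F ∩ S).card ≤ t := (Finset.card_le_card Finset.inter_subset_left).trans hFc
      obtain ⟨f, hf⟩ : ∃ f : Fin t → S, ∀ i ∈ F ∩ S, ∃ j, (f j : Fin n) = i := by
        obtain ⟨i0, hi0⟩ := hne
        let e := (F ∩ S).equivFin
        refine ⟨fun j => if h : j.1 < (F ∩ S).card then
          ⟨(e.symm ⟨j.1, h⟩ : Fin n), (Finset.mem_inter.1 (e.symm ⟨j.1, h⟩).2).2⟩ else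
          ⟨i0, (Finset.mem_inter.1 hi0).2⟩, ?_⟩
        intro i hi
        refine ⟨⟨(e ⟨i, hi⟩).1, (e ⟨i, hi⟩).2.trans_le hcard⟩, ?_⟩
        simp
      obtain ⟨a, ha1, ha2⟩ := hD f z (by
        have hzs : z = ∑ i ∈ F ∩ S, z i • (Pi.single i 1 : Fin n → ℝ) := by
          ext j
          simp only [Finset.sum_apply, Pi.smul_apply, Pi.single_apply, smul_eq_mul, mul_ite,
            mul_one, mul_zero, Finset.sum_ite_eq]
          split_ifs with h
          · rfl
          · exact hz0 j h
        rw [hzs]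
        refine Submodule.sum_mem _ fun i hi => Submodule.smul_mem _ _ (Submodule.subset_span ?_)
        obtain ⟨j, hj⟩ := hf i hi
        exact ⟨j, by simp [hj]⟩)
      classical
      refine ⟨fun p => if p.1 = f then a p.2 else 0, ?_, ?_⟩
      · rw [Fintype.sum_prod_type, Finset.sum_eq_single f]
        · simpa using ha1
        · intro g _ hg; simp [hg]
        · simp
      · rw [Fintype.sum_prod_type, Finset.sum_eq_single f]
        · simpa using ha2
        · intro g _ hg; simp [hg]
        · simp
    · have : z = 0 := by
        ext i
        exact hz0 i (by rw [Finset.not_nonempty_iff_eq_empty.1 hne]; simp)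
      refine ⟨0, by simp [this], ?_⟩
      simp only [Pi.zero_apply, abs_zero, zero_mul, Finset.sum_const_zero]
      exact mul_nonneg (Real.sqrt_nonneg _) (Real.sqrt_nonneg _)
  obtain ⟨c, hc1, hc2⟩ := hzrep
  refine ⟨Sum.elim (fun i => w i) c, ?_, ?_⟩
  · simp only [Fintype.sum_sum_type, Sum.elim_inl, Sum.elim_inr]
    rw [← hwsum, ← hc1, hz]
    simp
  · simp only [Fintype.sum_sum_type, Sum.elim_inl, Sum.elim_inr]
    calc _ ≤ Real.sqrt t * (3 * k * normSigma A v) + Real.sqrt t * ((1 + 3 * k) * normSigma A v) :=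
          add_le_add hcost1 (hc2.trans (by gcongr))
      _ = Real.sqrt t * (1 + 6 * k) * normSigma A v := by ring
      _ ≤ Real.sqrt t * (7 * k) * normSigma A v := by gcongr; linarith
      _ = _ := by ring

end Peel

/-- Σ has a (t, 7√t·√(λₙ/λ_{d+1}))-ℓ1-representation of size at most
n + t(7t)^{2t²+t}dᵗ. `lam` enumerates the eigenvalues of Σ in nondecreasing order. -/
theorem stmt7 (n t d : ℕ) (ht : 1 ≤ t) (hd : d + 1 ≤ n)
    (A : Matrix (Fin n) (Fin n) ℝ) (hA : A.PosSemidef)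
    (lam : Fin n → ℝ) (hmono : Monotone lam)
    (g : Fin n ≃ Fin n) (hg : lam = hA.1.eigenvalues ∘ g)
    (hpos : 0 < lam ⟨d, by omega⟩) :
    ∃ (N : ℕ) (D : Fin N → Fin n → ℝ),
      IsL1Rep t (7 * Real.sqrt t * Real.sqrt (lam ⟨n - 1, by omega⟩ / lam ⟨d, by omega⟩)) A D ∧
        N ≤ n + t * (7 * t) ^ (2 * t ^ 2 + t) * d ^ t := by
  classical
  set l := lam ⟨d, by omega⟩ with hl
  set L := lam ⟨n - 1, by omega⟩ with hL
  have hlL : l ≤ L := hmono (by simp only [Fin.mk_le_mk]; omega)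
  have hLpos : 0 < L := hpos.trans_le hlL
  have heig : ∀ i, hA.1.eigenvalues i = lam (g.symm i) := by
    intro i; rw [hg]; simp
  obtain ⟨V, hV, hVl⟩ := Peel.spectral_lower A hA l
    ((Finset.univ.filter (fun k : Fin n => k.1 < d)).image g) (by
      intro i hi
      rw [heig]
      apply hmono
      rw [Fin.le_def]
      by_contra hc
      apply hi
      rw [Finset.mem_image]
      exact ⟨g.symm i, by simpa using hc, by simp⟩)
  have hVd : Module.finrank ℝ V ≤ d := by
    refine hV.trans (Finset.card_image_le.trans ?_)
    have : (Finset.univ.filter (fun k : Fin n => k.1 < d)).card ≤ (Finset.range d).card :=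
      Finset.card_le_card_of_injOn (fun k => k.1) (fun k hk => by simpa using hk)
        (fun a _ b _ h => Fin.ext h)
    simpa using this
  obtain ⟨S, hSc, hS⟩ := Peel.peel_final t d ht V hVd
  obtain ⟨D, hD⟩ := Peel.rep t ht hA S (Real.sqrt (L / l)) (Real.sqrt L)
    (by rw [Real.one_le_sqrt, one_le_div hpos]; exact hlL) (Real.sqrt_nonneg _)
    (by
      intro v
      have h := Peel.spectral_upper A hA L (fun i => by
        rw [heig]; exact hmono (by rw [Fin.le_def]; have := (g.symm i).2; simp; omega)) v
      rw [normSigma]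
      refine (Real.sqrt_le_sqrt h).trans ?_
      rw [Real.sqrt_mul hLpos.le, Real.sqrt_sq (norm_nonneg _)])
    (by
      intro v hv
      obtain ⟨u, hu, hul⟩ := hVl v
      have h1 := hS v hv u hu
      have h2 : Real.sqrt l * ‖v - u‖ ≤ normSigma A v := by
        rw [normSigma]
        refine le_trans (le_of_eq ?_) (Real.sqrt_le_sqrt hul)
        rw [Real.sqrt_mul hpos.le, Real.sqrt_sq (norm_nonneg _)]
      have hsl : 0 < Real.sqrt l := Real.sqrt_pos.2 hpos
      have h3 : Real.sqrt L = Real.sqrt (L / l) * Real.sqrt l := by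
        rw [Real.sqrt_div hLpos.le]; field_simp
      calc Real.sqrt L * ‖Peel.R S v‖ ≤ Real.sqrt L * (3 * ‖v - u‖) := by gcongr
        _ = 3 * Real.sqrt (L / l) * (Real.sqrt l * ‖v - u‖) := by rw [h3]; ring
        _ ≤ _ := by gcongr)
  let e := Fintype.equivFin (Fin n ⊕ ((Fin t → S) × Fin t))
  refine ⟨_, fun i => D (e.symm i), fun v hv => ?_, ?_⟩
  · obtain ⟨a, ha1, ha2⟩ := hD v hv
    refine ⟨fun i => a (e.symm i), ?_, ?_⟩
    · rw [e.symm.sum_comp (fun i => a i • D i)]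
      exact ha1
    · rw [e.symm.sum_comp (fun i => |a i| * normSigma A (D i))]
      exact ha2
  · simp only [Fintype.card_sum, Fintype.card_prod, Fintype.card_fun, Fintype.card_fin,
      Fintype.card_coe]
    have h1 : S.card ^ t ≤ ((7 * t) ^ (2 * t + 1) * d) ^ t := Nat.pow_le_pow_left hSc t
    have h2 : ((7 * t) ^ (2 * t + 1) * d) ^ t = (7 * t) ^ (2 * t ^ 2 + t) * d ^ t := by
      rw [mul_pow, ← pow_mul]
      congr 2
      ring
    rw [h2] at h1
    calc n + S.card ^ t * t ≤ n + ((7 * t) ^ (2 * t ^ 2 + t) * d ^ t) * t := by gcongr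
      _ = _ := by ring
end
end

section
/- There exists a universal constant C > 0 such that the following holds. Let n, t ∈ ℕ with t ≥ 1 and let Σ be an n×n positive definite real matrix with condition number κ := λ_max(Σ)/λ_min(Σ). Then 𝒩_{t, 1/3^{t+1}}(Σ) ≤ 2^{C·t²}·κ^{2t+1}·n. -/
open Matrix MeasureTheory ProbabilityTheory
open scoped BigOperators ENNReal

noncomputable section

section helpers

variable {n : ℕ}

/-- neighbours of `i` at correlation threshold `c`. -/
def nbr (A : Matrix (Fin n) (Fin n) ℝ) (c : ℝ) (i : Fin n) : Finset (Fin n) :=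
  Finset.univ.filter fun j => c ≤ |A i j|

/-- sets grown from a single vertex by `k` neighbour insertions. -/
def grown (A : Matrix (Fin n) (Fin n) ℝ) (c : ℝ) : ℕ → Finset (Finset (Fin n))
  | 0 => Finset.univ.image fun i => {i}
  | k + 1 => (grown A c k).biUnion fun T => (T.biUnion (nbr A c)).image fun j => insert j T

theorem grown_card_mem (A : Matrix (Fin n) (Fin n) ℝ) (c : ℝ) (k : ℕ) :
    ∀ T ∈ grown A c k, T.card ≤ k + 1 := by
  induction k with
  | zero =>
    intro T hT
    simp only [grown, Finset.mem_image, Finset.mem_univ, true_and] at hT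
    obtain ⟨i, rfl⟩ := hT
    simp
  | succ k ih =>
    intro T hT
    simp only [grown, Finset.mem_biUnion, Finset.mem_image] at hT
    obtain ⟨T', hT', j, -, rfl⟩ := hT
    have := ih T' hT'
    have := Finset.card_insert_le j T'
    omega

theorem grown_card (A : Matrix (Fin n) (Fin n) ℝ) (c : ℝ) (t : ℕ) (d : ℕ)
    (hd : ∀ i, (nbr A c i).card ≤ d) (k : ℕ) (hk : k ≤ t) :
    (grown A c k).card ≤ n * ((t + 1) * d) ^ k := by
  induction k with
  | zero =>
    simpa [grown] using (Finset.card_image_le (s := (Finset.univ : Finset (Fin n)))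
      (f := fun i => ({i} : Finset (Fin n))))
  | succ k ih =>
    have ih := ih (by omega)
    rw [grown]
    have h1 : ∀ T ∈ grown A c k,
        ((T.biUnion (nbr A c)).image fun j => insert j T).card ≤ (t + 1) * d := by
      intro T hT
      refine Finset.card_image_le.trans ?_
      refine (Finset.card_biUnion_le_card_mul T _ d fun i _ => hd i).trans ?_
      have := grown_card_mem A c k T hT
      exact Nat.mul_le_mul_right _ (by omega)
    refine (Finset.card_biUnion_le_card_mul _ _ _ h1).trans ?_
    calc _ ≤ (n * ((t + 1) * d) ^ k) * ((t + 1) * d) := Nat.mul_le_mul_right _ ih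
      _ = _ := by ring

/-- correlation graph restricted to `S`. -/
def corrGraph (A : Matrix (Fin n) (Fin n) ℝ) (c : ℝ) (S : Finset (Fin n)) : SimpleGraph (Fin n) :=
  SimpleGraph.fromRel fun i j => i ∈ S ∧ j ∈ S ∧ c ≤ |A i j|

open Classical in
/-- the part of `S` in the component of `i`. -/
def cls (A : Matrix (Fin n) (Fin n) ℝ) (c : ℝ) (S : Finset (Fin n)) (i : Fin n) :
    Finset (Fin n) := S.filter fun j => (corrGraph A c S).Reachable i j

theorem cls_grown (A : Matrix (Fin n) (Fin n) ℝ) (hA : ∀ i j, A i j = A j i) (c : ℝ)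
    (hc : ∀ i, c ≤ |A i i|)
    (S : Finset (Fin n)) (t : ℕ) (hS : S.card ≤ t) (i : Fin n) (hi : i ∈ S) :
    cls A c S i ∈ grown A c t := by
  have hii : i ∈ cls A c S i := by simp [cls, hi]
  have key : ∀ k, ∃ T ∈ grown A c k, T ⊆ cls A c S i ∧ i ∈ T ∧
      (T = cls A c S i ∨ k + 1 ≤ T.card) := by
    intro k
    induction k with
    | zero => exact ⟨{i}, by simp [grown], by simpa using hii, by simp, by simp⟩
    | succ k ih =>
      obtain ⟨T, hT, hsub, hiT, h⟩ := ih
      by_cases heq : T = cls A c S i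
      · refine ⟨T, ?_, hsub, hiT, Or.inl heq⟩
        simp only [grown, Finset.mem_biUnion, Finset.mem_image]
        refine ⟨T, hT, i, ⟨i, hiT, by simp [nbr, hc]⟩, by simp [hiT]⟩
      · have hcard : k + 1 ≤ T.card := h.resolve_left heq
        obtain ⟨j, hj, hjT⟩ : ∃ j ∈ cls A c S i, j ∉ T := by
          by_contra! hcon
          exact heq (Finset.Subset.antisymm hsub hcon)
        have hr : (corrGraph A c S).Reachable i j := by
          simp only [cls, Finset.mem_filter] at hj
          exact hj.2
        obtain ⟨p⟩ := hr
        obtain ⟨d, hd, h1, h2⟩ := p.exists_boundary_dart (T : Set (Fin n))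
          (by simpa using hiT) (by simpa using hjT)
        have hadj := d.adj
        have hadj' := hadj
        simp only [corrGraph, SimpleGraph.fromRel_adj] at hadj'
        have hfs : d.snd ∈ S := by tauto
        have hle : c ≤ |A d.fst d.snd| := by
          rcases hadj'.2 with h | h
          · exact h.2.2
          · rw [hA]; exact h.2.2
        have h1' : d.fst ∈ T := by simpa using h1
        have h2' : d.snd ∉ T := by simpa using h2
        refine ⟨insert d.snd T, ?_, ?_, by simp [hiT], Or.inr ?_⟩
        · simp only [grown, Finset.mem_biUnion, Finset.mem_image]
          exact ⟨T, hT, d.snd, ⟨d.fst, h1', by simp [nbr, hle]⟩, rfl⟩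
        · refine Finset.insert_subset ?_ hsub
          have := hsub h1'
          simp only [cls, Finset.mem_filter] at this ⊢
          exact ⟨hfs, this.2.trans hadj.reachable⟩
        · rw [Finset.card_insert_of_notMem h2']; omega
  obtain ⟨T, hT, hsub, -, h⟩ := key t
  have : T = cls A c S i := by
    rcases h with h | h
    · exact h
    · have h1 := Finset.card_le_card hsub
      have h2 : (cls A c S i).card ≤ S.card := by
        classical
        exact Finset.card_le_card (Finset.filter_subset _ _)
      omega
  exact this ▸ hT

theorem cls_far (A : Matrix (Fin n) (Fin n) ℝ) (c : ℝ) (S : Finset (Fin n)) (q i j : Fin n)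
    (hi : i ∈ S) (hiq : i ∉ cls A c S q) (hj : j ∈ cls A c S q) : |A i j| < c := by
  by_contra! hcon
  classical
  simp only [cls, Finset.mem_filter] at hiq hj
  apply hiq
  refine ⟨hi, ?_⟩
  by_cases hij : i = j
  · exact hij ▸ hj.2
  have : (corrGraph A c S).Adj j i := by
    simp only [corrGraph, SimpleGraph.fromRel_adj]
    exact ⟨Ne.symm hij, Or.inr ⟨hi, hj.1, hcon⟩⟩
  exact hj.2.trans this.reachable

theorem nbr_card (A : Matrix (Fin n) (Fin n) ℝ) (c L : ℝ) (hc : 0 < c) (i : Fin n)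
    (h : ∑ j, A i j ^ 2 ≤ L ^ 2) : ((nbr A c i).card : ℝ) ≤ (L / c) ^ 2 := by
  have h1 : ((nbr A c i).card : ℝ) * c ^ 2 ≤ L ^ 2 := by
    calc ((nbr A c i).card : ℝ) * c ^ 2 = ∑ j ∈ nbr A c i, c ^ 2 := by simp
      _ ≤ ∑ j ∈ nbr A c i, A i j ^ 2 := by
        refine Finset.sum_le_sum fun j hj => ?_
        simp only [nbr, Finset.mem_filter] at hj
        rw [← sq_abs (A i j)]
        exact pow_le_pow_left₀ hc.le hj.2 2
      _ ≤ ∑ j, A i j ^ 2 := Finset.sum_le_sum_of_subset_of_nonneg (Finset.subset_univ _)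
        fun _ _ _ => sq_nonneg _
      _ ≤ _ := h
  rw [div_pow, le_div_iff₀ (by positivity)]
  exact h1

open scoped MatrixOrder Matrix.Norms.L2Operator in
/-- a map to Euclidean space realising the inner product. -/
theorem exists_embed (A : Matrix (Fin n) (Fin n) ℝ) (hA : A.PosSemidef) :
    ∃ L : (Fin n → ℝ) →ₗ[ℝ] EuclideanSpace ℝ (Fin n),
      ∀ x y, innerSigma A x y = inner ℝ (L x) (L y) := by
  obtain ⟨B, rfl⟩ : ∃ B : Matrix (Fin n) (Fin n) ℝ, A = Bᴴ * B := by
    exact (CStarAlgebra.nonneg_iff_eq_star_mul_self (a := A)).1 hA.nonneg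
  refine ⟨(WithLp.linearEquiv 2 ℝ (Fin n → ℝ)).symm.toLinearMap ∘ₗ B.mulVecLin, fun x y => ?_⟩
  simp only [innerSigma, EuclideanSpace.inner_eq_star_dotProduct]
  simp [← Matrix.mulVec_mulVec, Matrix.dotProduct_mulVec, Matrix.vecMul_transpose, dotProduct_comm]

open Classical in
theorem exists_net (L : (Fin n → ℝ) →ₗ[ℝ] EuclideanSpace ℝ (Fin n)) (T : Finset (Fin n)) :
    ∃ G : Finset (Fin n → ℝ), G.card ≤ T.card ∧ (∀ g ∈ G, ‖L g‖ = 1) ∧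
      ∀ v w : Fin n → ℝ, (∀ i, i ∉ T → w i = 0) → inner ℝ (L v) (L w) ≠ 0 →
        ∃ g ∈ G, inner ℝ (L v) (L w) ≤ T.card * |inner ℝ (L v) (L g)| * ‖L w‖ := by
  set W : Submodule ℝ (EuclideanSpace ℝ (Fin n)) :=
    Submodule.span ℝ (T.image fun i => L (Pi.single i 1) : Finset _) with hW
  have hWL : W ≤ LinearMap.range L := by
    rw [hW, Submodule.span_le]
    intro x hx
    simp only [Finset.coe_image, Set.mem_image] at hx
    obtain ⟨i, -, rfl⟩ := hx
    exact ⟨_, rfl⟩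
  have hdim : Module.finrank ℝ W ≤ T.card :=
    (finrank_span_finset_le_card _).trans Finset.card_image_le
  set b := stdOrthonormalBasis ℝ W
  have hpre : ∀ k, ∃ g, L g = (b k : EuclideanSpace ℝ (Fin n)) := fun k => hWL (b k).2
  choose g hg using hpre
  refine ⟨Finset.univ.image g, ?_, ?_, ?_⟩
  · exact Finset.card_image_le.trans (by simpa using hdim)
  · intro x hx
    simp only [Finset.mem_image] at hx
    obtain ⟨k, -, rfl⟩ := hx
    rw [hg]
    exact b.orthonormal.1 k
  · intro v w hw hne
    have hwW : L w ∈ W := by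
      have : w = ∑ i ∈ T, w i • (Pi.single i 1 : Fin n → ℝ) := by
        ext j
        simp only [Finset.sum_apply, Pi.smul_apply, Pi.single_apply, smul_eq_mul, mul_ite, mul_one,
          mul_zero, Finset.sum_ite_eq]
        split_ifs with h
        · rfl
        · exact hw j h
      rw [this, map_sum]
      refine Submodule.sum_mem _ fun i hi => ?_
      rw [map_smul]
      exact Submodule.smul_mem _ _ (Submodule.subset_span (by
        simp only [Finset.coe_image, Set.mem_image]; exact ⟨i, hi, rfl⟩))
    set w' : W := ⟨L w, hwW⟩
    have hexp : L w = ∑ k, (inner ℝ (b k) w') • L (g k) := by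
      have := congrArg (fun z : W => (z : EuclideanSpace ℝ (Fin n))) (b.sum_repr' w')
      simp only [Submodule.coe_sum, Submodule.coe_smul] at this
      simp only [hg]
      exact this.symm
    have hin : inner ℝ (L v) (L w) = ∑ k, inner ℝ (b k) w' * inner ℝ (L v) (L (g k)) := by
      conv_lhs => rw [hexp]
      simp [inner_sum, inner_smul_right]
    have hne' : (Finset.univ : Finset (Fin (Module.finrank ℝ W))).Nonempty := by
      by_contra hcon
      rw [Finset.not_nonempty_iff_eq_empty] at hcon
      rw [hin, hcon] at hne
      simp at hne
    obtain ⟨m, -, hm⟩ := Finset.exists_max_image Finset.univ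
      (fun k => |inner ℝ (L v) (L (g k))|) hne'
    refine ⟨g m, by simp, ?_⟩
    rw [hin]
    have hb : ∀ k, |inner ℝ (b k) w'| ≤ ‖L w‖ := by
      intro k
      have := abs_real_inner_le_norm (b k) w'
      rw [b.orthonormal.1 k, one_mul] at this
      exact this
    calc ∑ k, inner ℝ (b k) w' * inner ℝ (L v) (L (g k))
        ≤ ∑ k : Fin (Module.finrank ℝ W), ‖L w‖ * |inner ℝ (L v) (L (g m))| := by
          refine Finset.sum_le_sum fun k _ => ?_
          refine (le_abs_self _).trans ?_
          rw [abs_mul]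
          exact mul_le_mul (hb k) (hm k (Finset.mem_univ _)) (abs_nonneg _) (norm_nonneg _)
      _ = (Module.finrank ℝ W : ℝ) * (‖L w‖ * |inner ℝ (L v) (L (g m))|) := by simp
      _ ≤ (T.card : ℝ) * (‖L w‖ * |inner ℝ (L v) (L (g m))|) := by
          have : (Module.finrank ℝ W : ℝ) ≤ T.card := by exact_mod_cast hdim
          gcongr
      _ = _ := by ring

/-- restriction of `v` to `T`. -/
def restr (v : Fin n → ℝ) (T : Finset (Fin n)) : Fin n → ℝ := fun i => if i ∈ T then v i else 0

theorem eig_bounds (A : Matrix (Fin n) (Fin n) ℝ) (hA : A.PosDef) (l M : ℝ) (hM : 0 ≤ M)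
    (hl : ∀ i, l ≤ hA.1.eigenvalues i) (hu : ∀ i, hA.1.eigenvalues i ≤ M) :
    (∀ x : Fin n → ℝ, l * ∑ i, x i ^ 2 ≤ innerSigma A x x) ∧
    (∀ i, ∑ j, A i j ^ 2 ≤ M ^ 2) := by
  set b := hA.1.eigenvectorBasis with hb
  have hsym : ∀ x y : Fin n → ℝ, x ⬝ᵥ (A *ᵥ y) = (A *ᵥ x) ⬝ᵥ y := by
    intro x y
    have hT : Aᵀ = A := by simpa using hA.1.eq
    rw [Matrix.dotProduct_mulVec, ← Matrix.mulVec_transpose, hT]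
  have hdot : ∀ x y : EuclideanSpace ℝ (Fin n), inner ℝ x y = (x : Fin n → ℝ) ⬝ᵥ (y : Fin n → ℝ) := by
    intro x y
    rw [EuclideanSpace.inner_eq_star_dotProduct]
    simp [dotProduct_comm]
  have hev : ∀ (k) (x : Fin n → ℝ), inner ℝ (b k) (WithLp.toLp 2 (A *ᵥ x)) =
      hA.1.eigenvalues k * inner ℝ (b k) (WithLp.toLp 2 x) := by
    intro k x
    rw [hdot, hdot]
    simp only []
    rw [hsym, hA.1.mulVec_eigenvectorBasis, smul_dotProduct, smul_eq_mul]
  have hnorm : ∀ x : Fin n → ℝ, ∑ i, x i ^ 2 = ∑ k, (inner ℝ (b k) (WithLp.toLp 2 x)) ^ 2 := by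
    intro x
    have := b.sum_sq_norm_inner_right (WithLp.toLp 2 x)
    simp only [Real.norm_eq_abs, sq_abs] at this
    rw [this, EuclideanSpace.norm_sq_eq]
    simp
  constructor
  · intro x
    have h1 : innerSigma A x x =
        ∑ k, hA.1.eigenvalues k * (inner ℝ (b k) (WithLp.toLp 2 x)) ^ 2 := by
      have := b.sum_inner_mul_inner (WithLp.toLp 2 x) (WithLp.toLp 2 (A *ᵥ x))
      rw [hdot] at this
      rw [innerSigma]
      refine this.symm.trans (Finset.sum_congr rfl fun k _ => ?_)
      rw [hev, real_inner_comm]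
      ring
    rw [h1, hnorm, Finset.mul_sum]
    exact Finset.sum_le_sum fun k _ => mul_le_mul_of_nonneg_right (hl k) (sq_nonneg _)
  · intro i
    have h1 : ∀ j, A i j = (A *ᵥ (Pi.single i 1)) j := by
      intro j
      have : A j i = A i j := by simpa using hA.1.apply i j
      simp [this]
    have h2 : ∑ j, A i j ^ 2 = ∑ j, ((A *ᵥ (Pi.single i 1)) j) ^ 2 :=
      Finset.sum_congr rfl fun j _ => by rw [h1]
    rw [h2, hnorm]
    have h3 : ∑ j, (Pi.single i 1 : Fin n → ℝ) j ^ 2 = 1 := by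
      simp [Pi.single_apply]
    calc _ ≤ ∑ k, M ^ 2 * (inner ℝ (b k) (WithLp.toLp 2 (Pi.single i (1:ℝ)))) ^ 2 := by
          refine Finset.sum_le_sum fun k _ => ?_
          rw [hev, mul_pow]
          exact mul_le_mul_of_nonneg_right
            (pow_le_pow_left₀ (hA.eigenvalues_pos k).le (hu k) 2) (sq_nonneg _)
      _ = M ^ 2 := by rw [← Finset.mul_sum, ← hnorm, h3, mul_one]

theorem cls_eq (A : Matrix (Fin n) (Fin n) ℝ) (c : ℝ) (S : Finset (Fin n)) (i j : Fin n)
    (hj : j ∈ cls A c S i) : cls A c S i = cls A c S j := by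
  classical
  simp only [cls, Finset.mem_filter] at hj
  ext k
  simp only [cls, Finset.mem_filter]
  exact ⟨fun h => ⟨h.1, hj.2.symm.trans h.2⟩, fun h => ⟨h.1, hj.2.trans h.2⟩⟩

theorem arith_t (t : ℕ) : 4 * t * (t + 1) ≤ 9 * 3 ^ t := by
  induction t with
  | zero => simp
  | succ k ih =>
    rcases Nat.lt_or_ge k 2 with h | h
    · interval_cases k <;> norm_num
    · rw [pow_succ]; nlinarith

theorem core (A : Matrix (Fin n) (Fin n) ℝ) (hA : A.PosSemidef) (l M : ℝ) (hl : 0 < l)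
    (h1 : ∀ x : Fin n → ℝ, l * ∑ i, x i ^ 2 ≤ innerSigma A x x)
    (h2 : ∀ i, ∑ j, A i j ^ 2 ≤ M ^ 2) (t : ℕ) (ht : 1 ≤ t) :
    ∃ G : Finset (Fin n → ℝ),
      G.card ≤ (n * ((t + 1) * ⌊(M / (l / (4 * t ^ 2))) ^ 2⌋₊) ^ t) * (t + 1) ∧
      ∀ v : Fin n → ℝ, SparseVec t v → 0 < normSigma A v →
        ∃ g ∈ G, 0 < normSigma A g ∧
          (1 / 3 ^ (t + 1)) * (normSigma A v * normSigma A g) ≤ |innerSigma A v g| := by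
  classical
  have ht' : (1 : ℝ) ≤ t := by exact_mod_cast ht
  set c : ℝ := l / (4 * t ^ 2) with hc
  have hcpos : 0 < c := by positivity
  have hcl : c ≤ l := by
    rw [hc]
    apply div_le_self hl.le
    nlinarith
  have hsym : ∀ i j, A i j = A j i := fun i j => by simpa using hA.1.apply j i
  have hdiag : ∀ i, c ≤ |A i i| := by
    intro i
    have := h1 (Pi.single i 1)
    have h3 : ∑ j, (Pi.single i 1 : Fin n → ℝ) j ^ 2 = 1 := by
      simp [Pi.single_apply]
    rw [h3] at this
    have h4 : innerSigma A (Pi.single i 1) (Pi.single i 1) = A i i := by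
      simp [innerSigma]
    rw [h4] at this
    linarith [le_abs_self (A i i)]
  obtain ⟨L, hL⟩ := exists_embed A hA
  have hLn : ∀ x, normSigma A x = ‖L x‖ := by
    intro x
    rw [normSigma, hL, real_inner_self_eq_norm_sq, Real.sqrt_sq (norm_nonneg _)]
  choose net hn1 hn2 hn3 using exists_net L
  refine ⟨(grown A c t).biUnion net, ?_, ?_⟩
  · refine (Finset.card_biUnion_le_card_mul _ _ (t + 1)
      fun T hT => (hn1 T).trans (grown_card_mem A c t T hT)).trans ?_
    refine Nat.mul_le_mul_right _ (grown_card A c t _ (fun i => ?_) t le_rfl)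
    exact Nat.le_floor (nbr_card A c M hcpos i (h2 i))
  intro v hv hvpos
  set S : Finset (Fin n) := Finset.univ.filter fun i => v i ≠ 0 with hS
  have hScard : S.card ≤ t := by
    have : ({i | v i ≠ 0} : Set (Fin n)).ncard = S.card := by
      rw [← Set.ncard_coe_finset]; congr 1; ext i; simp [hS]
    rw [SparseVec, this] at hv
    exact hv
  have hS0 : ∀ i, i ∉ S → v i = 0 := by
    intro i hi
    simpa [hS] using hi
  have hSne : S.Nonempty := by
    by_contra hcon
    rw [Finset.not_nonempty_iff_eq_empty] at hcon
    have : v = 0 := by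
      ext i
      exact hS0 i (by simp [hcon])
    rw [hLn, this] at hvpos
    simp at hvpos
  obtain ⟨q, hqS, hq⟩ := Finset.exists_max_image S (fun i => ‖L (restr v (cls A c S i))‖) hSne
  set w := restr v (cls A c S q) with hw
  set m := ‖L w‖ with hm
  have hself : ∀ i ∈ S, i ∈ cls A c S i := fun i hi => by simp [cls, hi]
  have hcoord : ∀ i ∈ S, l * v i ^ 2 ≤ m ^ 2 := by
    intro i hi
    have e1 := h1 (restr v (cls A c S i))
    rw [hL, real_inner_self_eq_norm_sq] at e1
    have e2 : v i ^ 2 ≤ ∑ j, (restr v (cls A c S i)) j ^ 2 := by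
      have := Finset.single_le_sum (f := fun j => (restr v (cls A c S i)) j ^ 2)
        (fun j _ => sq_nonneg _) (Finset.mem_univ i)
      simpa [restr, hself i hi] using this
    have e3 := pow_le_pow_left₀ (norm_nonneg _) (hq i hi) 2
    have e4 := mul_le_mul_of_nonneg_left e2 hl.le
    linarith
  have hmpos : 0 < m := by
    obtain ⟨i, hi⟩ := hSne
    have h0 : v i ≠ 0 := by simpa [hS] using hi
    have : 0 < l * v i ^ 2 := by positivity
    have h5 : 0 < m ^ 2 := this.trans_le (hcoord i hi)
    have h6 : 0 ≤ m := norm_nonneg _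
    exact lt_of_le_of_ne h6 (fun h => by rw [← h] at h5; simp at h5)
  have hvnorm : ‖L v‖ ≤ t * m := by
    have hdec : v = ∑ T ∈ S.image (cls A c S), restr v T := by
      ext j
      rw [Finset.sum_apply]
      by_cases hj : j ∈ S
      · rw [Finset.sum_eq_single (cls A c S j)]
        · simp [restr, hself j hj]
        · intro T hT hne
          obtain ⟨i, hi, rfl⟩ := Finset.mem_image.1 hT
          have : j ∉ cls A c S i := fun h => hne (cls_eq A c S i j h)
          simp [restr, this]
        · intro h
          exact absurd (Finset.mem_image_of_mem _ hj) h
      · rw [hS0 j hj, Finset.sum_eq_zero]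
        intro T _
        simp [restr, hS0 j hj]
    have hcard : ((S.image (cls A c S)).card : ℝ) ≤ t := by
      exact_mod_cast Finset.card_image_le.trans hScard
    calc ‖L v‖ = ‖∑ T ∈ S.image (cls A c S), L (restr v T)‖ := by
          rw [← map_sum, ← hdec]
      _ ≤ ∑ T ∈ S.image (cls A c S), ‖L (restr v T)‖ := norm_sum_le _ _
      _ ≤ ∑ T ∈ S.image (cls A c S), m := by
          refine Finset.sum_le_sum fun T hT => ?_
          obtain ⟨i, hi, rfl⟩ := Finset.mem_image.1 hT
          exact hq i hi
      _ = (S.image (cls A c S)).card * m := by simp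
      _ ≤ t * m := mul_le_mul_of_nonneg_right hcard hmpos.le
  have hcross : |innerSigma A (v - w) w| ≤ m ^ 2 / 4 := by
    have hexp : innerSigma A (v - w) w = ∑ i ∈ S, ∑ j ∈ S, (v - w) i * (A i j * w j) := by
      simp only [innerSigma, dotProduct, Matrix.mulVec, Finset.mul_sum]
      have hz : ∀ i, i ∉ S → w i = 0 := fun i hi => by simp [hw, restr, hS0 i hi]
      rw [← Finset.sum_subset (Finset.subset_univ S)]
      · refine Finset.sum_congr rfl fun i _ => ?_
        rw [← Finset.sum_subset (Finset.subset_univ S)]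
        intro j _ hj
        rw [hz j hj]; ring
      · intro i _ hi
        refine Finset.sum_eq_zero fun j _ => ?_
        rw [Pi.sub_apply, hz i hi, hS0 i hi]; ring
    have hterm : ∀ i ∈ S, ∀ j ∈ S, |(v - w) i * (A i j * w j)| ≤ c * (m ^ 2 / l) := by
      intro i hi j hj
      have hpos : 0 ≤ c * (m ^ 2 / l) := by positivity
      by_cases hiq : i ∈ cls A c S q
      · have : (v - w) i = 0 := by simp [hw, restr, hiq]
        rw [this]; simpa using hpos
      by_cases hjq : j ∈ cls A c S q
      · have e1 : (v - w) i = v i := by simp [hw, restr, hiq]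
        have e2 : w j = v j := by simp [hw, restr, hjq]
        rw [e1, e2]
        have e3 := cls_far A c S q i j hi hiq hjq
        have e4 : |v i| * |v j| ≤ m ^ 2 / l := by
          rw [le_div_iff₀ hl]
          have := hcoord i hi
          have := hcoord j hj
          have e5 : 0 ≤ l * (|v i| - |v j|) ^ 2 := by positivity
          rw [← sq_abs (v i)] at *
          rw [← sq_abs (v j)] at *
          nlinarith
        calc |v i * (A i j * v j)| = |A i j| * (|v i| * |v j|) := by
              rw [abs_mul, abs_mul]; ring
          _ ≤ _ := mul_le_mul e3.le e4 (by positivity) hcpos.le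
      · have : w j = 0 := by simp [hw, restr, hjq]
        rw [this]; simpa using hpos
    rw [hexp]
    calc _ ≤ ∑ i ∈ S, |∑ j ∈ S, (v - w) i * (A i j * w j)| := Finset.abs_sum_le_sum_abs _ _
      _ ≤ ∑ i ∈ S, ∑ j ∈ S, |(v - w) i * (A i j * w j)| :=
          Finset.sum_le_sum fun i _ => Finset.abs_sum_le_sum_abs _ _
      _ ≤ ∑ i ∈ S, ∑ j ∈ S, c * (m ^ 2 / l) :=
          Finset.sum_le_sum fun i hi => Finset.sum_le_sum fun j hj => hterm i hi j hj
      _ = (S.card : ℝ) * S.card * (c * (m ^ 2 / l)) := by simp; ring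
      _ ≤ (t : ℝ) * t * (c * (m ^ 2 / l)) := by
          have : (S.card : ℝ) ≤ t := by exact_mod_cast hScard
          gcongr
      _ = m ^ 2 / 4 := by
          rw [hc]; field_simp
  have hinner : 3 / 4 * m ^ 2 ≤ inner ℝ (L v) (L w) := by
    have e1 : (inner ℝ (L v) (L w) : ℝ) = innerSigma A (v - w) w + m ^ 2 := by
      rw [hL, map_sub, inner_sub_left, real_inner_self_eq_norm_sq]; ring
    have := (abs_le.1 hcross).1
    linarith
  have hne : (inner ℝ (L v) (L w) : ℝ) ≠ 0 := by
    have : 0 < 3 / 4 * m ^ 2 := by positivity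
    linarith
  have hTg := cls_grown A hsym c hdiag S t hScard q hqS
  obtain ⟨g, hg, hgb⟩ := hn3 (cls A c S q) v w
    (fun i hi => by simp [hw, restr, hi]) hne
  refine ⟨g, Finset.mem_biUnion.2 ⟨_, hTg, hg⟩, ?_, ?_⟩
  · rw [hLn, hn2 _ g hg]; exact one_pos
  rw [hLn, hLn, hL, hn2 _ g hg, mul_one]
  set z : ℝ := |inner ℝ (L v) (L g)| with hz
  have hz0 : 0 ≤ z := abs_nonneg _
  have hTc : ((cls A c S q).card : ℝ) ≤ t + 1 := by
    exact_mod_cast grown_card_mem A c t _ hTg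
  have f1 : 3 / 4 * m ≤ (t + 1) * z := by
    have : 3 / 4 * m * m ≤ (t + 1) * z * m := by
      calc 3 / 4 * m * m = 3 / 4 * m ^ 2 := by ring
        _ ≤ (cls A c S q).card * z * m := hinner.trans hgb
        _ ≤ _ := by gcongr
    exact le_of_mul_le_mul_right this hmpos
  have f2 : (4 * t * (t + 1) : ℝ) ≤ 9 * 3 ^ t := by exact_mod_cast arith_t t
  rw [div_mul_eq_mul_div, one_mul, div_le_iff₀ (by positivity), pow_succ]
  calc ‖L v‖ ≤ t * m := hvnorm
    _ ≤ t * (4 / 3 * ((t + 1) * z)) := by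
        refine mul_le_mul_of_nonneg_left ?_ (by positivity)
        linarith
    _ = 1 / 3 * (4 * t * (t + 1)) * z := by ring
    _ ≤ 1 / 3 * (9 * 3 ^ t) * z := by gcongr
    _ = z * (3 ^ t * 3) := by ring

end helpers

/-- fixed-parameter covering bound: 𝒩_{t,1/3^{t+1}}(Σ) ≤ 2^{Ct²}κ^{2t+1}n
where κ is the condition number of Σ. -/
theorem stmt9 : ∃ C : ℝ, 0 < C ∧ ∀ (n t : ℕ), 1 ≤ t →
    ∀ (A : Matrix (Fin n) (Fin n) ℝ) (hA : A.PosDef) (κ : ℝ),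
      κ = (⨆ i, hA.1.eigenvalues i) / (⨅ i, hA.1.eigenvalues i) →
      coveringNumber t (1 / 3 ^ (t + 1)) A ≤
        ENNReal.ofReal ((2 : ℝ) ^ (C * (t : ℝ) ^ 2) * κ ^ (2 * t + 1) * n) := by
  refine ⟨10, by norm_num, ?_⟩
  intro n t ht A hA κ hκ
  have ht' : (1 : ℝ) ≤ t := by exact_mod_cast ht
  rcases Nat.eq_zero_or_pos n with rfl | hn
  · have h0 : coveringNumber t (1 / 3 ^ (t + 1)) A ≤ ((0 : ℕ) : ℝ≥0∞) := by
      refine sInf_le ⟨0, fun i => i.elim0, ?_, rfl⟩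
      intro v _ hv
      simp [normSigma, innerSigma] at hv
    exact h0.trans (by simp)
  have : Nonempty (Fin n) := ⟨⟨0, hn⟩⟩
  set l := ⨅ i, hA.1.eigenvalues i with hl
  set M := ⨆ i, hA.1.eigenvalues i with hM
  have hlle : ∀ i, l ≤ hA.1.eigenvalues i := fun i => ciInf_le (Set.finite_range _).bddBelow i
  have hMle : ∀ i, hA.1.eigenvalues i ≤ M :=
    fun i => le_ciSup (Set.finite_range hA.1.eigenvalues).bddAbove i
  have hlpos : 0 < l := by
    obtain ⟨i, hi⟩ := exists_eq_ciInf_of_finite (f := hA.1.eigenvalues)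
    rw [hl, ← hi]
    exact hA.eigenvalues_pos i
  have hlM : l ≤ M := (hlle ⟨0, hn⟩).trans (hMle ⟨0, hn⟩)
  have hκ1 : 1 ≤ κ := by rw [hκ, one_le_div hlpos]; exact hlM
  obtain ⟨h1, h2⟩ := eig_bounds A hA l M (hlpos.le.trans hlM) hlle hMle
  obtain ⟨G, hG, hD⟩ := core A hA.posSemidef l M hlpos h1 h2 t ht
  have hcov : coveringNumber t (1 / 3 ^ (t + 1)) A ≤ (G.card : ℝ≥0∞) := by
    refine sInf_le ⟨G.card, fun i => (G.equivFin.symm i : Fin n → ℝ), ?_, rfl⟩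
    intro v hv hvpos
    obtain ⟨g, hg, hg1, hg2⟩ := hD v hv hvpos
    refine ⟨G.equivFin ⟨g, hg⟩, ?_⟩
    simp only [Equiv.symm_apply_apply]
    exact ⟨hg1, hg2⟩
  refine hcov.trans ?_
  rw [← ENNReal.ofReal_natCast]
  apply ENNReal.ofReal_le_ofReal
  have hfl : (⌊(M / (l / (4 * t ^ 2))) ^ 2⌋₊ : ℝ) ≤ 16 * t ^ 4 * κ ^ 2 := by
    refine (Nat.floor_le (sq_nonneg _)).trans (le_of_eq ?_)
    rw [hκ]; field_simp; norm_num
  have hpow : (2 : ℝ) ^ ((10 : ℝ) * (t : ℝ) ^ 2) = 2 ^ (10 * t ^ 2) := by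
    rw [← Real.rpow_natCast 2 (10 * t ^ 2)]; push_cast; rfl
  rw [hpow]
  have hG' : (G.card : ℝ) ≤
      (n * ((t + 1) * (⌊(M / (l / (4 * t ^ 2))) ^ 2⌋₊ : ℝ)) ^ t) * (t + 1) := by
    exact_mod_cast hG
  have ht2 : ((t : ℝ) + 1) ≤ 2 ^ t := by
    have : t + 1 ≤ 2 ^ t := Nat.lt_two_pow_self
    exact_mod_cast this
  have ht3 : (t : ℝ) ≤ 2 ^ t := by linarith
  calc (G.card : ℝ) ≤ _ := hG'
    _ ≤ (n * (2 ^ t * (16 * (2 ^ t) ^ 4 * κ ^ 2)) ^ t) * 2 ^ t := by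
        have : (⌊(M / (l / (4 * t ^ 2))) ^ 2⌋₊ : ℝ) ≤ 16 * (2 ^ t) ^ 4 * κ ^ 2 :=
          hfl.trans (by gcongr)
        gcongr
    _ = 2 ^ (5 * t ^ 2 + 5 * t) * κ ^ (2 * t) * n := by
        have h16 : (16 : ℝ) ^ t = 2 ^ (4 * t) := by rw [pow_mul]; norm_num
        simp only [mul_pow]
        rw [h16]; ring
    _ ≤ 2 ^ (10 * t ^ 2) * κ ^ (2 * t + 1) * n := by
        have e1 : 5 * t ^ 2 + 5 * t ≤ 10 * t ^ 2 := by nlinarith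
        have e2 : (2 : ℝ) ^ (5 * t ^ 2 + 5 * t) ≤ 2 ^ (10 * t ^ 2) :=
          pow_le_pow_right₀ (by norm_num) e1
        have e3 : κ ^ (2 * t) ≤ κ ^ (2 * t + 1) := pow_le_pow_right₀ hκ1 (by omega)
        gcongr
end
end

section
/- Let n, N, t, T ∈ ℕ with T ≥ 1, and let δ > 0. Suppose that for all t-sparse vectors v₁,…,v_N ∈ ℝⁿ there exist some i ∈ [N] and x ∈ ℝ^N with ‖x‖₁ ≤ T and ‖vᵢ − Σ_{j≠i} xⱼvⱼ‖₂ ≤ δ·max_{j∈[N]} ‖vⱼ‖₂. Then for every n×n positive definite real matrix Σ whose condition number κ(Σ) := λ_max(Σ)/λ_min(Σ) satisfies κ(Σ) < 1/(4δ²), it holds that 𝒫_{t, 1/(3T)}(Σ) ≤ N·max(1, ⌈log₂ κ(Σ)⌉). -/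
open Matrix MeasureTheory ProbabilityTheory
open scoped BigOperators ENNReal

noncomputable section

lemma rayleigh_aux {n : ℕ} (A : Matrix (Fin n) (Fin n) ℝ) (hA : A.IsHermitian) (x : Fin n → ℝ) :
    innerSigma A x x = ∑ i, hA.eigenvalues i *
        (inner ℝ (hA.eigenvectorBasis i) (WithLp.toLp 2 x)) ^ 2 ∧
    ∑ i, x i ^ 2 = ∑ i, (inner ℝ (hA.eigenvectorBasis i) (WithLp.toLp 2 x)) ^ 2 := by
  constructor
  · have h1 : innerSigma A x x =
        inner ℝ (WithLp.toLp 2 x : EuclideanSpace ℝ (Fin n)) (WithLp.toLp 2 (A *ᵥ x)) := by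
      simp [innerSigma, EuclideanSpace.inner_eq_star_dotProduct, dotProduct_comm]
    rw [h1, ← hA.eigenvectorBasis.sum_inner_mul_inner]
    refine Finset.sum_congr rfl fun i _ => ?_
    have h2 : inner ℝ (hA.eigenvectorBasis i) (WithLp.toLp 2 (A *ᵥ x)) =
        hA.eigenvalues i * inner ℝ (hA.eigenvectorBasis i) (WithLp.toLp 2 x) := by
      have h3 := hA.mulVec_eigenvectorBasis i
      have h4 : Aᵀ = A := by simpa [Matrix.IsHermitian, conjTranspose_eq_transpose_of_trivial] using hA
      simp only [EuclideanSpace.inner_eq_star_dotProduct, star_trivial]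
      rw [dotProduct_comm, dotProduct_mulVec, ← mulVec_transpose, h4, h3, smul_dotProduct,
        dotProduct_comm, smul_eq_mul]
    rw [h2, real_inner_comm]
    ring
  · have := hA.eigenvectorBasis.sum_inner_mul_inner (WithLp.toLp 2 x) (WithLp.toLp 2 x)
    rw [real_inner_self_eq_norm_sq, EuclideanSpace.norm_sq_eq] at this
    simp only [Real.norm_eq_abs, sq_abs] at this
    rw [← this]
    refine Finset.sum_congr rfl fun i _ => ?_
    rw [real_inner_comm]
    ring

lemma innerSigma_sub_right {n : ℕ} (A : Matrix (Fin n) (Fin n) ℝ) (x y z : Fin n → ℝ) :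
    innerSigma A x (y - z) = innerSigma A x y - innerSigma A x z := by
  simp [innerSigma, mulVec_sub, dotProduct_sub]

lemma innerSigma_sub_left {n : ℕ} (A : Matrix (Fin n) (Fin n) ℝ) (x y z : Fin n → ℝ) :
    innerSigma A (y - z) x = innerSigma A y x - innerSigma A z x := by
  simp [innerSigma, sub_dotProduct]

lemma innerSigma_smul_right {n : ℕ} (A : Matrix (Fin n) (Fin n) ℝ) (c : ℝ) (x y : Fin n → ℝ) :
    innerSigma A x (c • y) = c * innerSigma A x y := by
  simp [innerSigma, mulVec_smul]

lemma innerSigma_smul_left {n : ℕ} (A : Matrix (Fin n) (Fin n) ℝ) (c : ℝ) (x y : Fin n → ℝ) :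
    innerSigma A (c • x) y = c * innerSigma A x y := by
  simp [innerSigma]

lemma innerSigma_sum_right {n : ℕ} {ι : Type*} (A : Matrix (Fin n) (Fin n) ℝ) (x : Fin n → ℝ)
    (s : Finset ι) (f : ι → Fin n → ℝ) :
    innerSigma A x (∑ j ∈ s, f j) = ∑ j ∈ s, innerSigma A x (f j) := by
  classical
  induction s using Finset.induction_on with
  | empty => simp [innerSigma]
  | insert a s ha ih =>
    rw [Finset.sum_insert ha, Finset.sum_insert ha, ← ih]
    simp [innerSigma, mulVec_add, dotProduct_add]

lemma innerSigma_symm {n : ℕ} (A : Matrix (Fin n) (Fin n) ℝ) (hA : A.IsHermitian)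
    (x y : Fin n → ℝ) : innerSigma A x y = innerSigma A y x := by
  have h4 : Aᵀ = A := by simpa [Matrix.IsHermitian, conjTranspose_eq_transpose_of_trivial] using hA
  unfold innerSigma
  rw [dotProduct_mulVec, ← mulVec_transpose, h4, dotProduct_comm]

lemma core_aux (n N t T : ℕ) (hT : 1 ≤ T) (δ : ℝ) (hδ : 0 < δ)
    (hyp : ∀ v : Fin N → Fin n → ℝ, (∀ i, SparseVec t (v i)) →
      ∃ (i : Fin N) (x : Fin N → ℝ), l1norm x ≤ (T : ℝ) ∧
        l2norm (v i - ∑ j ∈ Finset.univ.erase i, x j • v j) ≤ δ * ⨆ j, l2norm (v j))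
    (A : Matrix (Fin n) (Fin n) ℝ) (hA : A.PosDef) (κ : ℝ)
    (hκ : κ = (⨆ i, hA.1.eigenvalues i) / (⨅ i, hA.1.eigenvalues i))
    (hκδ : κ < 1 / (4 * δ ^ 2)) (V : Fin N → Fin n → ℝ)
    (hV : IsPacking t (1 / (3 * T)) A V) : False := by
  obtain ⟨-, hs, hp⟩ := hV
  set v : Fin N → Fin n → ℝ := fun i => (normSigma A (V i))⁻¹ • V i with hv
  have hsp : ∀ i, SparseVec t (v i) := by
    intro i
    have h1 := (hs i).1
    have h2 := (hs i).2
    unfold SparseVec at *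
    convert h1 using 3
    ext k
    simp [hv, h2.ne']
  have hpos : ∀ i, 0 < innerSigma A (V i) (V i) := fun i => Real.sqrt_pos.1 (hs i).2
  have hself : ∀ i, innerSigma A (v i) (v i) = 1 := by
    intro i
    have h2 := (hs i).2
    have h3 : normSigma A (V i) ^ 2 = innerSigma A (V i) (V i) := Real.sq_sqrt (hpos i).le
    simp only [hv, innerSigma_smul_left, innerSigma_smul_right]
    rw [← h3]
    field_simp
  have hcross : ∀ i j, i ≠ j → |innerSigma A (v i) (v j)| ≤ 1 / (3 * T) := by
    intro i j hij
    have h := hp i j hij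
    have h1 := (hs i).2
    have h2 := (hs j).2
    simp only [hv, innerSigma_smul_left, innerSigma_smul_right, abs_mul]
    rw [abs_of_pos (inv_pos.2 h1), abs_of_pos (inv_pos.2 h2), ← mul_assoc, ← mul_inv,
      inv_mul_le_iff₀ (by positivity)]
    linarith
  obtain ⟨i, x, hx, hd⟩ := hyp v hsp
  have hn : Nonempty (Fin n) := by
    by_contra hne
    rw [not_nonempty_iff] at hne
    have := hself i
    simp [innerSigma] at this
  have hN : Nonempty (Fin N) := ⟨i⟩
  set lM := ⨆ i, hA.1.eigenvalues i with hlM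
  set lm := ⨅ i, hA.1.eigenvalues i with hlm
  have hlmpos : 0 < lm := by
    obtain ⟨k, hk⟩ := exists_eq_ciInf_of_finite (f := hA.1.eigenvalues)
    rw [hlm, ← hk]
    exact hA.eigenvalues_pos k
  have hup : ∀ y, innerSigma A y y ≤ lM * l2norm y ^ 2 := by
    intro y
    obtain ⟨h1, h2⟩ := rayleigh_aux A hA.1 y
    rw [l2norm, Real.sq_sqrt (by positivity), h1, h2, Finset.mul_sum]
    gcongr with k
    exact le_ciSup (Finite.bddAbove_range hA.1.eigenvalues) k
  have hlo : ∀ y, lm * l2norm y ^ 2 ≤ innerSigma A y y := by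
    intro y
    obtain ⟨h1, h2⟩ := rayleigh_aux A hA.1 y
    rw [l2norm, Real.sq_sqrt (by positivity), h1, h2, Finset.mul_sum]
    gcongr with k
    exact ciInf_le (Finite.bddBelow_range hA.1.eigenvalues) k
  have hlMpos : 0 < lM := by
    have h1 := hup (v i)
    rw [hself] at h1
    by_contra hc
    nlinarith [sq_nonneg (l2norm (v i))]
  have hnn : ∀ y : Fin n → ℝ, 0 ≤ l2norm y := fun y => Real.sqrt_nonneg _
  obtain ⟨m, hm⟩ := exists_eq_ciSup_of_finite (f := fun j => l2norm (v j))
  rw [← hm] at hd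
  set w := v i - ∑ j ∈ Finset.univ.erase i, x j • v j with hw
  have hww : innerSigma A w w < 1 / 4 := by
    have h1 := hup w
    have h2 := hlo (v m)
    rw [hself] at h2
    have h3 : l2norm w ^ 2 ≤ δ ^ 2 * l2norm (v m) ^ 2 := by
      rw [← mul_pow]
      exact pow_le_pow_left₀ (hnn w) hd 2
    have h4 : l2norm (v m) ^ 2 ≤ 1 / lm := by
      rw [le_div_iff₀ hlmpos]
      linarith
    have h5 : κ * δ ^ 2 < 1 / 4 := by
      rw [lt_div_iff₀ (by positivity)] at hκδ
      linarith
    calc innerSigma A w w ≤ lM * (δ ^ 2 * (1 / lm)) := h1.trans (by gcongr; exact h3.trans (by gcongr))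
      _ = κ * δ ^ 2 := by rw [hκ]; ring
      _ < 1 / 4 := h5
  have hvw : 2 / 3 ≤ innerSigma A (v i) w := by
    rw [hw, innerSigma_sub_right, hself, innerSigma_sum_right]
    have hTp : (0 : ℝ) < T := by exact_mod_cast hT
    have : ∑ j ∈ Finset.univ.erase i, innerSigma A (v i) (x j • v j) ≤ 1 / 3 := by
      calc ∑ j ∈ Finset.univ.erase i, innerSigma A (v i) (x j • v j)
          ≤ ∑ j ∈ Finset.univ.erase i, |x j| * (1 / (3 * T)) := by
            refine Finset.sum_le_sum fun j hj => ?_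
            rw [innerSigma_smul_right]
            refine (le_abs_self _).trans ?_
            rw [abs_mul]
            exact mul_le_mul_of_nonneg_left (hcross i j (Finset.ne_of_mem_erase hj).symm)
              (abs_nonneg _)
        _ ≤ ∑ j, |x j| * (1 / (3 * T)) :=
            Finset.sum_le_sum_of_subset_of_nonneg (Finset.erase_subset _ _)
              (fun _ _ _ => by positivity)
        _ = l1norm x * (1 / (3 * T)) := by rw [← Finset.sum_mul, l1norm]
        _ ≤ T * (1 / (3 * T)) := by gcongr
        _ = 1 / 3 := by field_simp
    linarith
  clear_value w
  have hnonneg : 0 ≤ innerSigma A (v i - w) (v i - w) :=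
    le_trans (mul_nonneg hlmpos.le (sq_nonneg _)) (hlo _)
  rw [innerSigma_sub_right, innerSigma_sub_left, innerSigma_sub_left, hself,
    innerSigma_symm A hA.1 w (v i)] at hnonneg
  linarith

/-- the dual-certificate bound on the packing number. -/
theorem stmt10 (n N t T : ℕ) (hT : 1 ≤ T) (δ : ℝ) (hδ : 0 < δ)
    (hyp : ∀ v : Fin N → Fin n → ℝ, (∀ i, SparseVec t (v i)) →
      ∃ (i : Fin N) (x : Fin N → ℝ), l1norm x ≤ (T : ℝ) ∧
        l2norm (v i - ∑ j ∈ Finset.univ.erase i, x j • v j) ≤ δ * ⨆ j, l2norm (v j)) :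
    ∀ (A : Matrix (Fin n) (Fin n) ℝ) (hA : A.PosDef) (κ : ℝ),
      κ = (⨆ i, hA.1.eigenvalues i) / (⨅ i, hA.1.eigenvalues i) →
      κ < 1 / (4 * δ ^ 2) →
      packingNumber t (1 / (3 * T)) A ≤
        (N : ℝ≥0∞) * ENNReal.ofReal ((max 1 ⌈Real.logb 2 κ⌉ : ℤ) : ℝ) := by
  intro A hA κ hκ hκδ
  unfold packingNumber
  refine sSup_le ?_
  rintro c ⟨M, V, hV, rfl⟩
  have hMN : M ≤ N := by
    by_contra hlt
    push Not at hlt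
    refine core_aux n N t T hT δ hδ hyp A hA κ hκ hκδ (fun i => V (Fin.castLE hlt.le i)) ?_
    obtain ⟨h1, h2, h3⟩ := hV
    exact ⟨h1.comp (Fin.castLE_injective _), fun i => h2 _,
      fun i j hij => h3 _ _ fun h => hij (Fin.castLE_injective _ h)⟩
  calc (M : ℝ≥0∞) ≤ N := by exact_mod_cast hMN
    _ = N * 1 := by rw [mul_one]
    _ ≤ _ := by
      gcongr
      rw [ENNReal.one_le_ofReal]
      exact_mod_cast le_max_left _ _
end
end

section
/- Let n, N, t ∈ ℕ with t ≥ 1 and N ≥ 1, and let v₁,…,v_N ∈ {0,1}ⁿ be t-sparse binary vectors. Then there exist some i ∈ [N] and x ∈ ℝ^N such that ‖x‖₁ ≤ 3ᵗ and ‖vᵢ − Σ_{j≠i} xⱼvⱼ‖₂ ≤ 4ᵗ·√(9t·(tn/N)^{1/t}). -/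
open Matrix MeasureTheory ProbabilityTheory
open scoped BigOperators ENNReal

noncomputable section

/-- Indicator vector of a finset. -/
def eInd {n : ℕ} (T : Finset (Fin n)) : EuclideanSpace ℝ (Fin n) :=
  WithLp.toLp 2 (fun b => if b ∈ T then (1 : ℝ) else 0)

lemma eInd_apply {n : ℕ} (T : Finset (Fin n)) (b : Fin n) :
    eInd T b = if b ∈ T then (1 : ℝ) else 0 := rfl

lemma eInd_empty {n : ℕ} : eInd (∅ : Finset (Fin n)) = 0 := by
  ext b; simp [eInd_apply]

lemma eInd_sdiff {n : ℕ} {S T : Finset (Fin n)} (h : T ⊆ S) :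
    eInd S = eInd (S \ T) + eInd T := by
  ext b
  simp only [PiLp.add_apply, eInd_apply, Finset.mem_sdiff]
  by_cases h1 : b ∈ T
  · simp [h1, h h1]
  · simp [h1]

lemma sum_count {n : ℕ} {ι : Type*} (S : ι → Finset (Fin n)) (G : Finset ι) :
    ∑ b, ((G.filter (fun j => b ∈ S j)).card : ℝ) = ∑ j ∈ G, ((S j).card : ℝ) := by
  have : ∀ b, ((G.filter (fun j => b ∈ S j)).card : ℝ) = ∑ j ∈ G, if b ∈ S j then (1:ℝ) else 0 := by
    intro b; simp
  simp_rw [this]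
  rw [Finset.sum_comm]
  apply Finset.sum_congr rfl
  intro j _
  simp

lemma noise {n : ℕ} {ι : Type*} (S : ι → Finset (Fin n)) (G : Finset ι) (hG : G.Nonempty)
    (T : Finset (Fin n)) (hT : ∀ j ∈ G, T ⊆ S j) (s : ℕ) (hs : ∀ j ∈ G, (S j).card ≤ s)
    (p : ℝ) (hp : 0 ≤ p)
    (hc : ∀ b, b ∉ T → ((G.filter (fun j => b ∈ S j)).card : ℝ) ≤ p * G.card) :
    ‖eInd T - ∑ j ∈ G, ((G.card : ℝ)⁻¹) • eInd (S j)‖ ≤ Real.sqrt (p * s) := by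
  have hGc : (0 : ℝ) < G.card := by exact_mod_cast hG.card_pos
  rw [EuclideanSpace.norm_eq]
  apply Real.sqrt_le_sqrt
  have key : ∀ b, ‖(eInd T - ∑ j ∈ G, ((G.card : ℝ)⁻¹) • eInd (S j)) b‖ ^ 2
      ≤ p * (((G.filter (fun j => b ∈ S j)).card : ℝ) / G.card) := by
    intro b
    have e : (eInd T - ∑ j ∈ G, ((G.card : ℝ)⁻¹) • eInd (S j)) b
        = (if b ∈ T then (1:ℝ) else 0) - ((G.filter (fun j => b ∈ S j)).card : ℝ) / G.card := by
      rw [← Finset.smul_sum]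
      simp only [PiLp.sub_apply, PiLp.smul_apply, WithLp.ofLp_sum, Finset.sum_apply, eInd_apply,
        smul_eq_mul]
      simp [div_eq_inv_mul]
    rw [e, Real.norm_eq_abs, sq_abs]
    by_cases hb : b ∈ T
    · have : G.filter (fun j => b ∈ S j) = G := by
        apply Finset.filter_true_of_mem
        intro j hj; exact hT j hj hb
      rw [this, if_pos hb, div_self hGc.ne']
      simp [hp]
    · rw [if_neg hb]
      have h1 : ((G.filter (fun j => b ∈ S j)).card : ℝ) / G.card ≤ p := by
        rw [div_le_iff₀ hGc]; exact hc b hb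
      have h2 : 0 ≤ ((G.filter (fun j => b ∈ S j)).card : ℝ) / G.card := by positivity
      nlinarith
  calc _ ≤ ∑ b, p * (((G.filter (fun j => b ∈ S j)).card : ℝ) / G.card) :=
        Finset.sum_le_sum (fun b _ => key b)
    _ = p * ((∑ j ∈ G, ((S j).card : ℝ)) / G.card) := by
        rw [← Finset.mul_sum, ← Finset.sum_div, sum_count]
    _ ≤ p * s := by
        apply mul_le_mul_of_nonneg_left _ hp
        rw [div_le_iff₀ hGc]
        calc _ ≤ ∑ j ∈ G, (s : ℝ) := Finset.sum_le_sum (fun j hj => by exact_mod_cast hs j hj)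
          _ = _ := by simp [mul_comm]

lemma decomp {n : ℕ} {ι : Type*} [Fintype ι] [DecidableEq ι] (S : ι → Finset (Fin n)) (α : ℝ)
    (hα : 1 ≤ α) (s : ℕ) :
    ∀ (m : ℕ) (I : Finset ι), I.card = m → (∀ i ∈ I, (S i).card ≤ s + 1) →
    (∀ i ∈ I, (S i).Nonempty) →
    ∃ (J : Finset ι) (T : ι → Finset (Fin n)), J ⊆ I ∧
      ((I \ J).card : ℝ) ≤ n * (α ^ s + 1) ∧ (∀ j, T j ⊆ S j) ∧ (∀ j ∈ J, (T j).Nonempty) ∧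
      ∀ i j, ∃ w : ι → ℝ, w i = 0 ∧ (∀ k, k ∉ I → w k = 0) ∧ ∑ k, |w k| ≤ 1 ∧
        ‖eInd (T j) - ∑ k, w k • eInd (S k)‖ ≤ Real.sqrt (2 / α * (s + 1 : ℕ)) := by
  intro m
  induction m using Nat.strong_induction_on with
  | _ m ih =>
  intro I hIm hcard hne
  have hα0 : 0 < α := by linarith
  let heavy : Finset (Fin n) → Prop := fun T =>
    T.Nonempty ∧ α ^ (s + 1 - T.card) + 1 ≤ ((I.filter (fun j => T ⊆ S j)).card : ℝ)
  by_cases hex : ∃ T, heavy T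
  · obtain ⟨T0, hT0⟩ := hex
    obtain ⟨T, -, hTmax⟩ := (Set.toFinite {T | heavy T}).exists_le_maximal hT0
    have hTh : heavy T := hTmax.prop
    have hmax : ∀ b, b ∉ T → ¬ heavy (insert b T) := by
      intro b hb h
      exact hb (hTmax.le_of_ge h (Finset.subset_insert b T) (Finset.mem_insert_self b T))
    set G := I.filter (fun j => T ⊆ S j) with hG
    have hGI : G ⊆ I := Finset.filter_subset _ _
    have hGpos : 0 < G.card := by
      have : (0 : ℝ) < G.card := by
        have := hTh.2
        have h2 : 0 < α ^ (s + 1 - T.card) := by positivity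
        linarith
      exact_mod_cast this
    obtain ⟨J, T', hJ, hJc, hT'S, hT'ne, hw⟩ := ih (I \ G).card
      (by rw [← hIm]; exact Finset.card_lt_card (Finset.sdiff_ssubset hGI (Finset.card_pos.1 hGpos)))
      (I \ G) rfl (fun i hi => hcard i (Finset.mem_sdiff.1 hi).1)
      (fun i hi => hne i (Finset.mem_sdiff.1 hi).1)
    refine ⟨J ∪ G, fun j => if j ∈ G then T else T' j, ?_, ?_, ?_, ?_, ?_⟩
    · exact Finset.union_subset (hJ.trans Finset.sdiff_subset) hGI
    · have : I \ (J ∪ G) = (I \ G) \ J := by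
        ext x; simp only [Finset.mem_sdiff, Finset.mem_union]; tauto
      rw [this]; exact hJc
    · intro j
      by_cases hj : j ∈ G
      · simp only [hj, if_true]; exact (Finset.mem_filter.1 hj).2
      · simp only [hj, if_false]; exact hT'S j
    · intro j hj
      by_cases hjG : j ∈ G
      · simp only [hjG, if_true]; exact hTh.1
      · simp only [hjG, if_false]
        exact hT'ne j ((Finset.mem_union.1 hj).resolve_right hjG)
    · intro i j
      by_cases hj : j ∈ G
      · simp only [hj, if_true]
        set G' := G.erase i with hG'
        have hG'G : G' ⊆ G := Finset.erase_subset _ _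
        have hG'c : α ^ (s + 1 - T.card) ≤ (G'.card : ℝ) := by
          have h1 : G.card ≤ G'.card + 1 := by
            have := Finset.pred_card_le_card_erase (s := G) (a := i)
            rw [← hG'] at this
            omega
          have h1' : (G.card : ℝ) ≤ G'.card + 1 := by exact_mod_cast h1
          have := hTh.2
          linarith
        have hG'pos : (0 : ℝ) < G'.card := lt_of_lt_of_le (by positivity) hG'c
        have hG'ne : G'.Nonempty := Finset.card_pos.1 (by exact_mod_cast hG'pos)
        refine ⟨fun k => if k ∈ G' then (G'.card : ℝ)⁻¹ else 0, ?_, ?_, ?_, ?_⟩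
        · simp [hG']
        · intro k hk
          have : k ∉ G' := fun h => hk (hGI (hG'G h))
          simp [this]
        · have : ∀ k, |if k ∈ G' then (G'.card : ℝ)⁻¹ else 0| = if k ∈ G' then (G'.card : ℝ)⁻¹ else 0 := by
            intro k; apply abs_of_nonneg; split_ifs <;> positivity
          simp_rw [this]
          rw [Finset.sum_ite_mem, Finset.univ_inter, Finset.sum_const, nsmul_eq_mul,
            mul_inv_cancel₀ hG'pos.ne']
        · have : ∑ k, (if k ∈ G' then (G'.card : ℝ)⁻¹ else 0) • eInd (S k)
              = ∑ k ∈ G', (G'.card : ℝ)⁻¹ • eInd (S k) := by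
            simp_rw [ite_smul, zero_smul]
            rw [Finset.sum_ite_mem, Finset.univ_inter]
          rw [this]
          refine noise S G' hG'ne T (fun j hj => (Finset.mem_filter.1 (hG'G hj)).2) (s + 1)
            (fun j hj => hcard j (hGI (hG'G hj))) (2 / α) (by positivity) ?_
          intro b hb
          have hTc : T.card ≤ s + 1 :=
            (Finset.card_le_card (Finset.mem_filter.1 hj).2).trans (hcard j (hGI hj))
          have hsub : G'.filter (fun j => b ∈ S j) ⊆ I.filter (fun j => insert b T ⊆ S j) := by
            intro k hk
            rw [Finset.mem_filter] at hk ⊢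
            exact ⟨hGI (hG'G hk.1), Finset.insert_subset hk.2 (Finset.mem_filter.1 (hG'G hk.1)).2⟩
          rcases hTc.lt_or_eq with hlt | heq
          · have h1 := hmax b hb
            have h2 : ((I.filter (fun j => insert b T ⊆ S j)).card : ℝ)
                < α ^ (s + 1 - (insert b T).card) + 1 := by
              by_contra hcon
              exact h1 ⟨Finset.insert_nonempty _ _, not_lt.1 hcon⟩
            rw [Finset.card_insert_of_notMem hb] at h2
            have h3 : ((G'.filter (fun j => b ∈ S j)).card : ℝ)
              ≤ ((I.filter (fun j => insert b T ⊆ S j)).card : ℝ) := by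
              exact_mod_cast Finset.card_le_card hsub
            obtain ⟨q, hq⟩ : ∃ q, s + 1 - T.card = q + 1 := ⟨s - T.card, by omega⟩
            have hq' : s + 1 - (T.card + 1) = q := by omega
            rw [hq'] at h2
            rw [hq] at hG'c
            have h4 : 1 ≤ α ^ q := one_le_pow₀ hα
            have h5 : 2 / α * α ^ (q + 1) = 2 * α ^ q := by
              field_simp; ring
            have h6 : 2 / α * α ^ (q + 1) ≤ 2 / α * G'.card :=
              mul_le_mul_of_nonneg_left hG'c (by positivity)
            linarith
          · have : G'.filter (fun j => b ∈ S j) = ∅ := by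
              rw [Finset.eq_empty_iff_forall_notMem]
              intro k hk
              have h1 := (Finset.mem_filter.1 (hsub hk))
              have h2 := Finset.card_le_card h1.2
              rw [Finset.card_insert_of_notMem hb] at h2
              have := hcard k h1.1
              omega
            rw [this]; simp; positivity
      · simp only [hj, if_false]
        obtain ⟨w, hw1, hw2, hw3, hw4⟩ := hw i j
        exact ⟨w, hw1, fun k hk => hw2 k (fun h => hk (Finset.mem_sdiff.1 h).1), hw3, hw4⟩
  · refine ⟨∅, fun _ => ∅, by simp, ?_, by simp, by simp, ?_⟩
    · rw [Finset.sdiff_empty]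
      have h1 : ∀ b : Fin n, ((I.filter (fun j => b ∈ S j)).card : ℝ) ≤ α ^ s + 1 := by
        intro b
        by_contra hcon
        apply hex
        refine ⟨{b}, by simp, ?_⟩
        simp only [Finset.card_singleton, Nat.add_sub_cancel, Finset.singleton_subset_iff]
        exact (not_le.1 hcon).le
      calc (I.card : ℝ) = ∑ j ∈ I, (1 : ℝ) := by simp
        _ ≤ ∑ j ∈ I, ((S j).card : ℝ) := Finset.sum_le_sum (fun j hj => by
            exact_mod_cast (hne j hj).card_pos)
        _ = ∑ b, ((I.filter (fun j => b ∈ S j)).card : ℝ) := (sum_count S I).symm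
        _ ≤ ∑ b : Fin n, (α ^ s + 1) := Finset.sum_le_sum (fun b _ => h1 b)
        _ = _ := by simp; ring
    · intro i j
      refine ⟨0, by simp, by simp, by simp, ?_⟩
      simp [eInd_empty]

lemma main_ind {n : ℕ} {ι : Type*} [Fintype ι] [DecidableEq ι] (α : ℝ) (hα : 1 ≤ α) (t : ℕ) :
    ∀ (s : ℕ), s ≤ t → ∀ (S : ι → Finset (Fin n)) (I : Finset ι), (∀ i ∈ I, (S i).card ≤ s) →
    (∑ r ∈ Finset.range s, (n : ℝ) * (α ^ r + 1)) < I.card →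
    ∃ i ∈ I, ∃ x : ι → ℝ, x i = 0 ∧ (∀ k, k ∉ I → x k = 0) ∧ ∑ k, |x k| ≤ 2 ^ s - 1 ∧
      ‖eInd (S i) - ∑ k, x k • eInd (S k)‖ ≤ (2 ^ s - 1) * Real.sqrt (2 / α * t) := by
  intro s
  induction s with
  | zero =>
    intro _ S I hc hI
    have : 0 < I.card := by simpa using hI
    obtain ⟨i, hi⟩ := Finset.card_pos.1 this
    refine ⟨i, hi, 0, by simp, by simp, by simp, ?_⟩
    have : S i = ∅ := by simpa using hc i hi
    simp [this, eInd_empty]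
  | succ s ih =>
    intro hst S I hc hI
    have hα0 : 0 < α := by linarith
    have h2s : (1 : ℝ) ≤ 2 ^ s := one_le_pow₀ (by norm_num)
    have h2s' : (1 : ℝ) ≤ 2 ^ (s + 1) := one_le_pow₀ (by norm_num)
    set η := Real.sqrt (2 / α * t) with hη
    have hη0 : 0 ≤ η := Real.sqrt_nonneg _
    by_cases hemp : ∃ i ∈ I, S i = ∅
    · obtain ⟨i, hi, hS⟩ := hemp
      refine ⟨i, hi, 0, by simp, by simp, by simpa using h2s', ?_⟩
      simp only [hS, eInd_empty, Pi.zero_apply, zero_smul, Finset.sum_const_zero, sub_zero, norm_zero]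
      exact mul_nonneg (by linarith) hη0
    push Not at hemp
    obtain ⟨J, T, hJI, hJc, hTS, hTne, hw⟩ := decomp S α hα s I.card I rfl hc
      (fun i hi => by simpa [Finset.nonempty_iff_ne_empty] using hemp i hi)
    have hle : Real.sqrt (2 / α * (s + 1 : ℕ)) ≤ η := by
      apply Real.sqrt_le_sqrt
      apply mul_le_mul_of_nonneg_left _ (by positivity)
      exact_mod_cast hst
    obtain ⟨i, hi, x, hxi, hxJ, hx1, hxe⟩ := ih (by omega) (fun j => S j \ T j) J (by
      intro j hj
      have h1 := hc j (hJI hj)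
      have h2 := Finset.card_sdiff_add_card_eq_card (hTS j)
      have h3 := (hTne j hj).card_pos
      omega) (by
      rw [Finset.sum_range_succ] at hI
      have h1 : ((I \ J).card : ℝ) + J.card = I.card := by
        exact_mod_cast Finset.card_sdiff_add_card_eq_card hJI
      linarith)
    choose w hw0 hwI hw1 hwe using hw i
    refine ⟨i, hJI hi, fun k => x k + w i k - ∑ j, x j * w j k, ?_, ?_, ?_, ?_⟩
    · simp [hxi, hw0]
    · intro k hk
      simp [hxJ k (fun h => hk (hJI h)), hwI _ k hk]
    · calc ∑ k, |x k + w i k - ∑ j, x j * w j k|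
          ≤ ∑ k, (|x k| + |w i k| + ∑ j, |x j| * |w j k|) := by
            apply Finset.sum_le_sum
            intro k _
            refine (abs_sub _ _).trans ?_
            refine add_le_add (abs_add_le _ _) ?_
            refine (Finset.abs_sum_le_sum_abs _ _).trans (le_of_eq ?_)
            simp_rw [abs_mul]
        _ = ∑ k, |x k| + ∑ k, |w i k| + ∑ j, |x j| * ∑ k, |w j k| := by
            rw [Finset.sum_add_distrib, Finset.sum_add_distrib, Finset.sum_comm]
            simp_rw [Finset.mul_sum]
        _ ≤ (2 ^ s - 1) + 1 + ∑ j, |x j| * 1 := by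
            refine add_le_add (add_le_add hx1 (hw1 i)) (Finset.sum_le_sum fun j _ => ?_)
            exact mul_le_mul_of_nonneg_left (hw1 j) (abs_nonneg _)
        _ ≤ 2 ^ (s + 1) - 1 := by
            simp only [mul_one]; rw [pow_succ]; linarith
    · have e : eInd (S i) - ∑ k, (x k + w i k - ∑ j, x j * w j k) • eInd (S k)
          = (eInd (S i \ T i) - ∑ k, x k • eInd (S k \ T k))
            + (eInd (T i) - ∑ k, w i k • eInd (S k))
            - ∑ j, x j • (eInd (T j) - ∑ k, w j k • eInd (S k)) := by
        have e1 : ∑ k, x k • eInd (S k) = ∑ k, x k • eInd (S k \ T k) + ∑ k, x k • eInd (T k) := by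
          rw [← Finset.sum_add_distrib]
          apply Finset.sum_congr rfl
          intro k _
          rw [← smul_add, ← eInd_sdiff (hTS k)]
        have e2 : ∑ k, (∑ j, x j * w j k) • eInd (S k) = ∑ j, x j • ∑ k, w j k • eInd (S k) := by
          simp_rw [Finset.sum_smul, Finset.smul_sum, smul_smul]
          rw [Finset.sum_comm]
        simp_rw [sub_smul, add_smul, smul_sub]
        rw [Finset.sum_sub_distrib, Finset.sum_add_distrib, Finset.sum_sub_distrib, e1, e2,
          eInd_sdiff (hTS i)]
        abel
      rw [e]
      refine (norm_sub_le _ _).trans ?_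
      have b1 := norm_add_le (eInd (S i \ T i) - ∑ k, x k • eInd (S k \ T k))
        (eInd (T i) - ∑ k, w i k • eInd (S k))
      have b2 : ‖∑ j, x j • (eInd (T j) - ∑ k, w j k • eInd (S k))‖ ≤ (2 ^ s - 1) * η := by
        calc _ ≤ ∑ j, |x j| * η := by
              refine (norm_sum_le _ _).trans (Finset.sum_le_sum fun j _ => ?_)
              rw [norm_smul, Real.norm_eq_abs]
              exact mul_le_mul_of_nonneg_left ((hwe j).trans hle) (abs_nonneg _)
          _ = (∑ j, |x j|) * η := by rw [Finset.sum_mul]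
          _ ≤ _ := mul_le_mul_of_nonneg_right hx1 hη0
      have b3 := (hwe i).trans hle
      have : ((2:ℝ) ^ (s + 1) - 1) * η = (2 ^ s - 1) * η + η + (2 ^ s - 1) * η := by ring
      rw [this]
      linarith

lemma l2norm_eq {n : ℕ} (v : Fin n → ℝ) : l2norm v = ‖(WithLp.toLp 2 v : EuclideanSpace ℝ (Fin n))‖ := by
  rw [EuclideanSpace.norm_eq]; simp [l2norm]

/-- among enough sparse binary vectors, one is efficiently approximated
by the others. -/
theorem stmt12 (n N t : ℕ) (ht : 1 ≤ t) (hN : 1 ≤ N)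
    (v : Fin N → Fin n → ℝ) (hbin : ∀ i j, v i j = 0 ∨ v i j = 1)
    (hsp : ∀ i, SparseVec t (v i)) :
    ∃ (i : Fin N) (x : Fin N → ℝ), l1norm x ≤ 3 ^ t ∧
      l2norm (v i - ∑ j ∈ Finset.univ.erase i, x j • v j) ≤
        4 ^ t * Real.sqrt (9 * t * (((t : ℝ) * n / N) ^ ((1 : ℝ) / t))) := by
  classical
  set S : Fin N → Finset (Fin n) := fun i => Finset.univ.filter (fun b => v i b ≠ 0) with hS
  have hSc : ∀ i, (S i).card ≤ t := by
    intro i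
    have h := hsp i
    unfold SparseVec at h
    rw [Set.ncard_eq_toFinset_card'] at h
    convert h using 2
    ext b; simp [hS]
  have hv : ∀ i, (WithLp.toLp 2 (v i) : EuclideanSpace ℝ (Fin n)) = eInd (S i) := by
    intro i
    ext b
    rw [eInd_apply]
    rcases hbin i b with h | h <;> simp [hS, h]
  have htr : (1 : ℝ) ≤ t := by exact_mod_cast ht
  have hNr : (1 : ℝ) ≤ N := by exact_mod_cast hN
  set δ : ℝ := ((t : ℝ) * n / N) ^ ((1 : ℝ) / t) with hδ
  have hδ0 : 0 ≤ δ := Real.rpow_nonneg (by positivity) _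
  have hpow : δ ^ t = (t : ℝ) * n / N := by
    rw [hδ, ← Real.rpow_natCast, ← Real.rpow_mul (by positivity), one_div,
      inv_mul_cancel₀ (by positivity), Real.rpow_one]
  have h4 : (1 : ℝ) ≤ 4 ^ t := one_le_pow₀ (by norm_num)
  by_cases hδ2 : 1 / 2 ≤ δ
  · refine ⟨⟨0, hN⟩, 0, by simp [l1norm], ?_⟩
    have h1 : l2norm (v ⟨0, hN⟩) ≤ Real.sqrt (9 * t * δ) := by
      unfold l2norm
      apply Real.sqrt_le_sqrt
      have : ∑ b, v ⟨0, hN⟩ b ^ 2 = (S ⟨0, hN⟩).card := by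
        rw [Finset.card_filter]
        push_cast
        apply Finset.sum_congr rfl
        intro b _
        rcases hbin ⟨0, hN⟩ b with h | h <;> simp [h]
      rw [this]
      have h2 : ((S ⟨0, hN⟩).card : ℝ) ≤ t := by exact_mod_cast hSc _
      nlinarith
    simp only [Pi.zero_apply, zero_smul, Finset.sum_const_zero, sub_zero]
    nlinarith [Real.sqrt_nonneg (9 * t * δ)]
  push Not at hδ2
  by_cases hn : n = 0
  · refine ⟨⟨0, hN⟩, 0, by simp [l1norm], ?_⟩
    subst hn
    have : ∀ u : Fin 0 → ℝ, l2norm u = 0 := by intro u; simp [l2norm]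
    rw [this]; positivity
  have hnr : (1 : ℝ) ≤ n := by exact_mod_cast Nat.one_le_iff_ne_zero.2 hn
  have hδpos : 0 < δ := Real.rpow_pos_of_pos (by positivity) _
  have hα : 2 < δ⁻¹ := by
    rw [lt_inv_comm₀ (by norm_num) hδpos]; linarith
  have hNeq : (N : ℝ) = t * n * δ⁻¹ ^ t := by
    rw [inv_pow, hpow]; field_simp
  obtain ⟨i, -, x, hxi, -, hx1, hxe⟩ := main_ind (n := n) δ⁻¹ (by linarith) t t le_rfl S
    Finset.univ (fun i _ => hSc i) (by
      rw [Finset.card_univ, Fintype.card_fin, hNeq]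
      obtain ⟨q, rfl⟩ : ∃ q, t = q + 1 := ⟨t - 1, by omega⟩
      have hq : (1 : ℝ) ≤ δ⁻¹ ^ q := one_le_pow₀ (by linarith)
      calc _ ≤ ∑ r ∈ Finset.range (q + 1), (n : ℝ) * (2 * δ⁻¹ ^ q) := by
            apply Finset.sum_le_sum
            intro r hr
            have hr' : r ≤ q := by have := Finset.mem_range.1 hr; omega
            have : δ⁻¹ ^ r ≤ δ⁻¹ ^ q := pow_le_pow_right₀ (by linarith) hr'
            apply mul_le_mul_of_nonneg_left _ (by positivity)
            linarith
        _ = ((q + 1 : ℕ) : ℝ) * n * (δ⁻¹ ^ q * 2) := by simp; ring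
        _ < _ := by
            rw [pow_succ]
            apply mul_lt_mul_of_pos_left _ (by positivity)
            apply mul_lt_mul_of_pos_left hα (by positivity))
  have h23 : (2 : ℝ) ^ t ≤ 3 ^ t := pow_le_pow_left₀ (by norm_num) (by norm_num) t
  have h24 : (2 : ℝ) ^ t ≤ 4 ^ t := pow_le_pow_left₀ (by norm_num) (by norm_num) t
  refine ⟨i, x, ?_, ?_⟩
  · unfold l1norm; linarith
  · have e : (WithLp.toLp 2 (v i - ∑ j ∈ Finset.univ.erase i, x j • v j) : EuclideanSpace ℝ (Fin n))
        = eInd (S i) - ∑ k, x k • eInd (S k) := by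
      rw [← Finset.add_sum_erase _ _ (Finset.mem_univ i), hxi, zero_smul, zero_add]
      simp_rw [← hv]
      simp [WithLp.toLp_sum]
    rw [l2norm_eq, e]
    refine hxe.trans ?_
    have h5 : Real.sqrt (2 / δ⁻¹ * t) ≤ Real.sqrt (9 * t * δ) := by
      apply Real.sqrt_le_sqrt
      rw [div_inv_eq_mul]
      nlinarith
    exact mul_le_mul (by linarith) h5 (Real.sqrt_nonneg _) (by positivity)
end
end
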